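/- arXiv:2004.10650 — 8 statements merged into one kernel-verified Lean document; each statement's English description precedes it below -/
import Mathlib

section
/- Let q be a prime power and n, s be two relatively prime positive integers. Suppose n ≥ 4s+2 if (q = 3 and s > 1) or (q = 2 and s > 2), and n ≥ 4s+1 otherwise. Then for every δ ∈ F_{q^{2n}} with δ ≠ 0 and N_{q^{2n}/q^n}(δ) ≠ 1, there exists a ∈ F_{q^{2n}}, a ≠ 0, such that dim_{F_q} ker f_{a,b,s} = 2, where b = δa. -/
/-!
Write `Q = qⁿ`, `r = q^s`, `d = δ^(Q+1)`. The kernel of `f_{a,δa,s}` is two-dimensional for a suitable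
`a` as soon as there is `t` with `t^Q ≠ t` and `(t^r - t)^(Q+1) = d (t^r - t^Q)^(Q+1)`, with nonzero
bases: Hilbert 90 then gives `x` such that `x` and `t x` are kernel elements, and since `1, t` is a
basis over the field of order `Q` and `gcd n s = 1`, the kernel is their `F_q`-span (`kernel_card`).

To find `t` (`exists_t`), fix `ω` with `e = ω - ω^Q ≠ 0`, so `e^Q = -e`, and let `σ = e^r`. Every `t`
with `t^Q ≠ t` is `v x` with `v^Q = v ≠ 0` and `x^Q = x - e`. With `z = v^(r-1)` and
`A = z x^r - x` the equation for `t` becomes the conic `A^(Q+1) = d (A+e)^(Q+1)`, which has at most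
`Q + 1` points (`card_conic_le`), and `z` is recovered from `A` by `σ z = A - A^Q + e`. So two covers of
the conic have to share a point: pairs `(v, A)` with `σ v^(r-1) = A - A^Q + e`, and pairs `(x, A)` with
`(A - A^Q + e) x^r = σ (A + x)`. If no `t` exists, their images are disjoint. The first cover has
fibres of size at most `q - 1` (`card_curveC_le`) and the second one is then injective
(`card_curveY_le`), so one of the covers has too few points.

Eliminating `A^Q` turns each cover, with coordinate `h = A` on the first and `h = A (x - e)^r` on the
second, into a quadratic `h² - β h + γ = 0` over a set of `Q` values of the base coordinate, with `β^Q = 2 k₀ - β` and `γ^Q = γ + k₀² - β k₀`. Its roots satisfy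
`h^Q = k₀ - h` or `h^Q = k₀ - β + h`; the second kind are the points of the cover, and by
`two_roots_sum` there are at least `2 Q` roots of both kinds together. The roots of the first kind are
bounded above by Stepanov's method (`stepanov`), which gives about `Q + Q / q` and hence the
contradiction when `n ≥ 4 s + 1`.

For `stepanov`, let `η` be the generic root of the quadratic and `Q = M E` with `M = q r` and
`E = q^(n-s-1)`. Linear algebra gives functions `W i` on the curve, not all zero and of small degree, with
`∑ e i ^ M * W i = 0`, the `e i` being a basis of the functions of degree at most `u` (`exists_aux`). On
the points in question `W i` is the `Q`-th power of a function `V i` of the same degree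
(`exists_conj`), so `∑ e i * V i ^ E` vanishes there. It is not the zero function, by a local
expansion at the point `X = 0`, `η = 0` (`psi_ne_zero`), and the degree of its norm bounds the number
of points (`psi_degree`, `card_le_norm_degree`).
-/

open Polynomial

/-! ### Quadratic extensions of a polynomial ring -/

/-- The ring homomorphism out of `QuadraticAlgebra R a b` that extends `f : R →+* S` and sends the
generator to a root `η` of the image of the defining equation. -/
def qlift {R S : Type*} [CommRing R] [CommRing S] {a b : R} (f : R →+* S) (η : S)
    (hη : η * η = f a + f b * η) : QuadraticAlgebra R a b →+* S where
  toFun z := f z.re + f z.im * η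
  map_one' := by simp [QuadraticAlgebra.re_one, QuadraticAlgebra.im_one]
  map_mul' z w := by
    simp only [QuadraticAlgebra.re_mul, QuadraticAlgebra.im_mul, map_add, map_mul]
    linear_combination (- f z.im * f w.im) * hη
  map_zero' := by simp
  map_add' z w := by
    simp only [QuadraticAlgebra.re_add, QuadraticAlgebra.im_add, map_add]
    ring

theorem qlift_apply {R S : Type*} [CommRing R] [CommRing S] {a b : R} (f : R →+* S) (η : S)
    (hη : η * η = f a + f b * η) (z : QuadraticAlgebra R a b) :
    qlift f η hη z = f z.re + f z.im * η := rfl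

/-- If the defining quadratic has no polynomial root, then the norm form is anisotropic:
a zero `α² + bαβ + cβ²` in lowest terms makes `β` a unit and `-α/β` a root. -/
theorem qnorm_ne_zero {L : Type*} [Field L] {b c : L[X]} (hirr : ∀ h : L[X], h ^ 2 - b * h + c ≠ 0)
    {z : QuadraticAlgebra L[X] (-c) b} (hz : z ≠ 0) : z.norm ≠ 0 := by
  intro h0
  rw [QuadraticAlgebra.norm_def] at h0
  apply hz
  classical
  obtain ⟨x, y, hx, hy, hu⟩ := extract_gcd z.re z.im
  by_cases hg : gcd z.re z.im = 0
  · rw [hg] at hx hy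
    ext1 <;> simp [hx, hy]
  · exfalso
    have h1 : x * x + b * x * y + c * y * y = 0 := by
      have : (gcd z.re z.im) ^ 2 * (x * x + b * x * y + c * y * y) = 0 := by
        generalize gcd z.re z.im = g at hx hy
        rw [hx, hy] at h0
        linear_combination h0
      rcases mul_eq_zero.1 this with h | h
      · exact absurd (pow_eq_zero_iff (by norm_num) |>.1 h) hg
      · exact h
    have hcop : IsCoprime x y := by
      rw [← gcd_isUnit_iff]; exact hu
    have hyu : IsUnit y := by
      have : y ∣ x * x := ⟨-(b * x + c * y), by linear_combination h1⟩
      exact (hcop.mul_left hcop).symm.isUnit_of_dvd' dvd_rfl this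
    obtain ⟨w, hw⟩ := hyu.exists_right_inv
    apply hirr (-(x * w))
    linear_combination w ^ 2 * h1 - (b * x * w + c * (1 + y * w)) * hw

/-- `Bd m i j z` bounds the real part of `z` by degree `i` and the imaginary part by
degree `j - m`, where the generator counts as having degree `m`. -/
def Bd {R : Type*} [CommRing R] {a b : R[X]} (m i j : ℕ) (z : QuadraticAlgebra R[X] a b) : Prop :=
  z.re.natDegree ≤ i ∧ (z.im = 0 ∨ z.im.natDegree + m ≤ j)

section Bd
variable {L : Type*} [Field L] {b c : L[X]} {m : ℕ}

theorem Bd.mono {i j i' j' : ℕ} {z : QuadraticAlgebra L[X] (-c) b} (h : Bd m i j z) (hi : i ≤ i')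
    (hj : j ≤ j') : Bd m i' j' z :=
  ⟨h.1.trans hi, h.2.imp id (fun h => h.trans hj)⟩

theorem Bd.zero (i j : ℕ) : Bd m i j (0 : QuadraticAlgebra L[X] (-c) b) := by
  simp [Bd]

theorem Bd.add {i j : ℕ} {z w : QuadraticAlgebra L[X] (-c) b} (hz : Bd m i j z) (hw : Bd m i j w) :
    Bd m i j (z + w) := by
  refine ⟨by
    simpa using (natDegree_add_le _ _).trans (max_le hz.1 hw.1), ?_⟩
  have := natDegree_add_le z.im w.im
  rw [QuadraticAlgebra.im_add]
  rcases hz.2 with h | h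
  · rw [h, zero_add]; exact hw.2
  · rcases hw.2 with h' | h'
    · rw [h', add_zero]; exact hz.2
    · right
      omega

theorem Bd.sum {ι : Type*} {i j : ℕ} (s : Finset ι) {f : ι → QuadraticAlgebra L[X] (-c) b}
    (hf : ∀ x ∈ s, Bd m i j (f x)) : Bd m i j (∑ x ∈ s, f x) :=
  Finset.sum_induction f (Bd m i j) (fun _ _ => Bd.add) (Bd.zero i j) hf

/-- Degree bounds add under multiplication. Only one factor may have an imaginary bound one larger
than its real bound; the excess is absorbed because the norm `c` has odd degree bound `2m - 1`. -/
theorem Bd.mul (hm : 1 ≤ m) (hb : b.natDegree ≤ m) (hc : c.natDegree ≤ 2 * m - 1) {i j j' : ℕ}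
    {z w : QuadraticAlgebra L[X] (-c) b} (hz : Bd m i i z) (hw : Bd m j j' w)
    (h1 : j ≤ j') (h2 : j' ≤ j + 1) : Bd m (i + j) (i + j') (z * w) := by
  obtain ⟨zr, zi⟩ := z
  obtain ⟨wr, wi⟩ := w
  obtain ⟨hz1, hz2⟩ := hz
  obtain ⟨hw1, hw2⟩ := hw
  simp only at hz1 hz2 hw1 hw2
  have d1 := natDegree_mul_le (p := zr) (q := wr)
  have d2 := natDegree_mul_le (p := zr) (q := wi)
  have d3 := natDegree_mul_le (p := zi) (q := wr)
  have d4 := natDegree_mul_le (p := b * zi) (q := wi)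
  have d5 := natDegree_mul_le (p := b) (q := zi)
  have d6 := natDegree_mul_le (p := -c * zi) (q := wi)
  have d7 := natDegree_mul_le (p := -c) (q := zi)
  rw [natDegree_neg] at d7
  constructor
  · simp only [QuadraticAlgebra.re_mul]
    refine (natDegree_add_le _ _).trans (max_le (by omega) ?_)
    rcases hz2 with h | h
    · simp [h]
    rcases hw2 with h' | h'
    · simp [h']
    omega
  · simp only [QuadraticAlgebra.im_mul]
    have a1 := natDegree_add_le (zr * wi + zi * wr) (b * zi * wi)
    have a2 := natDegree_add_le (zr * wi) (zi * wr)
    rcases hz2 with h | h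
    · subst h
      rcases hw2 with h' | h'
      · left; simp [h']
      · right
        simp only [zero_mul, mul_zero, add_zero]
        omega
    · rcases hw2 with h' | h'
      · subst h'
        right
        simp only [mul_zero, add_zero, zero_add]
        omega
      · right
        omega

theorem Bd.one : Bd m 0 0 (1 : QuadraticAlgebra L[X] (-c) b) := by
  simp [Bd, QuadraticAlgebra.re_one, QuadraticAlgebra.im_one]

theorem Bd.omega : Bd m m m (⟨0, 1⟩ : QuadraticAlgebra L[X] (-c) b) := by
  simp [Bd]

theorem Bd.coe {f : L[X]} {i j : ℕ} (hf : f.natDegree ≤ i) :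
    Bd m i j (⟨f, 0⟩ : QuadraticAlgebra L[X] (-c) b) := by
  simp [Bd, hf]

theorem Bd.pow (hm : 1 ≤ m) (hb : b.natDegree ≤ m) (hc : c.natDegree ≤ 2 * m - 1) {i : ℕ}
    {z : QuadraticAlgebra L[X] (-c) b} (hz : Bd m i i z) (k : ℕ) :
    Bd m (k * i) (k * i) (z ^ k) := by
  induction k with
  | zero => simpa using Bd.one
  | succ k ih =>
    rw [pow_succ, Nat.succ_mul]
    exact ih.mul hm hb hc hz le_rfl (by omega)

theorem Bd.star (hb : b.natDegree ≤ m) {i : ℕ}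
    {z : QuadraticAlgebra L[X] (-c) b} (hz : Bd m i i z) : Bd m i i (star z) := by
  obtain ⟨h1, h2⟩ := hz
  refine ⟨?_, ?_⟩
  · rw [QuadraticAlgebra.re_star]
    refine (natDegree_add_le _ _).trans (max_le h1 ?_)
    rcases h2 with h | h
    · simp [h]
    · have := natDegree_mul_le (p := b) (q := z.im)
      omega
  · rw [QuadraticAlgebra.im_star, natDegree_neg]
    simpa using h2

end Bd

/-! ### The auxiliary function -/

/-- Dimension count behind the auxiliary function: more coefficients than conditions. -/
theorem exists_aux {L : Type*} [Field L] {b c : L[X]} {m u k M : ℕ} {ι : Type*} [Fintype ι]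
    (hm : 1 ≤ m) (hb : b.natDegree ≤ m) (hc : c.natDegree ≤ 2 * m - 1)
    (e : ι → QuadraticAlgebra L[X] (-c) b) (he : ∀ i, Bd m u u (e i)) (hmk : m ≤ k + 1)
    (hdim : 2 * M * u + (2 * k + 3 - m) < Fintype.card ι * (2 * k + 3 - m)) :
    ∃ W : ι → QuadraticAlgebra L[X] (-c) b, (∀ i, Bd m k (k + 1) (W i)) ∧ (∃ i, W i ≠ 0) ∧
      ∑ i, e i ^ M * W i = 0 := by
  classical
  -- `f1` maps the coefficients to the combination; `f2` reads off finitely many of its coefficients,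
  -- which by the degree bounds are all of them
  let D := ι → (degreeLT L (k + 1)) × (degreeLT L (k + 2 - m))
  let toA : (degreeLT L (k + 1)) × (degreeLT L (k + 2 - m)) →ₗ[L] QuadraticAlgebra L[X] (-c) b :=
    { toFun := fun w => ⟨w.1, w.2⟩
      map_add' := fun x y => by ext1 <;> simp
      map_smul' := fun r x => by ext1 <;> simp }
  let f1 : D →ₗ[L] QuadraticAlgebra L[X] (-c) b :=
    ∑ i, (LinearMap.mulLeft L (e i ^ M)) ∘ₗ toA ∘ₗ (LinearMap.proj i)
  let f2 : QuadraticAlgebra L[X] (-c) b →ₗ[L]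
      (Fin (M * u + k + 1) → L) × (Fin (M * u + k + 2 - m) → L) :=
    { toFun := fun z => (fun j => z.re.coeff j, fun j => z.im.coeff j)
      map_add' := fun x y => by ext <;> simp
      map_smul' := fun r x => by ext <;> simp }
  have : ∀ n, FiniteDimensional L (degreeLT L n) := fun n =>
    Module.Finite.equiv (degreeLTEquiv L n).symm
  have hfr : ∀ n, Module.finrank L (degreeLT L n) = n := fun n => by
    rw [(degreeLTEquiv L n).finrank_eq]; simp
  have hker : (f2 ∘ₗ f1).ker ≠ ⊥ := by
    apply LinearMap.ker_ne_bot_of_finrank_lt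
    rw [Module.finrank_prod, Module.finrank_fin_fun, Module.finrank_fin_fun,
      Module.finrank_pi_fintype]
    simp only [Module.finrank_prod, hfr, Finset.sum_const, Finset.card_univ, smul_eq_mul]
    have h1 : k + 1 + (k + 2 - m) = 2 * k + 3 - m := by omega
    rw [h1]
    refine lt_of_le_of_lt ?_ hdim
    have : 2 * M * u = M * u + M * u := by ring
    rw [this]
    omega
  obtain ⟨w, hw, hw0⟩ := (Submodule.ne_bot_iff _).1 hker
  have hB : ∀ i, Bd m k (k + 1) (toA (w i)) := by
    intro i
    obtain ⟨⟨α, hα⟩, ⟨β, hβ⟩⟩ := w i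
    rw [mem_degreeLT] at hα hβ
    refine ⟨?_, ?_⟩
    · change α.natDegree ≤ k
      by_cases h0 : α = 0
      · simp [h0]
      · exact Nat.lt_succ_iff.1 ((natDegree_lt_iff_degree_lt h0).2 hα)
    · by_cases h0 : β = 0
      · exact Or.inl h0
      · right
        change β.natDegree + m ≤ k + 1
        have := (natDegree_lt_iff_degree_lt h0).2 hβ
        omega
  refine ⟨fun i => toA (w i), hB, ?_, ?_⟩
  · by_contra! h
    apply hw0
    funext i
    have h1 := congrArg QuadraticAlgebra.re (h i)
    have h2 := congrArg QuadraticAlgebra.im (h i)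
    ext1
    · exact Subtype.ext h1
    · exact Subtype.ext h2
  · have hs : f1 w = ∑ i, e i ^ M * toA (w i) := by
      simp only [f1, LinearMap.sum_apply]
      rfl
    rw [← hs]
    have hB1 : Bd m (M * u + k) (M * u + (k + 1)) (f1 w) := by
      rw [hs]
      exact Bd.sum _ fun i _ => ((he i).pow hm hb hc M).mul hm hb hc (hB i) (by omega) (by omega)
    have hw' : f2 (f1 w) = 0 := by simpa using hw
    have e1 := congrArg Prod.fst hw'
    have e2 := congrArg Prod.snd hw'
    generalize f1 w = z at *
    obtain ⟨b1, b2⟩ := hB1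
    ext1
    · ext j
      by_cases hj : j < M * u + k + 1
      · exact congrFun e1 ⟨j, hj⟩
      · rw [coeff_eq_zero_of_natDegree_lt (by omega)]
        simp
    · rcases b2 with b2 | b2
      · exact b2
      ext j
      by_cases hj : j < M * u + k + 2 - m
      · exact congrFun e2 ⟨j, hj⟩
      · rw [coeff_eq_zero_of_natDegree_lt (by omega)]
        simp

/-- The norm of an element with degree bound `i` has degree at most `2 i`. -/
theorem Bd.norm {L : Type*} [Field L] {b c : L[X]} {m : ℕ} (hm : 1 ≤ m) (hb : b.natDegree ≤ m)
    (hc : c.natDegree ≤ 2 * m - 1) {i : ℕ} {z : QuadraticAlgebra L[X] (-c) b} (hz : Bd m i i z) :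
    z.norm.natDegree ≤ 2 * i := by
  have h := (hz.mul hm hb hc (hz.star hb) le_rfl (by omega)).1
  rw [← QuadraticAlgebra.algebraMap_norm_eq_mul_star] at h
  have h2 : (algebraMap L[X] (QuadraticAlgebra L[X] (-c) b) z.norm).re = z.norm := rfl
  rw [h2] at h
  omega

/-- Since `b(0) ≠ 0` and `c(0) = 0`, Hensel's lemma gives a root of `η² - bη + c` in `L⟦X⟧`. -/
theorem exists_ps_root {L : Type*} [Field L] {b c : L[X]} (hb0 : b.eval 0 ≠ 0) (hc0 : c.eval 0 = 0) :
    ∃ η : PowerSeries L, η * η = coeToPowerSeries.ringHom (-c) + coeToPowerSeries.ringHom b * η := by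
  have hH : HenselianRing (PowerSeries L) (Ideal.span {PowerSeries.X}) :=
    IsAdicComplete.henselianRing _ _
  have hb' : IsUnit (b : PowerSeries L) := by
    rw [PowerSeries.isUnit_iff_constantCoeff, isUnit_iff_ne_zero]
    simpa [coeff_zero_eq_eval_zero] using hb0
  have hmon : (X ^ 2 + (-C (b : PowerSeries L) * X + C (c : PowerSeries L))).Monic := by
    apply monic_X_pow_add
    compute_degree!
  obtain ⟨η, h1, -⟩ := hH.is_henselian _ hmon 0 (by
      simp only [eval_add, eval_mul, eval_pow, eval_X, eval_neg, eval_C]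
      rw [Ideal.mem_span_singleton, PowerSeries.X_dvd_iff]
      simpa [coeff_zero_eq_eval_zero] using hc0) (by
      apply IsUnit.map
      simpa using hb')
  refine ⟨η, ?_⟩
  simp only [IsRoot, eval_add, eval_mul, eval_pow, eval_X, eval_neg, eval_C] at h1
  simp only [coeToPowerSeries.ringHom_apply, map_neg]
  linear_combination h1

/-- Nonvanishing of the auxiliary function: expand in power series at a point above `X = 0`.
There an `E`-th power is a constant modulo `X ^ E`, after removing a common power of `X`,
so a vanishing combination would make a nonzero function of small degree vanish to order `E`. -/
theorem psi_ne_zero {L : Type*} [Field L] {p : ℕ} [ExpChar L p] {b c : L[X]} {m u ν : ℕ}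
    {ι : Type*} [Fintype ι]
    (hm : 1 ≤ m) (hb : b.natDegree ≤ m) (hc : c.natDegree ≤ 2 * m - 1)
    (hb0 : b.eval 0 ≠ 0) (hc0 : c.eval 0 = 0) (hirr : ∀ h : L[X], h ^ 2 - b * h + c ≠ 0)
    (e : ι → QuadraticAlgebra L[X] (-c) b) (he : ∀ i, Bd m u u (e i))
    (hli : ∀ t : ι → L, ∑ i, (⟨C (t i), 0⟩ : QuadraticAlgebra L[X] (-c) b) * e i = 0 → ∀ i, t i = 0)
    (hu : 2 * u < p ^ ν)
    (V : ι → QuadraticAlgebra L[X] (-c) b) (hV : ∃ i, V i ≠ 0) :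
    ∑ i, e i * V i ^ p ^ ν ≠ 0 := by
  intro h0
  obtain ⟨η, hη⟩ := exists_ps_root hb0 hc0
  set φ := qlift coeToPowerSeries.ringHom η hη with hφ
  have : ExpChar (PowerSeries L) p :=
    expChar_of_injective_ringHom (PowerSeries.C_injective (R := L)) p
  have hnorm : ∀ z, φ z * φ (star z) = (z.norm : PowerSeries L) := by
    intro z
    rw [← map_mul, ← QuadraticAlgebra.algebraMap_norm_eq_mul_star, hφ, qlift_apply]
    simp
  have hinj : ∀ z, z ≠ 0 → φ z ≠ 0 := by
    intro z hz h
    have h1 := hnorm z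
    rw [h, zero_mul] at h1
    exact qnorm_ne_zero hirr hz (by simpa using h1.symm)
  obtain ⟨i0, hi0⟩ := hV
  classical
  -- `v` is the least order of vanishing of the `φ (V i)`
  have hex : ∃ v : ℕ, ∃ i, ¬ (PowerSeries.X : PowerSeries L) ^ (v + 1) ∣ φ (V i) := by
    by_contra! hcon
    apply hinj _ hi0
    ext n
    exact PowerSeries.X_pow_dvd_iff.1 (hcon n i0) n (by omega)
  obtain ⟨v, hv1, hv2⟩ : ∃ v : ℕ, (∃ i, ¬ (PowerSeries.X : PowerSeries L) ^ (v + 1) ∣ φ (V i)) ∧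
      ∀ i, (PowerSeries.X : PowerSeries L) ^ v ∣ φ (V i) := by
    refine ⟨Nat.find hex, Nat.find_spec hex, ?_⟩
    rcases h : Nat.find hex with _ | w
    · simp
    · have := Nat.find_min hex (m := w) (by omega)
      push Not at this
      exact this
  choose g hg using hv2
  obtain ⟨i1, hi1⟩ := hv1
  have hX : (PowerSeries.X : PowerSeries L) ≠ 0 := PowerSeries.X_ne_zero
  have hsum : ∑ i, φ (e i) * g i ^ p ^ ν = 0 := by
    have h1 := congrArg φ h0
    rw [map_sum, map_zero] at h1
    have h2 : (PowerSeries.X ^ v) ^ p ^ ν * ∑ i, φ (e i) * g i ^ p ^ ν = 0 := by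
      rw [← h1, Finset.mul_sum]
      refine Finset.sum_congr rfl fun i _ => ?_
      rw [map_mul, map_pow, hg i, mul_pow]
      ring
    exact (mul_eq_zero.1 h2).resolve_left (pow_ne_zero _ (pow_ne_zero _ hX))
  -- modulo `X ^ E` the power `g i ^ E` is the constant `t i ^ E`
  let t : ι → L := fun i => PowerSeries.constantCoeff (g i)
  have hgt : ∀ i, ∃ y, g i = PowerSeries.X * y + PowerSeries.C (t i) := by
    intro i
    have : (PowerSeries.X : PowerSeries L) ∣ g i - PowerSeries.C (t i) := by
      rw [PowerSeries.X_dvd_iff]; simp [t]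
    obtain ⟨y, hy⟩ := this
    exact ⟨y, by rw [← hy]; ring⟩
  choose y hy using hgt
  set ε := ∑ i, (⟨C (t i ^ p ^ ν), 0⟩ : QuadraticAlgebra L[X] (-c) b) * e i with hε
  have hφC : ∀ x : L, φ ⟨C x, 0⟩ = PowerSeries.C x := by
    intro x
    rw [hφ, qlift_apply]; simp
  have hdvd : PowerSeries.X ^ p ^ ν ∣ φ ε := by
    refine ⟨- ∑ i, φ (e i) * y i ^ p ^ ν, ?_⟩
    have : ∑ i, φ (e i) * g i ^ p ^ ν = PowerSeries.X ^ p ^ ν * ∑ i, φ (e i) * y i ^ p ^ ν + φ ε := by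
      rw [hε, map_sum, Finset.mul_sum, ← Finset.sum_add_distrib]
      refine Finset.sum_congr rfl fun i _ => ?_
      rw [map_mul, hφC, hy i, add_pow_expChar_pow, mul_pow, map_pow]
      ring
    rw [hsum] at this
    linear_combination -this
  have hBε : Bd m u u ε := by
    apply Bd.sum
    intro i _
    have := (Bd.coe (m := m) (b := b) (c := c) (i := 0) (j := 0)
      (natDegree_C (t i ^ p ^ ν)).le).mul hm hb hc (he i) le_rfl (by omega)
    simpa using this
  have hε0 : ε = 0 := by
    by_contra hne
    apply qnorm_ne_zero hirr hne
    have h1 := hBε.norm hm hb hc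
    have h2 : PowerSeries.X ^ p ^ ν ∣ (ε.norm : PowerSeries L) := by
      rw [← hnorm]; exact hdvd.mul_right _
    ext j
    by_cases hj : j < p ^ ν
    · have := PowerSeries.X_pow_dvd_iff.1 h2 j hj
      simpa using this
    · rw [coeff_eq_zero_of_natDegree_lt (by omega)]; simp
  have h3 := hli _ hε0 i1
  have h4 : t i1 = 0 := by
    exact pow_eq_zero_iff (by have := expChar_pos L p; positivity) |>.1 h3
  apply hi1
  rw [hg i1, hy i1, h4, map_zero, add_zero]
  exact ⟨y i1, by ring⟩

/-- The norm of the conjugated auxiliary function has degree at most `2u + E (2k + 1)`. Writing it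
as `Ψ₀ + Ψ₁ η ^ E` and multiplying out the norm saves one `E` over the trivial bound, since `c`
has degree at most `2m - 1` rather than `2m`. -/
theorem psi_degree {L : Type*} [Field L] {p : ℕ} [ExpChar L p] {b c : L[X]} {m u k ν : ℕ}
    {ι : Type*} [Fintype ι]
    (hm : 1 ≤ m) (hb : b.natDegree ≤ m) (hc : c.natDegree ≤ 2 * m - 1) (hmk : m ≤ k + 1)
    (e : ι → QuadraticAlgebra L[X] (-c) b) (he : ∀ i, Bd m u u (e i))
    (V : ι → QuadraticAlgebra L[X] (-c) b) (hV : ∀ i, Bd m k (k + 1) (V i)) :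
    (∑ i, e i * V i ^ p ^ ν).norm.natDegree ≤ 2 * u + p ^ ν * (2 * k + 1) := by
  have hinjA : Function.Injective ((algebraMap L[X] (QuadraticAlgebra L[X] (-c) b)).comp C) :=
    QuadraticAlgebra.algebraMap_injective.comp C_injective
  have : ExpChar (QuadraticAlgebra L[X] (-c) b) p := expChar_of_injective_ringHom hinjA p
  set E := p ^ ν with hE
  set w : QuadraticAlgebra L[X] (-c) b := ⟨0, 1⟩ with hw
  set Ψ0 := ∑ i, e i * (⟨(V i).re, 0⟩ : QuadraticAlgebra L[X] (-c) b) ^ E with h0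
  set Ψ1 := ∑ i, e i * (⟨(V i).im, 0⟩ : QuadraticAlgebra L[X] (-c) b) ^ E with h1
  have hΨ : ∑ i, e i * V i ^ E = Ψ0 + Ψ1 * w ^ E := by
    rw [h0, h1, Finset.sum_mul, ← Finset.sum_add_distrib]
    refine Finset.sum_congr rfl fun i _ => ?_
    have : V i = ⟨(V i).re, 0⟩ + ⟨(V i).im, 0⟩ * w := by
      ext1 <;> simp [hw]
    conv_lhs => rw [this]
    rw [hE, add_pow_expChar_pow, mul_pow]
    ring
  have hB0 : Bd m (u + E * k) (u + E * k) Ψ0 := Bd.sum _ fun i _ =>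
    (he i).mul hm hb hc ((Bd.coe (hV i).1).pow hm hb hc E) le_rfl (by omega)
  have hB1 : Bd m (u + E * (k + 1 - m)) (u + E * (k + 1 - m)) Ψ1 := Bd.sum _ fun i _ => by
    refine (he i).mul hm hb hc ((Bd.coe ?_).pow hm hb hc E) le_rfl (by omega)
    rcases (hV i).2 with h | h
    · simp [h]
    · omega
  have hBw : Bd m (E * m) (E * m) (w ^ E) := Bd.omega.pow hm hb hc E
  have hBw' : Bd m (E * m) (E * m) (star w ^ E) := (Bd.omega.star hb).pow hm hb hc E
  have hww : w * star w = ⟨c, 0⟩ := by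
    ext1 <;> simp [hw]
  have hBc : Bd m (E * (2 * m - 1)) (E * (2 * m - 1))
      ((⟨c, 0⟩ : QuadraticAlgebra L[X] (-c) b) ^ E) := (Bd.coe hc).pow hm hb hc E
  have hexp : (Ψ0 + Ψ1 * w ^ E) * star (Ψ0 + Ψ1 * w ^ E) =
      Ψ0 * star Ψ0 + Ψ1 * star Ψ1 * ⟨c, 0⟩ ^ E +
        (Ψ0 * star Ψ1 * star w ^ E + Ψ1 * star Ψ0 * w ^ E) := by
    rw [← hww, star_add, star_mul, star_pow]
    ring
  have hB : Bd m (2 * u + E * (2 * k + 1)) (2 * u + E * (2 * k + 1))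
      ((Ψ0 + Ψ1 * w ^ E) * star (Ψ0 + Ψ1 * w ^ E)) := by
    rw [hexp]
    obtain ⟨l, hl⟩ : ∃ l, k + 1 = m + l := ⟨k + 1 - m, by omega⟩
    obtain ⟨m', rfl⟩ : ∃ m', m = m' + 1 := ⟨m - 1, by omega⟩
    have hk : k = m' + l := by omega
    have e1 : k + 1 - (m' + 1) = l := by omega
    have e2 : 2 * (m' + 1) - 1 = 2 * m' + 1 := by omega
    rw [e1] at hB1
    rw [e2] at hBc
    have t1 := hB0.mul hm hb hc (hB0.star hb) le_rfl (by omega)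
    have t2 := (hB1.mul hm hb hc (hB1.star hb) le_rfl (by omega)).mul hm hb hc hBc le_rfl (by omega)
    have t3 := (hB0.mul hm hb hc (hB1.star hb) le_rfl (by omega)).mul hm hb hc hBw' le_rfl (by omega)
    have t4 := (hB1.mul hm hb hc (hB0.star hb) le_rfl (by omega)).mul hm hb hc hBw le_rfl (by omega)
    have i1 : u + E * k + (u + E * k) ≤ 2 * u + E * (2 * k + 1) := by nlinarith
    have i2 : u + E * l + (u + E * l) + E * (2 * m' + 1) ≤ 2 * u + E * (2 * k + 1) := by
      rw [hk]; apply le_of_eq; ring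
    have i3 : u + E * k + (u + E * l) + E * (m' + 1) ≤ 2 * u + E * (2 * k + 1) := by
      rw [hk]; apply le_of_eq; ring
    have i4 : u + E * l + (u + E * k) + E * (m' + 1) ≤ 2 * u + E * (2 * k + 1) := by
      rw [hk]; apply le_of_eq; ring
    exact ((t1.mono i1 i1).add (t2.mono i2 i2)).add ((t3.mono i3 i3).add (t4.mono i4 i4))
  rw [hΨ]
  have := hB.1
  rw [← QuadraticAlgebra.algebraMap_norm_eq_mul_star] at this
  exact this

/-- On points with `x^Q = x - ε` and `h^Q = κ - h`, the function `W` is the `Q`-th power of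
a function `V` of the same degree. -/
theorem exists_conj {L : Type*} [Field L] {b c : L[X]} {m k Q : ℕ} (hm : 1 ≤ m) (σ : L →+* L)
    (hσ : ∀ x, σ x = x ^ Q) (hσσ : ∀ x : L, (x ^ Q) ^ Q = x) (ε κ : L)
    (W : QuadraticAlgebra L[X] (-c) b) (hW : Bd m k (k + 1) W) :
    ∃ V : QuadraticAlgebra L[X] (-c) b, Bd m k (k + 1) V ∧ (V = 0 → W = 0) ∧
      ∀ x h, x ^ Q = x - ε → h ^ Q = κ - h →
        (V.re.eval x + V.im.eval x * h) ^ Q = W.re.eval x + W.im.eval x * h := by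
  obtain ⟨α, β⟩ := W
  obtain ⟨h1, h2⟩ := hW
  simp only at h1 h2
  have key : ∀ (f : L[X]) (x : L), x ^ Q = x - ε →
      σ (((f.comp (X + C ε)).map σ).eval x) = f.eval x := by
    intro f x hx
    have hmm : (((f.comp (X + C ε)).map σ).map σ) = f.comp (X + C ε) := by
      rw [Polynomial.map_map]
      convert Polynomial.map_id
      ext y
      simp [hσ, hσσ]
    rw [← eval_map_apply, hmm, eval_comp, hσ, hx]
    simp
  have hinj : ∀ f : L[X], (f.comp (X + C ε)).map σ = 0 → f = 0 := by
    intro f hf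
    rw [Polynomial.map_eq_zero] at hf
    exact comp_X_add_C_eq_zero_iff.1 hf
  have hdeg : ∀ f : L[X], ((f.comp (X + C ε)).map σ).natDegree ≤ f.natDegree := by
    intro f
    refine natDegree_map_le.trans (natDegree_comp_le.trans ?_)
    simp
  refine ⟨⟨((α + C κ * β).comp (X + C ε)).map σ, ((-β).comp (X + C ε)).map σ⟩, ⟨?_, ?_⟩, ?_, ?_⟩
  · refine (hdeg _).trans ((natDegree_add_le _ _).trans (max_le h1 ((natDegree_C_mul_le _ _).trans ?_)))
    rcases h2 with h | h
    · simp [h]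
    · omega
  · rcases h2 with h | h
    · left; simp [h]
    · right
      have := hdeg (-β)
      rw [natDegree_neg] at this
      simp only
      omega
  · intro h
    have e1 := hinj _ (congrArg QuadraticAlgebra.re h)
    have e2 := hinj _ (congrArg QuadraticAlgebra.im h)
    have hβ : β = 0 := by simpa using e2
    have hα : α = 0 := by simpa [hβ] using e1
    ext1 <;> simp [hα, hβ]
  · intro x h hx hh
    rw [← hσ, map_add, map_mul, key _ x hx, key _ x hx, hσ h, hh]
    simp
    ring

/-- A function vanishing at all points of `T` has norm of degree at least `T.card`: over each `x`
the fibre is at most the multiplicity of `x` as a root of the norm. -/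
theorem card_le_norm_degree {L : Type*} [Field L] {b c : L[X]}
    (T : Finset (L × L)) (hT : ∀ P ∈ T, P.2 ^ 2 - b.eval P.1 * P.2 + c.eval P.1 = 0)
    (z : QuadraticAlgebra L[X] (-c) b) (hz : z.norm ≠ 0)
    (hzT : ∀ P ∈ T, z.re.eval P.1 + z.im.eval P.1 * P.2 = 0) : T.card ≤ z.norm.natDegree := by
  classical
  -- compare multiplicities: two points over `x` force `(X - x)²` to divide the norm
  have hle : T.val.map Prod.fst ≤ z.norm.roots := by
    rw [Multiset.le_iff_count]
    intro x
    rw [count_roots, Multiset.count_map]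
    change (T.filter (fun P => x = P.1)).card ≤ _
    set S := T.filter (fun P => x = P.1) with hS
    have hmem : ∀ P ∈ S, P ∈ T ∧ x = P.1 := fun P hP => Finset.mem_filter.1 hP
    have hcard : S.card ≤ 2 := by
      by_contra! h
      obtain ⟨P1, P2, P3, m1, m2, m3, n12, n13, n23⟩ := Finset.two_lt_card_iff.1 h
      obtain ⟨⟨m1, q1⟩, ⟨m2, q2⟩, ⟨m3, q3⟩⟩ := And.intro (hmem _ m1) (And.intro (hmem _ m2) (hmem _ m3))
      have c1 := hT _ m1
      have c2 := hT _ m2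
      have c3 := hT _ m3
      obtain ⟨x1, y1⟩ := P1
      obtain ⟨x2, y2⟩ := P2
      obtain ⟨x3, y3⟩ := P3
      simp only at *
      subst q1 q2 q3
      have d12 : y1 - y2 ≠ 0 := fun h => n12 (by rw [sub_eq_zero.1 h])
      have d13 : y1 - y3 ≠ 0 := fun h => n13 (by rw [sub_eq_zero.1 h])
      have s12 : y1 + y2 - b.eval x = 0 := by
        apply (mul_eq_zero.1 (_ : (y1 - y2) * _ = 0)).resolve_left d12
        linear_combination c1 - c2
      have s13 : y1 + y3 - b.eval x = 0 := by
        apply (mul_eq_zero.1 (_ : (y1 - y3) * _ = 0)).resolve_left d13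
        linear_combination c1 - c3
      exact n23 (by rw [Prod.mk.injEq]; exact ⟨rfl, by linear_combination s12 - s13⟩)
    have hN : z.norm = z.re * z.re + b * z.re * z.im + c * z.im * z.im := by
      rw [QuadraticAlgebra.norm_def]; ring
    rcases Nat.lt_or_ge 1 S.card with h1 | h1
    · obtain ⟨P1, P2, m1, m2, n12⟩ := Finset.one_lt_card_iff.1 h1
      obtain ⟨m1, q1⟩ := hmem _ m1
      obtain ⟨m2, q2⟩ := hmem _ m2
      have c1 := hzT _ m1
      have c2 := hzT _ m2
      obtain ⟨x1, y1⟩ := P1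
      obtain ⟨x2, y2⟩ := P2
      simp only at *
      subst q1 q2
      have d12 : y1 - y2 ≠ 0 := fun h => n12 (by rw [sub_eq_zero.1 h])
      have him : z.im.eval x = 0 := by
        apply (mul_eq_zero.1 (_ : (y1 - y2) * _ = 0)).resolve_left d12
        linear_combination c1 - c2
      have hre : z.re.eval x = 0 := by linear_combination c1 - y1 * him
      obtain ⟨f, hf⟩ := dvd_iff_isRoot.2 hre
      obtain ⟨g, hg⟩ := dvd_iff_isRoot.2 him
      have : 2 ≤ rootMultiplicity x z.norm := by
        rw [le_rootMultiplicity_iff hz, hN, hf, hg]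
        exact ⟨f * f + b * f * g + c * g * g, by ring⟩
      omega
    · rcases Nat.eq_zero_or_pos S.card with h0 | h0
      · omega
      · obtain ⟨⟨x1, y1⟩, m1⟩ := Finset.card_pos.1 h0
        obtain ⟨m1, q1⟩ := hmem _ m1
        have c1 := hzT _ m1
        have c0 := hT _ m1
        simp only at *
        subst q1
        have : 0 < rootMultiplicity x z.norm := by
          rw [rootMultiplicity_pos hz, IsRoot, hN]
          simp only [eval_add, eval_mul]
          linear_combination (z.re.eval x + b.eval x * z.im.eval x - z.im.eval x * y1) * c1 +
            z.im.eval x ^ 2 * c0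
        omega
  have := Multiset.card_le_card hle
  rw [Multiset.card_map] at this
  exact this.trans (card_roots' _)

/-- Stepanov's bound for the points of `h² - b(x) h + c(x) = 0` on which the `Q`-power map acts by
`x ↦ x - ε`, `h ↦ κ - h`, where `Q = p ^ (μ + ν)`. -/
theorem stepanov {L : Type*} [Field L] {p : ℕ} [ExpChar L p] {b c : L[X]} {m u k μ ν : ℕ}
    (hm : 1 ≤ m) (hb : b.natDegree ≤ m) (hc : c.natDegree ≤ 2 * m - 1)
    (hb0 : b.eval 0 ≠ 0) (hc0 : c.eval 0 = 0) (hirr : ∀ h : L[X], h ^ 2 - b * h + c ≠ 0)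
    (hmu : m ≤ u) (hmk : m ≤ k + 1) (hu : 2 * u < p ^ ν)
    (hdim : 2 * p ^ μ * u + (2 * k + 3 - m) < (2 * u + 2 - m) * (2 * k + 3 - m))
    (hσσ : ∀ x : L, (x ^ p ^ (μ + ν)) ^ p ^ (μ + ν) = x) (ε κ : L) (T : Finset (L × L))
    (hT : ∀ P ∈ T, P.1 ^ p ^ (μ + ν) = P.1 - ε ∧ P.2 ^ p ^ (μ + ν) = κ - P.2 ∧
      P.2 ^ 2 - b.eval P.1 * P.2 + c.eval P.1 = 0) :
    T.card ≤ 2 * u + p ^ ν * (2 * k + 1) := by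
  -- the basis `X^a, X^a η` of the functions of degree at most `u`
  let e : Fin (u + 1) ⊕ Fin (u + 1 - m) → QuadraticAlgebra L[X] (-c) b :=
    Sum.elim (fun a => ⟨X ^ (a : ℕ), 0⟩) (fun a => ⟨0, X ^ (a : ℕ)⟩)
  have he : ∀ i, Bd m u u (e i) := by
    rintro (a | a)
    · refine ⟨?_, Or.inl rfl⟩
      change (X ^ (a : ℕ) : L[X]).natDegree ≤ u
      rw [natDegree_X_pow]; omega
    · refine ⟨by simp [e], Or.inr ?_⟩
      change (X ^ (a : ℕ) : L[X]).natDegree + m ≤ u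
      rw [natDegree_X_pow]; omega
  have hli : ∀ t : Fin (u + 1) ⊕ Fin (u + 1 - m) → L,
      ∑ i, (⟨C (t i), 0⟩ : QuadraticAlgebra L[X] (-c) b) * e i = 0 → ∀ i, t i = 0 := by
    intro t ht
    have hcoef : ∀ (n : ℕ) (f : Fin n → L), ∑ a, C (f a) * (X : L[X]) ^ (a : ℕ) = 0 →
        ∀ a, f a = 0 := by
      intro n f hf a
      have := congrArg (fun P => P.coeff (a : ℕ)) hf
      simp only [finsetSum_coeff, coeff_C_mul, coeff_X_pow, coeff_zero] at this
      rw [Finset.sum_eq_single a] at this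
      · simpa using this
      · intro b' _ hb'
        rw [if_neg (fun h => hb' (Fin.ext h.symm)), mul_zero]
      · simp
    have h1 : (QuadraticAlgebra.reₗ (-c) b) (∑ i, (⟨C (t i), 0⟩ : QuadraticAlgebra L[X] (-c) b) * e i)
        = 0 := by rw [ht, map_zero]
    have h2 : (QuadraticAlgebra.imₗ (-c) b) (∑ i, (⟨C (t i), 0⟩ : QuadraticAlgebra L[X] (-c) b) * e i)
        = 0 := by rw [ht, map_zero]
    rw [map_sum, Fintype.sum_sum_type] at h1 h2
    simp [e] at h1 h2
    rintro (a | a)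
    · exact hcoef _ (fun a => t (Sum.inl a)) h1 a
    · exact hcoef _ (fun a => t (Sum.inr a)) h2 a
  obtain ⟨W, hWB, ⟨i0, hi0⟩, hW0⟩ := exists_aux hm hb hc e he hmk (M := p ^ μ) (by
    have : Fintype.card (Fin (u + 1) ⊕ Fin (u + 1 - m)) = 2 * u + 2 - m := by
      simp; omega
    rw [this]; exact hdim)
  have hσ : ∀ x : L, iterateFrobenius L p (μ + ν) x = x ^ p ^ (μ + ν) := fun x =>
    iterateFrobenius_def ..
  choose V hVB hV0 hVW using fun i =>
    exists_conj hm (iterateFrobenius L p (μ + ν)) hσ hσσ ε κ (W i) (hWB i)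
  have hΨ := psi_ne_zero (p := p) hm hb hc hb0 hc0 hirr e he hli hu V ⟨i0, fun h => hi0 (hV0 _ h)⟩
  refine (card_le_norm_degree T (fun P hP => (hT P hP).2.2) _ (qnorm_ne_zero hirr hΨ) ?_).trans
    (psi_degree (p := p) hm hb hc hmk e he V hVB)
  rintro ⟨x, h⟩ hP
  obtain ⟨hx, hh, hcurve⟩ := hT _ hP
  simp only at hx hh hcurve ⊢
  have hη : h * h = evalRingHom x (-c) + evalRingHom x b * h := by
    simp only [coe_evalRingHom, eval_neg]
    linear_combination hcurve
  have hev : ∀ z, qlift (evalRingHom x) h hη z = z.re.eval x + z.im.eval x * h := fun z => rfl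
  rw [← hev]
  -- at a point of `T` the `M`-th power of the function below is the vanishing combination `hW0`
  have hpow : (qlift (evalRingHom x) h hη (∑ i, e i * V i ^ p ^ ν)) ^ p ^ μ = 0 := by
    have h0 := congrArg (qlift (evalRingHom x) h hη) hW0
    rw [map_sum, map_zero] at h0
    rw [map_sum, sum_pow_char_pow, ← h0]
    refine Finset.sum_congr rfl fun i _ => ?_
    rw [map_mul, map_mul, map_pow, map_pow, mul_pow, ← pow_mul, ← pow_add, add_comm ν μ,
      hev (V i), hVW i x h hx hh, hev (W i)]
  exact pow_eq_zero_iff (by have := expChar_pos L p; positivity) |>.1 hpow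

/-! ### The two curves have no polynomial section -/

/-- A root would have to vanish at `0` (otherwise it is constant, which the coefficients exclude),
and so would the conjugate root, but their sum takes the value `-e` at `0`. -/
theorem irrC {L : Type*} [Field L] {t : ℕ} (ht : 1 ≤ t) {e s κ : L} (he : e ≠ 0) (hκ : κ ≠ 0)
    (hes : κ ≠ e * s) (h : L[X]) :
    h ^ 2 - (C s * X ^ t - C e) * h + (-C κ * X ^ t) ≠ 0 := by
  have sub : ∀ h : L[X], h ^ 2 - (C s * X ^ t - C e) * h + (-C κ * X ^ t) = 0 →
      h.eval 0 = 0 := by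
    intro h hh
    by_contra h0
    have hd : h ∣ X ^ t := by
      refine (IsUnit.dvd_mul_left (isUnit_C.2 hκ.isUnit)).1 (⟨h - (C s * X ^ t - C e), ?_⟩ :
        h ∣ C κ * X ^ t)
      linear_combination -hh
    obtain ⟨i, -, hi⟩ := (dvd_prime_pow prime_X t).1 hd
    have hi0 : i = 0 := by
      by_contra hi0
      apply h0
      have : X ∣ h := (dvd_pow_self X hi0).trans hi.symm.dvd
      rwa [X_dvd_iff, coeff_zero_eq_eval_zero] at this
    rw [hi0, pow_zero, associated_one_iff_isUnit] at hi
    obtain ⟨a, ha, rfl⟩ := isUnit_iff.1 hi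
    have h3 : C (a ^ 2 + e * a) - C (s * a + κ) * X ^ t = 0 := by
      rw [C_add, C_add, C_mul, C_mul, C_pow]
      linear_combination hh
    have e0 := congrArg (fun P => P.coeff 0) h3
    have e1 := congrArg (fun P => P.coeff t) h3
    have ht0 : t ≠ 0 := by omega
    simp only [coeff_sub, coeff_C_mul, coeff_X_pow, coeff_C, coeff_zero, if_true, if_neg ht0,
      if_neg ht0.symm] at e0 e1
    have ha' : a = -e := by
      apply mul_left_cancel₀ ha.ne_zero
      linear_combination e0
    rw [ha'] at e1
    apply hes
    linear_combination -e1
  intro hh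
  have h1 := sub h hh
  have h2 := sub ((C s * X ^ t - C e) - h) (by linear_combination hh)
  have ht0 : t ≠ 0 := by omega
  simp [h1, ht0] at h2
  exact he h2

/-- A root not vanishing at `e` would divide `X`, so be `a` or `a X`, which the coefficients exclude.
Hence both roots vanish at `e`, contradicting that their sum takes the value `κ` there. -/
theorem irrY {L : Type*} [Field L] {r : ℕ} (hr : 2 ≤ r) {e s κ : L} (hs : s = e ^ r)
    (hκ : κ ≠ 0) (hes : κ ≠ e * s) (hX : (X : L[X]) ^ r - C s = (X - C e) ^ r) (h : L[X]) :
    h ^ 2 - (C κ + C s * X - C e * X ^ r) * h + (-C κ * X * (X ^ r - C s)) ≠ 0 := by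
  have sub : ∀ h : L[X],
      h ^ 2 - (C κ + C s * X - C e * X ^ r) * h + (-C κ * X * (X ^ r - C s)) = 0 →
      h.eval e = 0 := by
    intro h hh
    by_contra h0
    have hd : h ∣ X := by
      have hd1 : h ∣ (C κ * X) * (X - C e) ^ r :=
        ⟨h - (C κ + C s * X - C e * X ^ r), by rw [← hX]; linear_combination -hh⟩
      have hcop : IsCoprime h ((X - C e) ^ r) := by
        apply IsCoprime.pow_right
        refine ((irreducible_X_sub_C e).coprime_iff_not_dvd.2 ?_).symm
        rwa [dvd_iff_isRoot]
      exact (IsUnit.dvd_mul_left (isUnit_C.2 hκ.isUnit)).1 (hcop.dvd_of_dvd_mul_right hd1)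
    have hr1 : r ≠ 1 := by omega
    have hr0 : r ≠ 0 := by omega
    obtain ⟨g, hg⟩ := hd
    rcases irreducible_X.isUnit_or_isUnit hg with hu | hu
    · obtain ⟨a, ha, rfl⟩ := isUnit_iff.1 hu
      have e1 := congrArg (fun P => P.coeff (r + 1)) hh
      have hx : ∀ f g : L[X], -f * X * g = -(f * (g * X)) := fun f g => by ring
      rw [hx] at e1
      simp only [coeff_add, coeff_sub, coeff_neg, coeff_C_mul, coeff_mul_X, coeff_mul_C,
        ← C_pow, coeff_C, coeff_X_pow] at e1
      simp [hr0] at e1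
      exact hκ e1
    · obtain ⟨a, ha, rfl⟩ := isUnit_iff.1 hu
      have ha0 := ha.ne_zero
      have hh2 : h = C a⁻¹ * X := by
        rw [hg]
        have : C a⁻¹ * C a = (1 : L[X]) := by rw [← C_mul, inv_mul_cancel₀ ha0, C_1]
        linear_combination -h * this
      generalize a⁻¹ = a' at hh2
      subst hh2
      have h3 : C (a' ^ 2) * X - C a' * (C κ + C s * X - C e * X ^ r)
          - C κ * (X ^ r - C s) = 0 := by
        apply mul_left_cancel₀ (X_ne_zero (R := L))
        rw [C_pow]
        linear_combination hh
      have e0 := congrArg (fun P => P.coeff 0) h3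
      have e1 := congrArg (fun P => P.coeff r) h3
      simp [coeff_X_pow, coeff_C, coeff_X, hr0, hr0.symm, hr1.symm, -map_pow] at e0 e1
      have ha' : a' = s := by
        apply mul_left_cancel₀ hκ
        linear_combination -e0
      apply hes
      rw [ha'] at e1
      linear_combination -e1
  intro hh
  have h1 := sub h hh
  have h2 := sub ((C κ + C s * X - C e * X ^ r) - h) (by linear_combination hh)
  simp [h1, hs] at h2
  apply hκ
  linear_combination h2

/-! ### Counting in finite fields -/

/-- The subfield of order `p ^ a` has `p ^ a` elements. -/
theorem card_fixed {K : Type*} [Field K] [Fintype K] [DecidableEq K] {p a N : ℕ} (hp : 1 < p)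
    (ha : 0 < a) (hK : Fintype.card K = p ^ N) (haN : a ∣ N) :
    (Finset.univ.filter fun x : K => x ^ p ^ a = x).card = p ^ a := by
  have h1 : 1 < p ^ a := Nat.one_lt_pow ha.ne' hp
  have hN : 1 < p ^ N := hK ▸ Fintype.one_lt_card
  have hne := FiniteField.X_pow_card_sub_X_ne_zero K hN
  have hne' := FiniteField.X_pow_card_sub_X_ne_zero K h1
  have hdvd : (X ^ p ^ a - X : K[X]) ∣ X ^ p ^ N - X := dvd_pow_pow_sub_self_of_dvd haN
  have hroots := FiniteField.roots_X_pow_card_sub_X K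
  rw [hK] at hroots
  have hsp : (X ^ p ^ N - X : K[X]).Splits := by
    rw [splits_iff_card_roots, hroots, FiniteField.X_pow_card_sub_X_natDegree_eq K hN]
    change Fintype.card K = _
    rw [hK]
  have hsp' := hsp.of_dvd hne hdvd
  have hnd : (X ^ p ^ a - X : K[X]).roots.Nodup := by
    have := Polynomial.roots.le_of_dvd hne hdvd
    rw [hroots] at this
    exact Multiset.nodup_of_le this Finset.univ.nodup
  have hc := hsp'.natDegree_eq_card_roots
  rw [FiniteField.X_pow_card_sub_X_natDegree_eq K h1] at hc
  have heq : (Finset.univ.filter fun x : K => x ^ p ^ a = x) =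
      (X ^ p ^ a - X : K[X]).roots.toFinset := by
    ext x
    simp [hne', sub_eq_zero]
  rw [heq, Multiset.toFinset_card_of_nodup hnd, ← hc]

/-- Every quadratic over `K` whose coefficients are compatible with the involution `h ↦ k₀ - h^Q`
has both its roots in `K`; on the roots the involution is either the identity or the swap. -/
theorem two_roots {K : Type*} [Field K] [Fintype K] [DecidableEq K] {p j : ℕ} [ExpChar K p]
    (hp : 1 < p) (hK : Fintype.card K = p ^ j * p ^ j) {β γ k0 : K} (hk : k0 ^ p ^ j = k0)
    (hβ : β ^ p ^ j = 2 * k0 - β) (hγ : γ ^ p ^ j = γ + k0 ^ 2 - β * k0) :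
    2 ≤ (Finset.univ.filter fun h : K => h ^ 2 - β * h + γ = 0 ∧ h ^ p ^ j = k0 - h).card +
      (Finset.univ.filter fun h : K => h ^ 2 - β * h + γ = 0 ∧ h ^ p ^ j = k0 - β + h).card := by
  set Q := p ^ j with hQ
  let Ω := AlgebraicClosure K
  let i : K →+* Ω := algebraMap K Ω
  have hexp : ExpChar Ω p := expChar_of_injective_ringHom i.injective p
  have hroot : ∃ y : Ω, y ^ 2 - i β * y + i γ = 0 := by
    obtain ⟨y, hy⟩ := IsAlgClosed.exists_root (X ^ 2 + (-C (i β) * X + C (i γ)) : Polynomial Ω) (by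
      have : (X ^ 2 + (-C (i β) * X + C (i γ)) : Polynomial Ω).degree = 2 := by compute_degree!
      rw [this]; norm_num)
    refine ⟨y, ?_⟩
    simp only [IsRoot, eval_add, eval_mul, eval_pow, eval_X, eval_neg, eval_C] at hy
    linear_combination hy
  obtain ⟨y, hy⟩ := hroot
  have ik : (i k0) ^ Q = i k0 := by rw [← map_pow, hk]
  have iβ : (i β) ^ Q = 2 * i k0 - i β := by
    rw [← map_pow, hβ, map_sub, map_mul, map_ofNat]
  have iγ : (i γ) ^ Q = i γ + i k0 ^ 2 - i β * i k0 := by rw [← map_pow, hγ]; simp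
  have hyQ : (y ^ Q) ^ 2 - (2 * i k0 - i β) * y ^ Q + (i γ + i k0 ^ 2 - i β * i k0) = 0 := by
    have := congrArg (fun z => z ^ Q) hy
    simp only [hQ] at this
    rw [add_pow_expChar_pow, sub_pow_expChar_pow, mul_pow, ← hQ, iβ, iγ, zero_pow (by
      rw [hQ]; positivity)] at this
    rw [← this]; ring
  -- `k₀ - y^Q` is again a root of the quadratic, hence equal to `y` or to `β - y`
  have hcase : (i k0 - y ^ Q - y) * (i k0 - y ^ Q - (i β - y)) = 0 := by
    linear_combination hyQ - hy
  have hyK : y ^ (Q * Q) = y := by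
    rw [pow_mul]
    rcases mul_eq_zero.1 hcase with h | h
    · have h1 : y ^ Q = i k0 - y := by linear_combination -h
      rw [h1, hQ, sub_pow_expChar_pow, ← hQ, ik, h1]; ring
    · have h1 : y ^ Q = i k0 - i β + y := by linear_combination -h
      rw [h1, hQ, add_pow_expChar_pow, sub_pow_expChar_pow, ← hQ, ik, h1, iβ]; ring
  have hN : 1 < Q * Q := hK ▸ Fintype.one_lt_card
  have hroots := FiniteField.roots_X_pow_card_sub_X K
  rw [hK] at hroots
  have hsp : (X ^ (Q * Q) - X : K[X]).Splits := by
    rw [splits_iff_card_roots, hroots, FiniteField.X_pow_card_sub_X_natDegree_eq K hN]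
    change Fintype.card K = _
    rw [hK]
  obtain ⟨h, rfl⟩ : y ∈ i.range := by
    apply hsp.mem_range_of_isRoot (FiniteField.X_pow_card_sub_X_ne_zero K hN)
    simp [IsRoot, hyK]
  have hh : h ^ 2 - β * h + γ = 0 := by
    apply i.injective
    simpa using hy
  have hh' : (β - h) ^ 2 - β * (β - h) + γ = 0 := by linear_combination hh
  have hcase' : (k0 - h ^ Q - h) * (k0 - h ^ Q - (β - h)) = 0 := by
    apply i.injective
    simpa using hcase
  have hQ' : (β - h) ^ Q = 2 * k0 - β - h ^ Q := by
    rw [hQ, sub_pow_expChar_pow, ← hQ, hβ]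
  set A := (Finset.univ.filter fun h : K => h ^ 2 - β * h + γ = 0 ∧ h ^ Q = k0 - h)
  set B := (Finset.univ.filter fun h : K => h ^ 2 - β * h + γ = 0 ∧ h ^ Q = k0 - β + h)
  by_cases heq : h = β - h
  · have hA : h ∈ A := by
      refine Finset.mem_filter.2 ⟨Finset.mem_univ _, hh, ?_⟩
      rcases mul_eq_zero.1 hcase' with h1 | h1
      · linear_combination -h1
      · linear_combination -h1 + heq
    have hB : h ∈ B := by
      refine Finset.mem_filter.2 ⟨Finset.mem_univ _, hh, ?_⟩
      rcases mul_eq_zero.1 hcase' with h1 | h1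
      · linear_combination -h1 - heq
      · linear_combination -h1
    have := Finset.card_pos.2 ⟨h, hA⟩
    have := Finset.card_pos.2 ⟨h, hB⟩
    omega
  · rcases mul_eq_zero.1 hcase' with h1 | h1
    · have : 1 < A.card := Finset.one_lt_card_iff.2 ⟨h, β - h,
        Finset.mem_filter.2 ⟨Finset.mem_univ _, hh, by linear_combination -h1⟩,
        Finset.mem_filter.2 ⟨Finset.mem_univ _, hh', by rw [hQ']; linear_combination h1⟩, heq⟩
      omega
    · have : 1 < B.card := Finset.one_lt_card_iff.2 ⟨h, β - h,
        Finset.mem_filter.2 ⟨Finset.mem_univ _, hh, by linear_combination -h1⟩,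
        Finset.mem_filter.2 ⟨Finset.mem_univ _, hh', by rw [hQ']; linear_combination h1⟩, heq⟩
      omega

/-- Sum of `two_roots` over a set `S`: the points with `h^Q = k₀ - h` and those with
`h^Q = k₀ - β + h` together number at least `2 |S|`. -/
theorem two_roots_sum {K : Type*} [Field K] [Fintype K] [DecidableEq K] {p j : ℕ} [ExpChar K p]
    (hp : 1 < p) (hK : Fintype.card K = p ^ j * p ^ j) (S : Finset K) {β γ : K → K} {k0 : K}
    (hk : k0 ^ p ^ j = k0) (hβ : ∀ x ∈ S, β x ^ p ^ j = 2 * k0 - β x)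
    (hγ : ∀ x ∈ S, γ x ^ p ^ j = γ x + k0 ^ 2 - β x * k0) :
    2 * S.card ≤ (Finset.univ.filter fun P : K × K => P.1 ∈ S ∧ P.2 ^ 2 - β P.1 * P.2 + γ P.1 = 0 ∧
        P.2 ^ p ^ j = k0 - P.2).card +
      (Finset.univ.filter fun P : K × K => P.1 ∈ S ∧ P.2 ^ 2 - β P.1 * P.2 + γ P.1 = 0 ∧
        P.2 ^ p ^ j = k0 - β P.1 + P.2).card := by
  have aux : ∀ R : K → K → Prop, ∀ [DecidableRel R],
      (Finset.univ.filter fun P : K × K => P.1 ∈ S ∧ R P.1 P.2).card =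
        ∑ x ∈ S, (Finset.univ.filter fun h => R x h).card := by
    intro R _
    rw [Finset.card_eq_sum_card_fiberwise (f := Prod.fst) (t := S)
      (by intro P hP; simp only [Finset.coe_filter, Finset.mem_univ, true_and] at hP; exact hP.1)]
    refine Finset.sum_congr rfl fun x hx => ?_
    symm
    refine Finset.card_bij (fun h _ => (x, h)) ?_ ?_ ?_
    · intro h hh
      simp only [Finset.mem_filter, Finset.mem_univ, true_and] at hh ⊢
      exact ⟨⟨hx, hh⟩, trivial⟩
    · intro a _ b _ h
      exact (Prod.mk.injEq _ _ _ _ ▸ h).2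
    · rintro ⟨x', h⟩ hP
      simp only [Finset.mem_filter, Finset.mem_univ, true_and] at hP
      obtain ⟨⟨_, h2⟩, rfl⟩ := hP
      exact ⟨h, by simpa using h2, rfl⟩
  rw [aux (fun x h => h ^ 2 - β x * h + γ x = 0 ∧ h ^ p ^ j = k0 - h),
    aux (fun x h => h ^ 2 - β x * h + γ x = 0 ∧ h ^ p ^ j = k0 - β x + h),
    ← Finset.sum_add_distrib, mul_comm, ← smul_eq_mul]
  exact Finset.card_nsmul_le_sum _ _ _ fun x hx => two_roots hp hK hk (hβ x hx) (hγ x hx)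

/-! ### The conic and its two covers -/

/-- The elements `A` with `A^(Q+1) = d (A+e)^(Q+1)`. -/
def conic {K : Type*} [Field K] [Fintype K] [DecidableEq K] (Q : ℕ) (d e : K) : Finset K :=
  Finset.univ.filter fun A => A ^ (Q + 1) = d * (A + e) ^ (Q + 1)

/-- With `z = (A - A^Q + e) / s`, the equation `v^r = z v` has a nonzero solution fixed by the
`Q`-power map. The denominator `s` is cleared. -/
def IsKummer {K : Type*} [Field K] (Q r : ℕ) (e s : K) (A : K) : Prop :=
  ∃ v : K, v ≠ 0 ∧ v ^ Q = v ∧ s * v ^ r = (A - A ^ Q + e) * v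

/-- `A` lies on the conic iff it is a root of a polynomial of degree `Q + 1`, as `e^Q = -e`. -/
theorem card_conic_le {K : Type*} [Field K] [Fintype K] [DecidableEq K] {p j : ℕ} [ExpChar K p]
    {d e : K} (hd : d ≠ 1) (heQ : e ^ p ^ j = -e) : (conic (p ^ j) d e).card ≤ p ^ j + 1 := by
  set Q := p ^ j with hQ
  have hQ0 : 0 < Q := by have := expChar_pos K p; positivity
  let P : K[X] := X ^ (Q + 1) - C d * ((X + C e) * (X ^ Q - C e))
  have hdeg : P.natDegree ≤ Q + 1 := by
    have : ((X + C e) * (X ^ Q - C e)).natDegree ≤ Q + 1 := by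
      refine natDegree_mul_le.trans ?_
      have h1 : (X ^ Q - C e : K[X]).natDegree ≤ Q := by compute_degree
      have h2 : (X + C e : K[X]).natDegree ≤ 1 := by compute_degree
      omega
    refine (natDegree_sub_le _ _).trans (max_le (by simp) ((natDegree_C_mul_le _ _).trans this))
  have hco : P.coeff (Q + 1) = 1 - d := by
    have hsplit : P = C (1 - d) * X ^ (Q + 1) - (C d * C e) * (X ^ Q - X - C e) := by
      simp only [P, C_sub, C_1]; ring
    rw [hsplit, ← C_mul]
    simp only [coeff_sub, coeff_C_mul, coeff_X_pow, coeff_X, coeff_C]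
    simp [hQ0.ne']
  have hP0 : P ≠ 0 := by
    intro h
    rw [h, coeff_zero] at hco
    exact hd (by linear_combination hco)
  have hsub : conic Q d e ⊆ P.roots.toFinset := by
    intro A hA
    have hA' := (Finset.mem_filter.1 hA).2
    rw [Multiset.mem_toFinset, mem_roots hP0]
    simp only [P, IsRoot, eval_sub, eval_mul, eval_pow, eval_X, eval_add, eval_C]
    rw [pow_succ (A + e), hQ, add_pow_expChar_pow, ← hQ, heQ] at hA'
    linear_combination hA'
  exact (Finset.card_le_card hsub).trans ((Multiset.toFinset_card_le _).trans
    ((card_roots' _).trans hdeg))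

/-- A point `(w, A)` of the first cover, with `w = v^(r-1)`, lies over the point `A` of the conic,
and `z = w`. -/
theorem mem_conic_of_curveC {K : Type*} [Field K] {p j : ℕ} [ExpChar K p] {d e s κ w A : K}
    (heQ : e ^ p ^ j = -e) (hκ : κ = d * (κ - e * s))
    (h1 : A ^ 2 - (s * w - e) * A + -κ * w = 0) (h2 : A ^ p ^ j = 0 - (s * w - e) + A) :
    A ^ (p ^ j + 1) = d * (A + e) ^ (p ^ j + 1) ∧ A - A ^ p ^ j + e = s * w := by
  refine ⟨?_, by linear_combination -h2⟩
  rw [pow_succ, pow_succ, add_pow_expChar_pow, heQ, h2]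
  linear_combination (1 - d) * h1 + w * hκ

/-- A point of the second cover above `A = h / (x - e)^r`: it gives `z x^r - x = A` together with
the equation of the conic. -/
theorem mem_conic_of_curveY {K : Type*} [Field K] {p j i : ℕ} [ExpChar K p] {d e s κ x h : K}
    (he : e ≠ 0) (heQ : e ^ p ^ j = -e) (hs : s = e ^ p ^ i) (hκ : κ = d * (κ - e * s))
    (hκ0 : κ ≠ 0) (hx : x ^ p ^ j = x - e)
    (h1 : h ^ 2 - (κ + s * x - e * x ^ p ^ i) * h + -κ * x * (x ^ p ^ i - s) = 0)
    (h2 : h ^ p ^ j = κ - (κ + s * x - e * x ^ p ^ i) + h) :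
    (x - e) ^ p ^ i ≠ 0 ∧ ∃ A, h = A * (x - e) ^ p ^ i ∧ A ≠ 0 ∧ A + e ≠ 0 ∧
      A ^ (p ^ j + 1) = d * (A + e) ^ (p ^ j + 1) ∧
      (A - A ^ p ^ j + e) * x ^ p ^ i = s * (A + x) := by
  have hp := expChar_pos K p
  have hx0 : x ≠ 0 := by
    rintro rfl
    rw [zero_pow (by positivity)] at hx
    exact he (by linear_combination hx)
  have hxe : x - e ≠ 0 := by
    rw [← hx]; exact pow_ne_zero _ hx0
  have hY : (x - e) ^ p ^ i ≠ 0 := pow_ne_zero _ hxe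
  have hYe : (x - e) ^ p ^ i = x ^ p ^ i - s := by rw [sub_pow_expChar_pow, hs]
  have hYQ : ((x - e) ^ p ^ i) ^ p ^ j = x ^ p ^ i := by
    rw [← pow_mul, mul_comm, pow_mul, sub_pow_expChar_pow, hx, heQ]
    ring
  have hy : x ^ p ^ i ≠ 0 := pow_ne_zero _ hx0
  obtain ⟨A, hA⟩ : ∃ A, h = A * (x - e) ^ p ^ i := ⟨h / (x - e) ^ p ^ i, by field_simp⟩
  have hAQ : A ^ p ^ j * x ^ p ^ i = A * (x ^ p ^ i - s) - s * x + e * x ^ p ^ i := by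
    have := h2
    rw [hA, mul_pow, hYQ, hYe] at this
    linear_combination this
  have hAA : A * A ^ p ^ j * x ^ p ^ i = κ * (A + x) := by
    apply mul_right_cancel₀ hY
    rw [hA, ← hYe] at h1
    rw [← hYe] at hAQ
    linear_combination A * (x - e) ^ p ^ i * hAQ + h1
  have hz : (A - A ^ p ^ j + e) * x ^ p ^ i = s * (A + x) := by linear_combination -hAQ
  have hmem : A ^ (p ^ j + 1) = d * (A + e) ^ (p ^ j + 1) := by
    rw [pow_succ, pow_succ, add_pow_expChar_pow, heQ]
    apply mul_right_cancel₀ hy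
    linear_combination (1 - d) * hAA + (A + x) * hκ + d * e * hz
  have hA0 : A ≠ 0 := by
    rintro rfl
    rw [zero_pow (by positivity)] at hAA hz
    have : x = 0 := by
      apply mul_left_cancel₀ hκ0
      linear_combination -hAA
    exact hx0 this
  refine ⟨hY, A, hA, hA0, ?_, hmem, hz⟩
  intro h0
  rw [h0, zero_pow (by omega), mul_zero] at hmem
  exact hA0 (pow_eq_zero_iff (by omega) |>.1 hmem)

/-- Elements fixed by `q^n`- and `q^s`-powers with `gcd n s = 1` lie in the field of order `q`. -/
theorem fix_gcd {K : Type*} [Monoid K] {q n s : ℕ} (hgcd : Nat.gcd n s = 1) {c : K}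
    (h1 : c ^ q ^ n = c) (h2 : c ^ q ^ s = c) : c ^ q = c := by
  have key : ∀ k (x : K), (fun x : K => x ^ q)^[k] x = x ^ q ^ k := by
    intro k
    induction k with
    | zero => intro x; simp
    | succ k ih => intro x; rw [Function.iterate_succ_apply, ih, ← pow_mul, pow_succ, mul_comm]
  have a1 : Function.IsPeriodicPt (fun x : K => x ^ q) n c := by
    rw [Function.IsPeriodicPt, Function.IsFixedPt, key, h1]
  have a2 : Function.IsPeriodicPt (fun x : K => x ^ q) s c := by
    rw [Function.IsPeriodicPt, Function.IsFixedPt, key, h2]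
  have a3 := a1.gcd a2
  rw [hgcd, Function.IsPeriodicPt, Function.IsFixedPt, key, pow_one] at a3
  exact a3

/-- The first cover has fibres of size at most `q - 1`, over Kummer points only. -/
theorem card_curveC_le {K : Type*} [Field K] [Fintype K] [DecidableEq K] {p f n s : ℕ} [ExpChar K p]
    (hgcd : Nat.gcd n s = 1) (hcard : (Finset.univ.filter fun x : K => x ^ p ^ f = x).card = p ^ f)
    (hr : 2 ≤ p ^ (f * s))
    {d e σ κ : K} (he : e ≠ 0) (heQ : e ^ p ^ (f * n) = -e) (hκ : κ = d * (κ - e * σ))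
    [DecidablePred (IsKummer (p ^ (f * n)) (p ^ (f * s)) e σ)] (hσ : σ ≠ 0) :
    (Finset.univ.filter fun P : K × K => P.1 ∈ Finset.univ.filter (fun v : K => v ^ p ^ (f * n) = v) ∧
      P.2 ^ 2 - (σ * P.1 ^ (p ^ (f * s) - 1) - e) * P.2 + -κ * P.1 ^ (p ^ (f * s) - 1) = 0 ∧
      P.2 ^ p ^ (f * n) = 0 - (σ * P.1 ^ (p ^ (f * s) - 1) - e) + P.2).card ≤
    (p ^ f - 1) * ((conic (p ^ (f * n)) d e).filter
      (IsKummer (p ^ (f * n)) (p ^ (f * s)) e σ)).card := by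
  have hp := expChar_pos K p
  have hpt : ∀ v A : K, v ^ p ^ (f * n) = v →
      A ^ 2 - (σ * v ^ (p ^ (f * s) - 1) - e) * A + -κ * v ^ (p ^ (f * s) - 1) = 0 →
      A ^ p ^ (f * n) = 0 - (σ * v ^ (p ^ (f * s) - 1) - e) + A →
      v ≠ 0 ∧ A ∈ conic (p ^ (f * n)) d e ∧
        A - A ^ p ^ (f * n) + e = σ * v ^ (p ^ (f * s) - 1) := by
    intro v A hv h1 h2
    obtain ⟨m1, m2⟩ := mem_conic_of_curveC heQ hκ h1 h2
    refine ⟨?_, Finset.mem_filter.2 ⟨Finset.mem_univ _, m1⟩, m2⟩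
    rintro rfl
    rw [zero_pow (by omega)] at h1 h2
    have : A * (A + e) = 0 := by linear_combination h1
    rcases mul_eq_zero.1 this with h | h
    · rw [h, zero_pow (by positivity)] at h2
      exact he (by linear_combination -h2)
    · rw [eq_neg_of_add_eq_zero_left h, neg_pow, heQ] at h2
      have h3 : (-1 : K) ^ p ^ (f * n) = -1 := by
        have := sub_pow_expChar_pow (R := K) 0 1 (f * n) (p := p)
        rwa [zero_pow (by positivity), one_pow, zero_sub] at this
      rw [h3] at h2
      exact he (by linear_combination h2)
  have hrr : p ^ (f * s) = p ^ (f * s) - 1 + 1 := by omega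
  apply Finset.card_le_mul_card_image_of_maps_to (f := Prod.snd)
  · rintro ⟨v, A⟩ hP
    simp only [Finset.mem_filter, Finset.mem_univ, true_and] at hP
    obtain ⟨hv, h1, h2⟩ := hP
    obtain ⟨hv0, m1, m2⟩ := hpt v A hv h1 h2
    refine Finset.mem_filter.2 ⟨m1, v, hv0, hv, ?_⟩
    rw [m2]
    conv_lhs => rw [hrr, pow_succ]
    ring
  · intro A _
    have hmem : ∀ P ∈ Finset.filter (fun P : K × K => P.2 = A) (Finset.univ.filter fun P : K × K =>
        P.1 ∈ Finset.univ.filter (fun v : K => v ^ p ^ (f * n) = v) ∧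
        P.2 ^ 2 - (σ * P.1 ^ (p ^ (f * s) - 1) - e) * P.2 + -κ * P.1 ^ (p ^ (f * s) - 1) = 0 ∧
        P.2 ^ p ^ (f * n) = 0 - (σ * P.1 ^ (p ^ (f * s) - 1) - e) + P.2),
        P.1 ≠ 0 ∧ P.2 = A ∧ P.1 ^ p ^ (f * n) = P.1 ∧
        A - A ^ p ^ (f * n) + e = σ * P.1 ^ (p ^ (f * s) - 1) := by
      rintro ⟨v, A'⟩ hP
      simp only [Finset.mem_filter, Finset.mem_univ, true_and] at hP
      obtain ⟨⟨hv, h1, h2⟩, rfl⟩ := hP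
      obtain ⟨hv0, m1, m2⟩ := hpt v A' hv h1 h2
      exact ⟨hv0, rfl, hv, m2⟩
    revert hmem
    generalize Finset.filter (fun P : K × K => P.2 = A) _ = S
    intro hmem
    rcases S.eq_empty_or_nonempty with h0 | ⟨⟨v0, A0⟩, h0⟩
    · rw [h0]; simp
    · obtain ⟨z0, -, z2, z3⟩ := hmem _ h0
      simp only at z0 z2 z3
      rw [← hcard, ← Finset.card_erase_of_mem (a := (0 : K)) (by
        simp only [Finset.mem_filter, Finset.mem_univ, true_and]
        exact zero_pow (by positivity))]
      refine Finset.card_le_card_of_injOn (fun P => P.1 / v0) ?_ ?_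
      · intro P hP
        obtain ⟨y0, -, y2, y3⟩ := hmem P hP
        simp only [Finset.coe_erase, Finset.coe_filter, Finset.mem_univ, true_and]
        refine ⟨?_, div_ne_zero y0 z0⟩
        apply fix_gcd (q := p ^ f) hgcd
        · rw [← pow_mul, div_pow, y2, z2]
        · rw [← pow_mul, div_pow, hrr, pow_succ, pow_succ]
          have : P.1 ^ (p ^ (f * s) - 1) = v0 ^ (p ^ (f * s) - 1) := by
            apply mul_left_cancel₀ hσ
            rw [← y3, ← z3]
          rw [this]
          have := pow_ne_zero (p ^ (f * s) - 1) z0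
          field_simp
      · intro P hP P' hP' h
        obtain ⟨y0, y1, y2, y3⟩ := hmem P hP
        obtain ⟨y0', y1', y2', y3'⟩ := hmem P' hP'
        simp only at h
        ext
        · field_simp at h
          exact h
        · exact (y1'.trans y1.symm).symm

/-- If the target equation has no solution `t`, the second cover embeds into the non-Kummer
points of the conic. -/
theorem card_curveY_le {K : Type*} [Field K] [Fintype K] [DecidableEq K] {p i j : ℕ} [ExpChar K p]
    {d e σ κ : K} (he : e ≠ 0) (heQ : e ^ p ^ j = -e) (hs : σ = e ^ p ^ i)
    (hκ : κ = d * (κ - e * σ)) (hκ0 : κ ≠ 0)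
    [DecidablePred (IsKummer (p ^ j) (p ^ i) e σ)]
    (hno : ∀ t : K, t ^ p ^ j ≠ t → t ^ p ^ i - t ≠ 0 → t ^ p ^ i - t ^ p ^ j ≠ 0 →
      (t ^ p ^ i - t) ^ (p ^ j + 1) ≠ d * (t ^ p ^ i - t ^ p ^ j) ^ (p ^ j + 1)) :
    (Finset.univ.filter fun P : K × K => P.1 ∈ Finset.univ.filter (fun x : K => x ^ p ^ j = x - e) ∧
      P.2 ^ 2 - (κ + σ * P.1 - e * P.1 ^ p ^ i) * P.2 + -κ * P.1 * (P.1 ^ p ^ i - σ) = 0 ∧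
      P.2 ^ p ^ j = κ - (κ + σ * P.1 - e * P.1 ^ p ^ i) + P.2).card ≤
    ((conic (p ^ j) d e).filter (fun A => ¬ IsKummer (p ^ j) (p ^ i) e σ A)).card := by
  have hσ0 : σ ≠ 0 := by rw [hs]; exact pow_ne_zero _ he
  have hmem : ∀ P ∈ (Finset.univ.filter fun P : K × K =>
      P.1 ∈ Finset.univ.filter (fun x : K => x ^ p ^ j = x - e) ∧
      P.2 ^ 2 - (κ + σ * P.1 - e * P.1 ^ p ^ i) * P.2 + -κ * P.1 * (P.1 ^ p ^ i - σ) = 0 ∧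
      P.2 ^ p ^ j = κ - (κ + σ * P.1 - e * P.1 ^ p ^ i) + P.2),
      P.1 ^ p ^ j = P.1 - e ∧ (P.1 - e) ^ p ^ i ≠ 0 ∧ ∃ A,
      P.2 = A * (P.1 - e) ^ p ^ i ∧ A ≠ 0 ∧ A + e ≠ 0 ∧
      A ^ (p ^ j + 1) = d * (A + e) ^ (p ^ j + 1) ∧
      (A - A ^ p ^ j + e) * P.1 ^ p ^ i = σ * (A + P.1) := by
    rintro ⟨x, h⟩ hP
    simp only [Finset.mem_filter, Finset.mem_univ, true_and] at hP
    obtain ⟨hx, h1, h2⟩ := hP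
    exact ⟨hx, mem_conic_of_curveY he heQ hs hκ hκ0 hx h1 h2⟩
  revert hmem
  generalize (Finset.univ.filter fun P : K × K =>
      P.1 ∈ Finset.univ.filter (fun x : K => x ^ p ^ j = x - e) ∧
      P.2 ^ 2 - (κ + σ * P.1 - e * P.1 ^ p ^ i) * P.2 + -κ * P.1 * (P.1 ^ p ^ i - σ) = 0 ∧
      P.2 ^ p ^ j = κ - (κ + σ * P.1 - e * P.1 ^ p ^ i) + P.2) = S
  intro hmem
  have hnk : ∀ x A : K, x ^ p ^ j = x - e → A ≠ 0 → A + e ≠ 0 →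
      A ^ (p ^ j + 1) = d * (A + e) ^ (p ^ j + 1) →
      (A - A ^ p ^ j + e) * x ^ p ^ i = σ * (A + x) → ¬ IsKummer (p ^ j) (p ^ i) e σ A := by
    rintro x A hx hA hAe hAd hz ⟨v, hv0, hvQ, hv⟩
    have ht1 : (v * x) ^ p ^ i - v * x = v * A := by
      apply mul_left_cancel₀ hσ0
      rw [mul_pow]
      linear_combination x ^ p ^ i * hv + v * hz
    have htQ : (v * x) ^ p ^ j = v * x - v * e := by
      rw [mul_pow, hvQ, hx]; ring
    have ht2 : (v * x) ^ p ^ i - (v * x) ^ p ^ j = v * (A + e) := by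
      rw [htQ]; linear_combination ht1
    refine hno (v * x) ?_ ?_ ?_ ?_
    · rw [htQ]
      intro h
      exact mul_ne_zero hv0 he (by linear_combination -h)
    · rw [ht1]; exact mul_ne_zero hv0 hA
    · rw [ht2]; exact mul_ne_zero hv0 hAe
    · rw [ht1, ht2, mul_pow, mul_pow, hAd]; ring
  refine Finset.card_le_card_of_injOn (fun P => P.2 / (P.1 - e) ^ p ^ i) ?_ ?_
  · intro P hP
    obtain ⟨hx, hY, A, hA, hA0, hAe, hAd, hz⟩ := hmem P hP
    have : P.2 / (P.1 - e) ^ p ^ i = A := by rw [hA]; field_simp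
    simp only [this]
    exact Finset.mem_coe.2 (Finset.mem_filter.2 ⟨Finset.mem_filter.2 ⟨Finset.mem_univ _, hAd⟩,
      hnk _ _ hx hA0 hAe hAd hz⟩)
  · rintro ⟨x, h⟩ hP ⟨x', h'⟩ hP' heq
    obtain ⟨hx, hY, A, hA, hA0, hAe, hAd, hz⟩ := hmem _ hP
    obtain ⟨hx', hY', A', hA', hA0', hAe', hAd', hz'⟩ := hmem _ hP'
    simp only at *
    have e1 : h / (x - e) ^ p ^ i = A := by rw [hA]; field_simp
    have e2 : h' / (x' - e) ^ p ^ i = A' := by rw [hA']; field_simp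
    rw [e1, e2] at heq
    subst heq
    -- two preimages of one `A` would give the Kummer witness `(x - x')⁻¹`
    have hxx : x = x' := by
      by_contra hne
      have hτ : x - x' ≠ 0 := sub_ne_zero.2 hne
      refine hnk x A hx hA0 hAe hAd hz ⟨(x - x')⁻¹, inv_ne_zero hτ, ?_, ?_⟩
      · rw [inv_pow, sub_pow_expChar_pow, hx, hx']
        congr 1; ring
      · have h1 : (A - A ^ p ^ j + e) * (x - x') ^ p ^ i = σ * (x - x') := by
          rw [sub_pow_expChar_pow]
          linear_combination hz - hz'
        rw [inv_pow]
        have := pow_ne_zero (p ^ i) hτ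
        field_simp
        linear_combination -h1
    subst hxx
    exact Prod.ext rfl (hA'.trans hA.symm).symm

/-! ### Choice of parameters and existence of `t` -/

/-- The parameters of the auxiliary function. The four degree conditions are those of `stepanov`
with `m = r` and `p ^ μ = q r`; the last inequality makes the count of points on the two curves
exceed the size of the conic. -/
theorem exists_params {q r E : ℕ} (hq : 2 ≤ q) (hqr : q ≤ r) (hE : r ^ 3 ≤ E)
    (hpar : Even (q * r + r)) :
    ∃ u k, r ≤ u ∧ r ≤ k + 1 ∧ 2 * u < E ∧
      2 * (q * r) * u + (2 * k + 3 - r) < (2 * u + 2 - r) * (2 * k + 3 - r) ∧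
      (q - 1) * (q * r * E + 1) + q * (2 * u + E * (2 * k + 1)) < 2 * q * (q * r * E) := by
  obtain ⟨c, hc⟩ := hpar
  obtain ⟨r', rfl⟩ : ∃ r', r = r' + 1 := ⟨r - 1, by omega⟩
  obtain ⟨q', rfl⟩ : ∃ q', q = q' + 1 := ⟨q - 1, by omega⟩
  have hc0 : 1 ≤ c := by
    by_contra h
    have : c = 0 := by omega
    subst this
    nlinarith
  obtain ⟨k, rfl⟩ : ∃ k, c = k + 1 := ⟨c - 1, by omega⟩
  set M := (q' + 1) * (r' + 1) with hM
  set u := r' * (M + 1) / 2 + 1 with hu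
  have hM2 : 2 * (r' + 1) ≤ M := Nat.mul_le_mul_right _ hq
  have hu1 : r' * (M + 1) < 2 * u := by omega
  have hu2 : 2 * u ≤ r' * (M + 1) + 2 := by omega
  have hk : 2 * k + 3 - (r' + 1) = M + 1 := by omega
  have hru : r' + 1 ≤ u := by nlinarith
  have hMr : M ≤ (r' + 1) ^ 2 := by rw [sq]; exact Nat.mul_le_mul_right _ hqr
  have huE : 2 * u < E := by
    have : r' * (M + 1) ≤ r' * ((r' + 1) ^ 2 + 1) := Nat.mul_le_mul_left _ (by omega)
    nlinarith
  refine ⟨u, k, hru, by omega, huE, ?_, ?_⟩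
  · rw [hk]
    obtain ⟨w, hw⟩ : ∃ w, 2 * u + 2 - (r' + 1) = w := ⟨_, rfl⟩
    rw [hw]
    have : 2 * u + 1 = w + r' := by omega
    nlinarith
  · have h2 : 2 * k + 1 = M + r' := by omega
    rw [h2, Nat.add_sub_cancel]
    have h3 : (q' + 1) * E * (r' + 1) = M * E := by rw [hM]; ring
    have h4 : (q' + 1) * (2 * u + 1) ≤ (q' + 1) * E := Nat.mul_le_mul_left _ huE
    nlinarith

set_option maxHeartbeats 1000000 in
/-- The key step: the two Stepanov bounds and the two point counts on the conic are
contradictory unless the equation for `t` is solvable. -/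
theorem exists_t {K : Type*} [Field K] [Fintype K] {p f n s : ℕ} [ExpChar K p] (hp : 1 < p)
    (hf : 0 < f) (hs : 0 < s) (hn : 4 * s + 1 ≤ n) (hgcd : Nat.gcd n s = 1)
    (hK : Fintype.card K = p ^ (2 * (f * n))) {d : K} (hd0 : d ≠ 0) (hd1 : d ≠ 1)
    (hdQ : d ^ p ^ (f * n) = d) :
    ∃ t : K, t ^ p ^ (f * n) ≠ t ∧ t ^ p ^ (f * s) - t ≠ 0 ∧
      t ^ p ^ (f * s) - t ^ p ^ (f * n) ≠ 0 ∧
      (t ^ p ^ (f * s) - t) ^ (p ^ (f * n) + 1) =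
        d * (t ^ p ^ (f * s) - t ^ p ^ (f * n)) ^ (p ^ (f * n) + 1) := by
  classical
  by_contra hno
  push Not at hno
  have hfn : 0 < f * n := Nat.mul_pos hf (by omega)
  have hKK : Fintype.card K = p ^ (f * n) * p ^ (f * n) := by rw [hK, two_mul, pow_add]
  have hσσ : ∀ x : K, (x ^ p ^ (f * n)) ^ p ^ (f * n) = x := by
    intro x; rw [← pow_mul, ← hKK, FiniteField.pow_card]
  have hq2 : 2 ≤ p ^ f := Nat.one_lt_pow hf.ne' hp
  have hqr : p ^ f ≤ p ^ (f * s) := Nat.pow_le_pow_right (by omega) (Nat.le_mul_of_pos_right _ hs)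
  have hr2 : 2 ≤ p ^ (f * s) := hq2.trans hqr
  have hE : (p ^ (f * s)) ^ 3 ≤ p ^ (f * (n - s - 1)) := by
    rw [← pow_mul, mul_assoc]
    exact Nat.pow_le_pow_right (by omega) (Nat.mul_le_mul_left _ (by omega))
  have hM : p ^ (f * (s + 1)) = p ^ f * p ^ (f * s) := by rw [← pow_add]; ring_nf
  have hsum : f * (s + 1) + f * (n - s - 1) = f * n := by
    rw [← mul_add]; congr 1; omega
  have hQE : p ^ (f * n) = p ^ f * p ^ (f * s) * p ^ (f * (n - s - 1)) := by
    rw [← hM, ← pow_add, hsum]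
  have hpar : Even (p ^ f * p ^ (f * s) + p ^ (f * s)) := by
    rcases Nat.even_or_odd p with h | h
    · exact Even.add ((h.pow_of_ne_zero hf.ne').mul_right _)
        (h.pow_of_ne_zero (Nat.mul_pos hf hs).ne')
    · exact Odd.add_odd (h.pow.mul h.pow) h.pow
  obtain ⟨u, k, hru, hrk, huE, hdim, hfin⟩ := exists_params hq2 hqr hE hpar
  rw [← hM] at hdim
  rw [← hQE] at hfin
  have hcq := card_fixed (K := K) hp hf hK (Dvd.intro_left _ (by ring : 2 * n * f = 2 * (f * n)))
  have hcQ := card_fixed (K := K) hp hfn hK (Dvd.intro_left _ rfl)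
  -- an element outside the subfield of order `Q`
  obtain ⟨ω, hω⟩ : ∃ ω : K, ω ^ p ^ (f * n) ≠ ω := by
    by_contra hall
    push Not at hall
    rw [Finset.filter_true_of_mem fun x _ => hall x, Finset.card_univ, hKK] at hcQ
    have : 1 < p ^ (f * n) := Nat.one_lt_pow hfn.ne' hp
    nlinarith
  obtain ⟨e, hedef⟩ : ∃ e, e = ω - ω ^ p ^ (f * n) := ⟨_, rfl⟩
  have he : e ≠ 0 := by rw [hedef]; exact sub_ne_zero.2 hω.symm
  have heQ : e ^ p ^ (f * n) = -e := by rw [hedef, sub_pow_expChar_pow, hσσ]; ring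
  obtain ⟨σ, hσdef⟩ : ∃ σ, σ = e ^ p ^ (f * s) := ⟨_, rfl⟩
  have hσ0 : σ ≠ 0 := by rw [hσdef]; exact pow_ne_zero _ he
  have hneg : ∀ x : K, ∀ i, (-x) ^ p ^ i = -x ^ p ^ i := by
    intro x i
    have := sub_pow_expChar_pow 0 x i (p := p)
    rwa [zero_pow (pow_ne_zero _ (by omega)), zero_sub, zero_sub] at this
  have hσQ : σ ^ p ^ (f * n) = -σ := by
    rw [hσdef, ← pow_mul, mul_comm, pow_mul, heQ, hneg]
  have hd1' : 1 - d ≠ 0 := sub_ne_zero.2 hd1.symm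
  obtain ⟨κ, hκdef⟩ : ∃ κ, κ = -(d * (e * σ)) / (1 - d) := ⟨_, rfl⟩
  have hκ0 : κ ≠ 0 := by
    rw [hκdef]; exact div_ne_zero (neg_ne_zero.2 (mul_ne_zero hd0 (mul_ne_zero he hσ0))) hd1'
  have hκ : κ = d * (κ - e * σ) := by rw [hκdef]; field_simp; ring
  have hκe : κ ≠ e * σ := by
    intro h
    rw [h, sub_self, mul_zero] at hκ
    exact mul_ne_zero he hσ0 hκ
  have hκQ : κ ^ p ^ (f * n) = κ := by
    rw [hκdef, div_pow, hneg, mul_pow, mul_pow, hdQ, heQ, hσQ, sub_pow_expChar_pow, one_pow, hdQ]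
    ring
  -- the set `x ^ Q = x - e` is a coset of the subfield of order `Q`
  have hcS : (Finset.univ.filter fun x : K => x ^ p ^ (f * n) = x - e).card = p ^ (f * n) := by
    refine Eq.trans ?_ hcQ
    refine Finset.card_bij (fun x _ => x - ω) ?_ ?_ ?_
    · intro x hx
      simp only [Finset.mem_filter, Finset.mem_univ, true_and] at hx ⊢
      rw [sub_pow_expChar_pow, hx, hedef]; ring
    · intro x _ y _ h
      exact sub_left_injective h
    · intro y hy
      simp only [Finset.mem_filter, Finset.mem_univ, true_and] at hy
      refine ⟨y + ω, ?_, by ring⟩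
      simp only [Finset.mem_filter, Finset.mem_univ, true_and]
      rw [add_pow_expChar_pow, hy, hedef]; ring
  have hr1 : ∀ x : K, ∀ i j, (x ^ i) ^ j = (x ^ j) ^ i := by
    intro x i j; rw [← pow_mul, mul_comm, pow_mul]
  -- lower bounds for the twisted rational points of the two covers
  have hC := two_roots_sum hp hKK (Finset.univ.filter fun v : K => v ^ p ^ (f * n) = v)
    (β := fun v => σ * v ^ (p ^ (f * s) - 1) - e) (γ := fun v => -κ * v ^ (p ^ (f * s) - 1))
    (k0 := 0) (zero_pow (pow_ne_zero _ (by omega)))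
    (by
      intro v hv
      have hv' := (Finset.mem_filter.1 hv).2
      rw [sub_pow_expChar_pow, mul_pow, hr1 v, hv', heQ, hσQ]; ring)
    (by
      intro v hv
      have hv' := (Finset.mem_filter.1 hv).2
      rw [mul_pow, hr1 v, hv', hneg, hκQ]; ring)
  have hY := two_roots_sum hp hKK (Finset.univ.filter fun x : K => x ^ p ^ (f * n) = x - e)
    (β := fun x => κ + σ * x - e * x ^ p ^ (f * s)) (γ := fun x => -κ * x * (x ^ p ^ (f * s) - σ))
    (k0 := κ) hκQ
    (by
      intro x hx
      have hx' := (Finset.mem_filter.1 hx).2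
      rw [sub_pow_expChar_pow, add_pow_expChar_pow, mul_pow, mul_pow, hr1 x, hx', heQ, hσQ, hκQ,
        sub_pow_expChar_pow, ← hσdef]; ring)
    (by
      intro x hx
      have hx' := (Finset.mem_filter.1 hx).2
      rw [mul_pow, mul_pow, sub_pow_expChar_pow, hr1 x, hx', hσQ, hneg, hκQ,
        sub_pow_expChar_pow, ← hσdef]; ring)
  rw [hcQ] at hC
  rw [hcS] at hY
  have hFC := card_curveC_le hgcd hcq hr2 he heQ hκ hσ0
  have hFY := card_curveY_le he heQ hσdef hκ hκ0 hno
  have hcon := card_conic_le (K := K) hd1 heQ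
  rw [← Finset.card_filter_add_card_filter_not (s := conic (p ^ (f * n)) d e)
    (IsKummer (p ^ (f * n)) (p ^ (f * s)) e σ)] at hcon
  have hXY : (X ^ p ^ (f * s) - C σ : K[X]) = (X - C e) ^ p ^ (f * s) := by
    have : ExpChar K[X] p := expChar_of_injective_ringHom (C_injective (R := K)) p
    rw [sub_pow_expChar_pow, hσdef, C_pow]
  have hSC := stepanov (L := K) (p := p) (b := C σ * X ^ (p ^ (f * s) - 1) - C e)
    (c := -C κ * X ^ (p ^ (f * s) - 1)) (m := p ^ (f * s)) (u := u) (k := k) (μ := f * (s + 1))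
    (ν := f * (n - s - 1)) (by omega)
    ((natDegree_sub_C (R := K)).trans_le ((natDegree_C_mul_X_pow_le _ _).trans (by omega)))
    (by
      rw [← C_neg]
      exact (natDegree_C_mul_X_pow_le _ _).trans (by omega))
    (by
      simp only [eval_sub, eval_mul, eval_pow, eval_X, eval_C]
      rw [zero_pow (by omega), mul_zero, zero_sub]
      exact neg_ne_zero.2 he)
    (by
      simp only [eval_neg, eval_mul, eval_pow, eval_X, eval_C]
      rw [zero_pow (by omega), mul_zero])
    (irrC (by omega) he hκ0 hκe) hru hrk huE hdim (by rw [hsum]; exact hσσ) 0 0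
    (Finset.univ.filter fun P : K × K => P.1 ∈ Finset.univ.filter (fun v : K => v ^ p ^ (f * n) = v) ∧
      P.2 ^ 2 - (σ * P.1 ^ (p ^ (f * s) - 1) - e) * P.2 + -κ * P.1 ^ (p ^ (f * s) - 1) = 0 ∧
      P.2 ^ p ^ (f * n) = 0 - P.2)
    (by
      rintro ⟨x, y⟩ hP
      simp only [Finset.mem_filter, Finset.mem_univ, true_and] at hP
      rw [hsum, sub_zero]
      refine ⟨hP.1, hP.2.2, ?_⟩
      simpa using hP.2.1)
  have hSY := stepanov (L := K) (p := p) (b := C κ + C σ * X - C e * X ^ p ^ (f * s))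
    (c := -C κ * X * (X ^ p ^ (f * s) - C σ)) (m := p ^ (f * s)) (u := u) (k := k)
    (μ := f * (s + 1)) (ν := f * (n - s - 1)) (by omega)
    (by compute_degree; omega)
    (by
      refine natDegree_mul_le.trans ?_
      have h1 : (-C κ * X : K[X]).natDegree ≤ 1 := by compute_degree
      have h2 : (X ^ p ^ (f * s) - C σ : K[X]).natDegree ≤ p ^ (f * s) := by compute_degree
      omega)
    (by
      simp only [eval_sub, eval_add, eval_mul, eval_pow, eval_X, eval_C]
      rw [zero_pow (by omega), mul_zero, mul_zero, add_zero, sub_zero]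
      exact hκ0)
    (by simp)
    (irrY hr2 hσdef hκ0 hκe hXY) hru hrk huE hdim (by rw [hsum]; exact hσσ) e κ
    (Finset.univ.filter fun P : K × K =>
      P.1 ∈ Finset.univ.filter (fun x : K => x ^ p ^ (f * n) = x - e) ∧
      P.2 ^ 2 - (κ + σ * P.1 - e * P.1 ^ p ^ (f * s)) * P.2 + -κ * P.1 * (P.1 ^ p ^ (f * s) - σ) = 0 ∧
      P.2 ^ p ^ (f * n) = κ - P.2)
    (by
      rintro ⟨x, y⟩ hP
      simp only [Finset.mem_filter, Finset.mem_univ, true_and] at hP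
      rw [hsum]
      refine ⟨hP.1, hP.2.2, ?_⟩
      simpa using hP.2.1)
  have h1 := hC.trans (add_le_add hSC hFC)
  have h2 := hY.trans (add_le_add hSY hFY)
  generalize ((conic (p ^ (f * n)) d e).filter
    (IsKummer (p ^ (f * n)) (p ^ (f * s)) e σ)).card = N1 at *
  generalize ((conic (p ^ (f * n)) d e).filter
    (fun A => ¬ IsKummer (p ^ (f * n)) (p ^ (f * s)) e σ A)).card = N2 at *
  generalize p ^ (f * n) = Q at *
  obtain ⟨q', hq'⟩ : ∃ q', p ^ f = q' + 1 := ⟨p ^ f - 1, by omega⟩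
  rw [hq', Nat.add_sub_cancel] at h1 hfin
  generalize 2 * u + p ^ (f * (n - s - 1)) * (2 * k + 1) = B at h1 h2 hfin
  -- add the bound for the first curve to `q - 1` times the bound for the second one
  have h3 := Nat.mul_le_mul_left q' h2
  have h4 := Nat.mul_le_mul_left q' hcon
  nlinarith

/-! ### From `t` to `a` -/

/-- A solution `t` of the norm equation makes `x` and `t x` two independent kernel elements for a
suitable `x` given by Hilbert's Theorem 90; the kernel is then exactly their `F_q`-span. -/
theorem kernel_card {K : Type*} [Field K] [Fintype K] {p f n s : ℕ} [ExpChar K p] (hp : 1 < p)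
    (hf : 0 < f) (hgcd : Nat.gcd n s = 1)
    (hK : Fintype.card K = p ^ (2 * (f * n))) {δ t : K} (hδ0 : δ ≠ 0)
    (hδ1 : δ ^ (p ^ (f * n) + 1) ≠ 1) (htQ : t ^ p ^ (f * n) ≠ t)
    (hR : t ^ p ^ (f * s) - t ^ p ^ (f * n) ≠ 0)
    (ht : (t ^ p ^ (f * s) - t) ^ (p ^ (f * n) + 1) =
        δ ^ (p ^ (f * n) + 1) * (t ^ p ^ (f * s) - t ^ p ^ (f * n)) ^ (p ^ (f * n) + 1)) :
    ∃ a : K, a ≠ 0 ∧ Nat.card {x : K // x + a * x ^ p ^ (f * s) +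
      δ * a * x ^ p ^ (f * (n + s)) = 0} = (p ^ f) ^ 2 := by
  classical
  have hσσ : ∀ x : K, (x ^ p ^ (f * n)) ^ p ^ (f * n) = x := by
    intro x
    rw [← pow_mul, ← pow_add, ← two_mul, ← hK, FiniteField.pow_card]
  have hneg1 : (-1 : K) ^ p ^ (f * n) = -1 := by
    have := sub_pow_expChar_pow (R := K) 0 1 (f * n) (p := p)
    rwa [zero_pow (pow_ne_zero _ (by omega)), one_pow, zero_sub] at this
  have hsplit : ∀ x : K, x ^ p ^ (f * (n + s)) = (x ^ p ^ (f * s)) ^ p ^ (f * n) := by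
    intro x; rw [mul_add, pow_add, mul_comm, pow_mul]
  simp only [hsplit]
  obtain ⟨g, hg⟩ : ∃ g, δ * (t ^ p ^ (f * s) - t ^ p ^ (f * n)) ^ p ^ (f * n) * g =
      -(t ^ p ^ (f * s) - t) :=
    ⟨-(t ^ p ^ (f * s) - t) / (δ * (t ^ p ^ (f * s) - t ^ p ^ (f * n)) ^ p ^ (f * n)), by
      field_simp⟩
  have hgg : g ^ p ^ (f * n) * g = 1 := by
    have h1 := congrArg (fun z => z ^ p ^ (f * n) * z) hg
    simp only [mul_pow, hσσ] at h1
    rw [neg_eq_neg_one_mul, mul_pow, hneg1, ← neg_eq_neg_one_mul] at h1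
    rw [pow_succ, pow_succ, pow_succ] at ht
    have h2 : δ ^ p ^ (f * n) * δ * ((t ^ p ^ (f * s) - t ^ p ^ (f * n)) ^ p ^ (f * n) *
        (t ^ p ^ (f * s) - t ^ p ^ (f * n))) ≠ 0 :=
      mul_ne_zero (mul_ne_zero (pow_ne_zero _ hδ0) hδ0) (mul_ne_zero (pow_ne_zero _ hR) hR)
    apply mul_left_cancel₀ h2
    linear_combination h1 + ht
  have hg0 : g ≠ 0 := right_ne_zero_of_mul (hgg ▸ one_ne_zero)
  -- Hilbert 90 for `g` of norm `1`
  obtain ⟨y, hy0, hyQ⟩ : ∃ y : K, y ≠ 0 ∧ y ^ p ^ (f * n) = g * y := by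
    obtain ⟨c, hc⟩ : ∃ c : K, g * c + c ^ p ^ (f * n) ≠ 0 := by
      by_contra hall
      push Not at hall
      have h1 := hall 1
      have h2 := hall t
      rw [one_pow, mul_one] at h1
      exact htQ (by linear_combination h2 - t * h1)
    refine ⟨c + g ^ p ^ (f * n) * c ^ p ^ (f * n), ?_, ?_⟩
    · intro h
      exact hc (by linear_combination g * h - c ^ p ^ (f * n) * hgg)
    · rw [add_pow_expChar_pow, mul_pow, hσσ, hσσ]
      linear_combination -c ^ p ^ (f * n) * hgg
  obtain ⟨x, rfl⟩ : ∃ x : K, x ^ p ^ (f * s) = y :=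
    Finite.injective_iff_surjective.1 (iterateFrobenius_inj K p (f * s)) y
  have hx0 : x ≠ 0 := by
    rintro rfl
    exact hy0 (zero_pow (pow_ne_zero _ (by omega)))
  generalize hydef : x ^ p ^ (f * s) = y at *
  have hφ : y + δ * y ^ p ^ (f * n) ≠ 0 := by
    intro h
    have h1 := congrArg (fun z => z ^ p ^ (f * n)) h
    simp only [add_pow_expChar_pow, mul_pow, hσσ] at h1
    rw [zero_pow (pow_ne_zero _ (by omega))] at h1
    apply hδ1
    apply mul_right_cancel₀ hy0
    rw [pow_succ]
    linear_combination δ * h1 - h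
  have htφ : t ^ p ^ (f * s) * y + δ * ((t ^ p ^ (f * s)) ^ p ^ (f * n) * y ^ p ^ (f * n)) =
      t * (y + δ * y ^ p ^ (f * n)) := by
    rw [sub_pow_expChar_pow, hσσ] at hg
    rw [hyQ]
    linear_combination y * hg
  have hindep : ∀ α β : K, α ^ p ^ (f * n) = α → β ^ p ^ (f * n) = β → α + β * t = 0 →
      α = 0 ∧ β = 0 := by
    intro α β hα hβ h
    have h1 := congrArg (fun z => z ^ p ^ (f * n)) h
    simp only [add_pow_expChar_pow, mul_pow, hα, hβ] at h1
    rw [zero_pow (pow_ne_zero _ (by omega))] at h1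
    have hb : β = 0 := by
      have h2 : β * (t ^ p ^ (f * n) - t) = 0 := by linear_combination h1 - h
      exact (mul_eq_zero.1 h2).resolve_right (sub_ne_zero.2 htQ)
    refine ⟨?_, hb⟩
    rw [hb] at h
    linear_combination h
  have hker : ∀ α β : K, α ^ p ^ (f * n) = α → β ^ p ^ (f * n) = β →
      ((α + β * t) * x + -x / (y + δ * y ^ p ^ (f * n)) * ((α + β * t) * x) ^ p ^ (f * s) +
        δ * (-x / (y + δ * y ^ p ^ (f * n))) *
          (((α + β * t) * x) ^ p ^ (f * s)) ^ p ^ (f * n) = 0 ↔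
        α ^ p ^ (f * s) = α ∧ β ^ p ^ (f * s) = β) := by
    intro α β hα hβ
    have hsw : ∀ c : K, c ^ p ^ (f * n) = c →
        (c ^ p ^ (f * s)) ^ p ^ (f * n) = c ^ p ^ (f * s) := by
      intro c hc; rw [← pow_mul, mul_comm, pow_mul, hc]
    have hval : (α + β * t) * x + -x / (y + δ * y ^ p ^ (f * n)) *
        ((α + β * t) * x) ^ p ^ (f * s) + δ * (-x / (y + δ * y ^ p ^ (f * n))) *
          (((α + β * t) * x) ^ p ^ (f * s)) ^ p ^ (f * n) =
        x * ((α - α ^ p ^ (f * s)) + (β - β ^ p ^ (f * s)) * t) := by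
      simp only [mul_pow, add_pow_expChar_pow, hydef, hsw α hα, hsw β hβ]
      generalize hφd : y + δ * y ^ p ^ (f * n) = φ at *
      field_simp
      linear_combination -α ^ p ^ (f * s) * hφd - β ^ p ^ (f * s) * htφ
    rw [hval]
    constructor
    · intro h
      have h' := (mul_eq_zero.1 h).resolve_left hx0
      have := hindep _ _ (by rw [sub_pow_expChar_pow, hα, hsw α hα])
        (by rw [sub_pow_expChar_pow, hβ, hsw β hβ]) h'
      exact ⟨(sub_eq_zero.1 this.1).symm, (sub_eq_zero.1 this.2).symm⟩
    · rintro ⟨h1, h2⟩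
      rw [h1, h2]; ring
  have hqQ : ∀ m, ∀ c : K, c ^ p ^ f = c → c ^ p ^ (f * m) = c := by
    intro m c hc
    induction m with
    | zero => simp
    | succ m ih => rw [mul_add, mul_one, pow_add, pow_mul, ih, hc]
  refine ⟨-x / (y + δ * y ^ p ^ (f * n)), div_ne_zero (neg_ne_zero.2 hx0) hφ, ?_⟩
  have hF : Nat.card {c : K // c ^ p ^ f = c} = p ^ f := by
    rw [Nat.card_eq_fintype_card, Fintype.card_subtype]
    exact card_fixed hp hf hK (Dvd.intro_left _ (by ring : 2 * n * f = 2 * (f * n)))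
  rw [sq]
  conv_rhs => rw [← hF]
  rw [← Nat.card_prod]
  symm
  refine Nat.card_eq_of_bijective (fun αβ => ⟨(αβ.1.1 + αβ.2.1 * t) * x,
    (hker _ _ (hqQ n _ αβ.1.2) (hqQ n _ αβ.2.2)).2
      ⟨hqQ s _ αβ.1.2, hqQ s _ αβ.2.2⟩⟩) ⟨?_, ?_⟩
  · rintro ⟨⟨α, hα⟩, ⟨β, hβ⟩⟩ ⟨⟨α', hα'⟩, ⟨β', hβ'⟩⟩ h
    simp only [Subtype.mk.injEq] at h
    have h1 := mul_right_cancel₀ hx0 h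
    obtain ⟨h2, h3⟩ := hindep (α - α') (β - β')
      (by rw [sub_pow_expChar_pow, hqQ n _ hα, hqQ n _ hα'])
      (by rw [sub_pow_expChar_pow, hqQ n _ hβ, hqQ n _ hβ'])
      (by linear_combination h1)
    rw [Prod.mk.injEq, Subtype.mk.injEq, Subtype.mk.injEq]
    exact ⟨sub_eq_zero.1 h2, sub_eq_zero.1 h3⟩
  · rintro ⟨w, hw⟩
    -- coordinates of `w / x` in the basis `1, t` over the subfield of order `q ^ n`
    obtain ⟨c, rfl⟩ : ∃ c, w = c * x := ⟨w / x, by field_simp⟩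
    have htt : t - t ^ p ^ (f * n) ≠ 0 := sub_ne_zero.2 htQ.symm
    obtain ⟨β, hβ⟩ : ∃ β, β * (t - t ^ p ^ (f * n)) = c - c ^ p ^ (f * n) :=
      ⟨(c - c ^ p ^ (f * n)) / (t - t ^ p ^ (f * n)), by field_simp⟩
    have hβQ : β ^ p ^ (f * n) = β := by
      have := congrArg (fun z => z ^ p ^ (f * n)) hβ
      simp only [mul_pow, sub_pow_expChar_pow, hσσ] at this
      apply mul_right_cancel₀ htt
      linear_combination -this - hβ
    obtain ⟨α, hα⟩ : ∃ α, c = α + β * t := ⟨c - β * t, by ring⟩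
    have hαQ : α ^ p ^ (f * n) = α := by
      have : α = c - β * t := by rw [hα]; ring
      rw [this, sub_pow_expChar_pow, mul_pow, hβQ]
      linear_combination hβ
    rw [hα] at hw
    obtain ⟨h1, h2⟩ := (hker α β hαQ hβQ).1 hw
    refine ⟨(⟨α, fix_gcd (q := p ^ f) hgcd ?_ ?_⟩, ⟨β, fix_gcd (q := p ^ f) hgcd ?_ ?_⟩), ?_⟩
    · rw [← pow_mul]; exact hαQ
    · rw [← pow_mul]; exact h1
    · rw [← pow_mul]; exact hβQ
    · rw [← pow_mul]; exact h2
    · simp only [hα]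

/-- For `q = pʰ` and `δ ≠ 0` with norm different from `1`, some `f_{a,δa,s}` with `a ≠ 0` has a kernel
with `q²` elements, that is, of `F_q`-dimension `2`. -/
theorem stmt_0 (p h q n s : ℕ) (hp : p.Prime) (hh : 0 < h) (hq : q = p ^ h)
    (hn : 0 < n) (hs : 0 < s) (hgcd : Nat.gcd n s = 1)
    (hbound1 : (q = 3 ∧ 1 < s) ∨ (q = 2 ∧ 2 < s) → 4 * s + 2 ≤ n)
    (hbound2 : ¬((q = 3 ∧ 1 < s) ∨ (q = 2 ∧ 2 < s)) → 4 * s + 1 ≤ n)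
    (K : Type*) [Field K] [Fintype K] (hK : Fintype.card K = q ^ (2 * n))
    (δ : K) (hδ0 : δ ≠ 0) (hδN : δ ^ (q ^ n + 1) ≠ 1) :
    ∃ a : K, a ≠ 0 ∧
      Nat.card {x : K // x + a * x ^ q ^ s + δ * a * x ^ q ^ (n + s) = 0} = q ^ 2 := by
  have hns : 4 * s + 1 ≤ n := by
    by_cases hc : (q = 3 ∧ 1 < s) ∨ (q = 2 ∧ 2 < s)
    · exact (hbound1 hc).trans' (by omega)
    · exact hbound2 hc
  subst hq
  have hK' : Fintype.card K = p ^ (2 * (h * n)) := by rw [hK, ← pow_mul]; ring_nf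
  have hchar : CharP K p := by
    have : Fact p.Prime := ⟨hp⟩
    exact charP_of_card_eq_prime_pow hK'
  have hexp : ExpChar K p := ExpChar.prime hp
  simp only [← pow_mul] at hδN ⊢
  have hδQ : (δ ^ (p ^ (h * n) + 1)) ^ p ^ (h * n) = δ ^ (p ^ (h * n) + 1) := by
    rw [← pow_mul, add_mul, one_mul, ← pow_add p, ← two_mul, ← hK', pow_add, FiniteField.pow_card,
      pow_succ, mul_comm]
  obtain ⟨t, h1, -, h3, h4⟩ := exists_t hp.one_lt hh hs hns hgcd hK' (pow_ne_zero _ hδ0) hδN hδQ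
  have := kernel_card hp.one_lt hh hgcd hK' hδ0 hδN h1 h3 h4
  rwa [← pow_mul] at this
end

section
/- Let q be a prime power, n, s positive integers with gcd(n,s) = 1 and s < 2n, and δ ∈ F_{q^{2n}}. If there exists a ∈ F_{q^{2n}} such that dim_{F_q} ker f_{a,δa,s} = 2, then for every δ′ ∈ F_{q^{2n}} with N_{q^{2n}/q^n}(δ′) = N_{q^{2n}/q^n}(δ) there exists a′ ∈ F_{q^{2n}} such that dim_{F_q} ker f_{a′,δ′a′,s} = 2. -/
/-!
Rescaling the variable, `x ↦ c * x` with `c ≠ 0`, identifies the kernel of `f_{a',δ'a',s}` with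
that of `f_{a,δa,s}` when `a' = a * c ^ (q ^ s - 1)` and `δ' = δ * (c ^ (q ^ n - 1)) ^ (q ^ s)`.
For `δ ≠ 0` the quotient `u = δ' / δ` has relative norm `1`. It is the `q ^ s`-power of an element
`w`, again of norm `1`, and by Hilbert 90 (`exists_pow_eq_mul_of_pow_eq_one`, read off from a
generator of the cyclic group `Kˣ`) `w = c ^ (q ^ n - 1)` for some `c ≠ 0`.
-/

/-- Hilbert 90 for `F_{Q²}` over `F_Q`: an element of norm `1` is of the form `c ^ (Q - 1)`. -/
theorem exists_pow_eq_mul_of_pow_eq_one {K : Type*} [Field K] [Fintype K] {Q : ℕ} (hQ : 0 < Q)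
    (hK : Fintype.card K = Q ^ 2) {w : K} (hw : w ^ (Q + 1) = 1) :
    ∃ c : K, c ≠ 0 ∧ c ^ Q = c * w := by
  have hw0 : w ≠ 0 := by
    rintro rfl
    simp at hw
  obtain ⟨g, hg⟩ := IsCyclic.exists_monoid_generator (α := Kˣ)
  obtain ⟨m, rfl⟩ : ∃ m, Q = m + 1 := ⟨Q - 1, by omega⟩
  have hord : orderOf g = m * (m + 1 + 1) := by
    rw [orderOf_eq_card_of_forall_mem_powers hg, Nat.card_units, Nat.card_eq_fintype_card, hK]
    apply Nat.sub_eq_of_eq_add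
    ring
  obtain ⟨k, hk⟩ := hg (Units.mk0 w hw0)
  replace hk : g ^ k = Units.mk0 w hw0 := hk
  have hdvd : m * (m + 1 + 1) ∣ k * (m + 1 + 1) := by
    rw [← hord, orderOf_dvd_iff_pow_eq_one, pow_mul, hk]
    ext
    simpa using hw
  obtain ⟨j, rfl⟩ := Nat.dvd_of_mul_dvd_mul_right (by omega) hdvd
  have hw' : w = (g : K) ^ (m * j) := by
    have := congrArg Units.val hk
    simpa using this.symm
  refine ⟨(g : K) ^ j, pow_ne_zero _ g.ne_zero, ?_⟩
  rw [hw']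
  ring

/-- If the kernel of `f_{a,δa,s}` has `F_q`-dimension `2` for some `a`, then for every `δ'`
with the same norm over `F_{qⁿ}` there is `a'` such that the kernel of `f_{a',δ'a',s}` has
`F_q`-dimension `2`.  (Dimension `2` over `F_q` is expressed as the kernel having `q²`
elements.) -/
theorem stmt_1 (p h q n s : ℕ) (hp : p.Prime) (hh : 0 < h) (hq : q = p ^ h)
    (hn : 0 < n) (hs : 0 < s) (hgcd : Nat.gcd n s = 1) (hs2n : s < 2 * n)
    (K : Type*) [Field K] [Fintype K] (hK : Fintype.card K = q ^ (2 * n))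
    (δ : K)
    (hex : ∃ a : K,
      Nat.card {x : K // x + a * x ^ q ^ s + δ * a * x ^ q ^ (n + s) = 0} = q ^ 2) :
    ∀ δ' : K, δ' ^ (q ^ n + 1) = δ ^ (q ^ n + 1) →
      ∃ a' : K,
        Nat.card {x : K // x + a' * x ^ q ^ s + δ' * a' * x ^ q ^ (n + s) = 0} = q ^ 2 := by
  intro δ' hδ
  obtain ⟨a, ha⟩ := hex
  have hq0 : 0 < q := hq ▸ pow_pos hp.pos h
  rcases eq_or_ne δ 0 with rfl | hδ0
  · have : δ' = 0 := by
      rw [zero_pow (by omega)] at hδ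
      exact eq_zero_of_pow_eq_zero hδ
    subst this
    exact ⟨a, ha⟩
  obtain ⟨u, rfl⟩ : ∃ u, δ' = δ * u := ⟨δ' / δ, by field_simp⟩
  have hu : u ^ (q ^ n + 1) = 1 := by
    rw [mul_pow] at hδ
    exact mul_left_cancel₀ (pow_ne_zero _ hδ0) (by rw [hδ, mul_one])
  -- `w` is the `q ^ s`-th root of `u`, since `x ↦ x ^ q ^ (2 * n)` is the identity.
  obtain ⟨w, hwu, hw⟩ : ∃ w : K, w ^ q ^ s = u ∧ w ^ (q ^ n + 1) = 1 := by
    refine ⟨u ^ q ^ (2 * n - s), ?_, ?_⟩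
    · rw [← pow_mul, ← pow_add, Nat.sub_add_cancel hs2n.le, ← hK, FiniteField.pow_card]
    · rw [← pow_mul, mul_comm, pow_mul, hu, one_pow]
  obtain ⟨c, hc0, hc⟩ := exists_pow_eq_mul_of_pow_eq_one (pow_pos hq0 n)
    (by rw [hK, ← pow_mul, mul_comm]) hw
  have hcs : c ^ q ^ (n + s) = c ^ q ^ s * u := by
    rw [pow_add, pow_mul, hc, mul_pow, hwu]
  refine ⟨a * c ^ q ^ s / c, ?_⟩
  rw [← ha]
  refine Nat.card_congr ((Equiv.mulLeft₀ c hc0).subtypeEquiv fun x => ?_)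
  have key : c * x + a * (c * x) ^ q ^ s + δ * a * (c * x) ^ q ^ (n + s) =
      c * (x + a * c ^ q ^ s / c * x ^ q ^ s +
        δ * u * (a * c ^ q ^ s / c) * x ^ q ^ (n + s)) := by
    rw [mul_pow, mul_pow, hcs]
    field_simp
  rw [Equiv.mulLeft₀_apply, key, mul_eq_zero, or_iff_right hc0]
end

section
/- Let q be a prime power, n, s positive integers with gcd(n,s) = 1, and δ ∈ F_{q^{2n}}. Then there exists a ∈ F_{q^{2n}} with dim_{F_q} ker f_{a,δa,s} = 2 if and only if there exist ξ ∈ F_{q^{2n}} \ F_{q^n} with ξ^{q^n} ≠ ξ^{q^s} and ā ∈ F_{q^{2n}} such that, setting δ̄ = (ξ^{q^{s+n}} − ξ^{q^n})/(ξ^{q^n} − ξ^{q^s}), one has N_{q^{2n}/q^n}(δ̄) = N_{q^{2n}/q^n}(δ) and dim_{F_q} ker f_{ā,δ̄ā,s} = 2. -/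
/-!
Write `σ x = x ^ q ^ s` and `τ x = x ^ q ^ n`, an involution of `K`, and let
`f_{a,δ} x = x + a * σ x + δ * a * σ (τ x)`.  Two substitutions preserve the size of the kernel:

* `x = l * y` with `l ≠ 0` turns `(a, δ)` into `(a * σ l / l, δ * σ (τ l / l))`
  (`card_ker_scale`);
* `x = τ y` turns `(a, δ)` into `(τ a, τ δ)` (`card_ker_conj`).

By Hilbert's theorem 90 for `K` over `F_{qⁿ}` (`exists_pow_eq_mul`) the factor `σ (τ l / l)` runs
through all elements of norm one, so for a kernel of given size only the norm of `δ` matters.  This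
is the direction from `ξ` to `a`.

Conversely, scale by a nonzero element of the kernel, so that the kernel contains `1`.  It has
`q ^ 2 > q` elements, hence also contains some `ξ` outside `F_q`.  The equations for `1` and `ξ` give
`δ * (ξ - σ (τ ξ)) = σ ξ - ξ`, and applying `τ` shows that `τ δ` is the quotient attached
to `ξ`.  If `τ ξ` were equal to `ξ` or to `σ ξ`, the same equations would force `σ ξ = τ ξ = ξ`, that
is `ξ ∈ F_q`, since `n` and `s` are coprime.
-/

/-- The substitution `x = l * y` in `f_{a,δ}`; the new parameters `a'`, `δ'` are given by
cross-multiplied equations. -/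
lemma card_ker_scale {K : Type*} [Field K] (A B : ℕ) (a d a' d' l : K) (hl : l ≠ 0)
    (ha : a' * l = a * l ^ A) (hd : d' * l ^ A = d * l ^ B) :
    Nat.card {x : K // x + a' * x ^ A + d' * a' * x ^ B = 0} =
      Nat.card {x : K // x + a * x ^ A + d * a * x ^ B = 0} := by
  refine Nat.card_congr ((Equiv.mulLeft₀ l hl).subtypeEquiv fun x => ?_)
  have hb : d' * a' * l = d * a * l ^ B := by
    linear_combination d' * ha + a * hd
  have key : (l * x) + a * (l * x) ^ A + d * a * (l * x) ^ B =
      l * (x + a' * x ^ A + d' * a' * x ^ B) := by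
    rw [mul_pow, mul_pow]
    linear_combination (-x ^ A) * ha - x ^ B * hb
  change _ ↔ (l * x) + a * (l * x) ^ A + d * a * (l * x) ^ B = 0
  rw [key]
  simp [hl]

/-- Applying a field automorphism `e` to the parameters of `f_{a,δ}`. -/
lemma card_ker_conj {K : Type*} [Field K] (A B : ℕ) (a d : K) (e : K ≃+* K) :
    Nat.card {x : K // x + e a * x ^ A + e d * e a * x ^ B = 0} =
      Nat.card {x : K // x + a * x ^ A + d * a * x ^ B = 0} := by
  refine (Nat.card_congr (e.toEquiv.subtypeEquiv fun x => ?_)).symm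
  have key : e x + e a * (e x) ^ A + e d * e a * (e x) ^ B =
      e (x + a * x ^ A + d * a * x ^ B) := by simp
  change _ ↔ e x + e a * (e x) ^ A + e d * e a * (e x) ^ B = 0
  rw [key]
  exact (EmbeddingLike.map_eq_zero_iff (f := e)).symm

/-- Hilbert's theorem 90 for the quadratic extension of finite fields with `Q ^ 2` and `Q`
elements, proved with a generator of the cyclic group `Kˣ`. -/
lemma exists_pow_eq_mul {K : Type*} [Field K] [Fintype K] (Q : ℕ) (hQ : 1 < Q)
    (hK : Fintype.card K = Q ^ 2) (u : K) (hu : u ^ (Q + 1) = 1) :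
    ∃ l : K, l ≠ 0 ∧ l ^ Q = u * l := by
  have hu0 : u ≠ 0 := by
    rintro rfl
    simp at hu
  obtain ⟨g, hg⟩ := IsCyclic.exists_generator (α := Kˣ)
  obtain ⟨k, hk⟩ := (mem_powers_iff_mem_zpowers.mpr (hg (Units.mk0 u hu0)))
  have hk' : g ^ k = Units.mk0 u hu0 := hk
  have hord : orderOf g = (Q - 1) * (Q + 1) := by
    rw [orderOf_eq_card_of_forall_mem_zpowers hg, Nat.card_units, Nat.card_eq_fintype_card, hK]
    obtain ⟨r, rfl⟩ : ∃ r, Q = r + 1 := ⟨Q - 1, by omega⟩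
    rw [Nat.add_sub_cancel]
    apply Nat.sub_eq_of_eq_add
    ring
  have h1 : g ^ (k * (Q + 1)) = 1 := by
    rw [pow_mul, hk']
    ext
    simpa using hu
  have h2 : Q - 1 ∣ k :=
    Nat.dvd_of_mul_dvd_mul_right (Nat.succ_pos Q) (hord ▸ orderOf_dvd_of_pow_eq_one h1)
  obtain ⟨j, rfl⟩ := h2
  refine ⟨(g ^ j : Kˣ), Units.ne_zero _, ?_⟩
  have h3 : (g ^ j) ^ Q = Units.mk0 u hu0 * g ^ j := by
    obtain ⟨r, rfl⟩ : ∃ r, Q = r + 1 := ⟨Q - 1, by omega⟩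
    rw [← hk', ← pow_mul, ← pow_add]
    congr 1
    rw [Nat.add_sub_cancel]
    ring
  simpa using congrArg (Units.val) h3

/-- `F_{qⁿ} ∩ F_{qˢ} = F_q` for coprime `n` and `s`, stated for fixed points of Frobenius powers. -/
lemma pow_eq_of_coprime {K : Type*} [Field K] (q n s : ℕ) (hgcd : Nat.gcd n s = 1) (x : K)
    (hxn : x ^ q ^ n = x) (hxs : x ^ q ^ s = x) : x ^ q = x := by
  have h1 : Function.IsPeriodicPt (fun y : K => y ^ q) n x := by
    simpa [Function.IsPeriodicPt, Function.IsFixedPt, pow_iterate] using hxn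
  have h2 : Function.IsPeriodicPt (fun y : K => y ^ q) s x := by
    simpa [Function.IsPeriodicPt, Function.IsFixedPt, pow_iterate] using hxs
  have h3 := h1.gcd h2
  rw [hgcd] at h3
  simpa [Function.IsPeriodicPt, Function.IsFixedPt] using h3

lemma exists_pow_ne {K : Type*} [Field K] [Fintype K] (q : ℕ) (hq : 1 < q) (P : K → Prop)
    (hP : Nat.card {x : K // P x} = q ^ 2) : ∃ x, P x ∧ x ^ q ≠ x := by
  classical
  by_contra! hcon
  have h1 : Nat.card {x : K // P x} ≤ q := by
    rw [Nat.card_eq_fintype_card, Fintype.card_subtype]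
    have hne := FiniteField.X_pow_card_sub_X_ne_zero K hq
    calc (Finset.univ.filter P).card
        ≤ (Polynomial.X ^ q - Polynomial.X : Polynomial K).roots.toFinset.card := by
          apply Finset.card_le_card
          intro x hx
          simp only [Finset.mem_filter, Finset.mem_univ, true_and] at hx
          simp [hne, hcon x hx]
      _ ≤ _ := Multiset.toFinset_card_le _
      _ ≤ _ := Polynomial.card_roots' _
      _ = q := FiniteField.X_pow_card_sub_X_natDegree_eq K hq
  nlinarith


/-- There exists `a` with `dim_{F_q} ker f_{a,δa,s} = 2` iff there exist
`ξ ∈ F_{q^{2n}} \ F_{qⁿ}` with `ξ^{qⁿ} ≠ ξ^{qˢ}` and `ā` such that, with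
`δ̄ = (ξ^{q^{s+n}} − ξ^{qⁿ}) / (ξ^{qⁿ} − ξ^{qˢ})`, one has `N(δ̄) = N(δ)` and
`dim_{F_q} ker f_{ā,δ̄ā,s} = 2`.  Membership in `F_{qⁿ}` is expressed by `x^{qⁿ} = x`,
and dimension `2` by the kernel having `q²` elements. -/
theorem stmt_3 (p h q n s : ℕ) (hp : p.Prime) (hh : 0 < h) (hq : q = p ^ h)
    (hn : 0 < n) (hs : 0 < s) (hgcd : Nat.gcd n s = 1)
    (K : Type*) [Field K] [Fintype K] (hK : Fintype.card K = q ^ (2 * n))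
    (δ : K) :
    (∃ a : K,
        Nat.card {x : K // x + a * x ^ q ^ s + δ * a * x ^ q ^ (n + s) = 0} = q ^ 2) ↔
    (∃ ξ abar : K, ξ ^ q ^ n ≠ ξ ∧ ξ ^ q ^ n ≠ ξ ^ q ^ s ∧
      ((ξ ^ q ^ (s + n) - ξ ^ q ^ n) / (ξ ^ q ^ n - ξ ^ q ^ s)) ^ (q ^ n + 1)
        = δ ^ (q ^ n + 1) ∧
      Nat.card {x : K // x + abar * x ^ q ^ s +
        ((ξ ^ q ^ (s + n) - ξ ^ q ^ n) / (ξ ^ q ^ n - ξ ^ q ^ s)) * abar * x ^ q ^ (n + s)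
          = 0} = q ^ 2) := by
  have hp1 := hp.one_lt
  have hq1 : 1 < q := hq ▸ Nat.one_lt_pow hh.ne' hp1
  have hQ1 : 1 < q ^ n := Nat.one_lt_pow hn.ne' hq1
  have : Fact p.Prime := ⟨hp⟩
  have : CharP K p := charP_of_card_eq_prime_pow (f := h * (2 * n))
    (by rw [hK, hq, ← pow_mul])
  have hbij (m : ℕ) : ∃ e : K ≃+* K, ∀ x, e x = x ^ q ^ m := by
    refine ⟨RingEquiv.ofBijective (iterateFrobenius K p (h * m))
      (Finite.injective_iff_bijective.mp (RingHom.injective _)), fun x => ?_⟩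
    simp [iterateFrobenius_def, hq, pow_mul]
  obtain ⟨σ, hσ⟩ := hbij s
  obtain ⟨τ, hτ⟩ := hbij n
  have hττ (x : K) : τ (τ x) = x := by
    rw [hτ, hτ, ← pow_mul, ← pow_add, ← two_mul, ← hK, FiniteField.pow_card]
  have hστ (x : K) : x ^ q ^ (n + s) = σ (τ x) := by
    rw [hσ, hτ, ← pow_mul, ← pow_add]
  have hστ' (x : K) : x ^ q ^ (s + n) = σ (τ x) := by rw [add_comm, hστ]
  have hcomm (x : K) : τ (σ x) = σ (τ x) := by
    rw [← hστ', hσ, hτ, ← pow_mul, ← pow_add]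
  constructor
  · rintro ⟨a₀, ha₀⟩
    -- Scale by a nonzero element `l` of the kernel, so that `1` lies in the kernel.
    obtain ⟨l, hlker, hlq⟩ := exists_pow_ne q hq1 _ ha₀
    have hl : l ≠ 0 := by
      rintro rfl
      exact hlq (zero_pow (by omega))
    have hlA : l ^ q ^ s ≠ 0 := pow_ne_zero _ hl
    obtain ⟨a, ha⟩ : ∃ a, a * l = a₀ * l ^ q ^ s := ⟨a₀ * l ^ q ^ s / l, by field_simp⟩
    obtain ⟨d, hd⟩ : ∃ d, d * l ^ q ^ s = δ * l ^ q ^ (n + s) :=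
      ⟨δ * l ^ q ^ (n + s) / l ^ q ^ s, by field_simp⟩
    have hcard := (card_ker_scale (q ^ s) (q ^ (n + s)) a₀ δ a d l hl ha hd).trans ha₀
    have h1 : 1 + a + d * a = 0 := by
      have hb : d * a * l = δ * a₀ * l ^ q ^ (n + s) := by
        linear_combination d * ha + a₀ * hd
      apply mul_left_cancel₀ hl
      linear_combination hlker + ha + hb
    obtain ⟨ξ, hξ, hξq⟩ := exists_pow_ne q hq1 _ hcard
    rw [hστ, ← hσ] at hξ
    have ha0 : a ≠ 0 := by
      rintro rfl
      simp at h1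
    have hd1 : d + 1 ≠ 0 := by
      intro h0
      have : (1 : K) = 0 := by linear_combination h1 - a * h0
      exact one_ne_zero this
    have hrel : d * (ξ - σ (τ ξ)) = σ ξ - ξ := by
      apply mul_left_cancel₀ ha0
      linear_combination ξ * h1 - hξ
    have hne : ¬ (τ ξ = ξ ∧ σ ξ = ξ) := fun ⟨ht, hs'⟩ =>
      hξq (pow_eq_of_coprime q n s hgcd ξ ((hτ ξ).symm.trans ht) ((hσ ξ).symm.trans hs'))
    have hξτ : τ ξ ≠ ξ := by
      intro ht
      rw [ht] at hrel
      have h0 : (d + 1) * (σ ξ - ξ) = 0 := by linear_combination -hrel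
      exact hne ⟨ht, sub_eq_zero.mp ((mul_eq_zero.mp h0).resolve_left hd1)⟩
    have hξσ : τ ξ ≠ σ ξ := by
      intro ht
      have h2 : σ (τ ξ) = ξ := by rw [← hcomm, ← ht, hττ]
      rw [h2, sub_self, mul_zero] at hrel
      have h3 : σ ξ = ξ := (sub_eq_zero.mp hrel.symm)
      exact hne ⟨ht.trans h3, h3⟩
    have hdbar : (ξ ^ q ^ (s + n) - ξ ^ q ^ n) / (ξ ^ q ^ n - ξ ^ q ^ s) = τ d := by
      rw [hστ', ← hτ, ← hσ, div_eq_iff (sub_ne_zero.mpr hξσ)]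
      have := congrArg τ hrel
      rw [map_mul, map_sub, map_sub, hcomm, hcomm, hττ] at this
      exact this.symm
    refine ⟨ξ, τ a, by rwa [← hτ], by rwa [← hτ, ← hσ], ?_, ?_⟩
    · have hN (x : K) : x ^ (q ^ n + 1) = τ x * x := by rw [pow_succ, ← hτ]
      rw [hdbar, hN, hN, hττ]
      have hd' : d * σ l = δ * σ (τ l) := by rwa [hσ, ← hστ]
      have hd'' := congrArg τ hd'
      rw [map_mul, map_mul, hcomm, hcomm, hττ] at hd''
      have hσl : σ l ≠ 0 := by simpa using hl
      have hστl : σ (τ l) ≠ 0 := by simpa using hl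
      apply mul_left_cancel₀ (mul_ne_zero hσl hστl)
      linear_combination σ (τ l) * τ d * hd' + δ * σ (τ l) * hd''
    · rw [hdbar]
      exact (card_ker_conj _ _ a d τ).trans hcard
  · rintro ⟨ξ, b, -, -, hN, hcard⟩
    generalize (ξ ^ q ^ (s + n) - ξ ^ q ^ n) / (ξ ^ q ^ n - ξ ^ q ^ s) = e at hN hcard
    by_cases he : e = 0
    · have hδ : δ = 0 := by
        rw [he, zero_pow (Nat.succ_ne_zero _)] at hN
        exact eq_zero_of_pow_eq_zero hN.symm
      subst he hδ
      exact ⟨b, hcard⟩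
    · obtain ⟨m, hm, hmQ⟩ := exists_pow_eq_mul (q ^ n) hQ1 (by rw [hK, ← pow_mul, mul_comm])
        (δ / e) (by rw [div_pow, hN, div_self]; rw [← hN]; exact pow_ne_zero _ he)
      -- Hilbert 90 gives `δ / e = τ m / m`, while the scaling factor is `σ (τ l / l)`.
      obtain ⟨l, rfl⟩ := σ.surjective m
      have hl : l ≠ 0 := by
        rintro rfl
        simp at hm
      refine ⟨b * l ^ q ^ s / l, ?_⟩
      refine (card_ker_scale (q ^ s) (q ^ (n + s)) b e _ δ l hl (by field_simp) ?_).trans hcard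
      rw [← hτ, hcomm] at hmQ
      rw [← hσ, hστ, hmQ]
      field_simp
end

section
/- Let q be a prime power, n, s positive integers, and ξ ∈ F_{q^{2n}} \ F_{q^n} with ξ^{q^n} ≠ ξ^{q^s}. Set S = ξ + ξ^{q^n}, T = −ξ^{q^n+1}, and let A, B ∈ F_{q^n} be the unique elements with ξ^{q^s} = A + Bξ. Then for every α ∈ F_{q^n} with α ≠ 0 and α ≠ 1, one has N_{q^{2n}/q^n}( (ξ^{q^{n+s}} − ξ^{q^n})/(ξ^{q^n} − ξ^{q^s}) ) = α if and only if (1−α)(T + T^{q^s}) − α·S^{q^s+1} + (1+α)(AS − 2BT) = 0. -/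
/-!
Write `x = ξ`, `y = ξ^{qⁿ}`, `u = ξ^{qˢ}`, `v = ξ^{q^{n+s}}`. The `qⁿ`-power map is an additive
involution of `K` exchanging `x ↔ y` and `u ↔ v`, so the norm equals
`(v - y)(u - x) / ((y - u)(x - v))`, with nonzero denominator. Moreover `v = A + By`, whence
`AS - 2BT = xv + yu`, while `T + T^{qˢ} = -(xy + uv)` and `S^{qˢ+1} = (x + y)(u + v)`. With these
substitutions the right-hand expression is exactly
`α(y - u)(x - v) - (v - y)(u - x)`.
-/

/-- With `ξ ∈ F_{q^{2n}} \ F_{qⁿ}`, `ξ^{qⁿ} ≠ ξ^{qˢ}`, `S = ξ + ξ^{qⁿ}`, `T = −ξ^{qⁿ+1}`,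
`ξ^{qˢ} = A + Bξ` with `A, B ∈ F_{qⁿ}`, and `α ∈ F_{qⁿ} \ {0,1}`:
`N((ξ^{q^{n+s}} − ξ^{qⁿ})/(ξ^{qⁿ} − ξ^{qˢ})) = α` iff
`(1−α)(T + T^{qˢ}) − α S^{qˢ+1} + (1+α)(AS − 2BT) = 0`. -/
theorem stmt_6 (p h q n s : ℕ) (hp : p.Prime) (hh : 0 < h) (hq : q = p ^ h)
    (hn : 0 < n) (hs : 0 < s)
    (K : Type*) [Field K] [Fintype K] (hK : Fintype.card K = q ^ (2 * n))
    (ξ : K) (hξ : ξ ^ q ^ n ≠ ξ) (hξ2 : ξ ^ q ^ n ≠ ξ ^ q ^ s)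
    (S T A B : K) (hS : S = ξ + ξ ^ q ^ n) (hT : T = -ξ ^ (q ^ n + 1))
    (hA : A ^ q ^ n = A) (hB : B ^ q ^ n = B) (hAB : ξ ^ q ^ s = A + B * ξ)
    (α : K) (hαF : α ^ q ^ n = α) (hα0 : α ≠ 0) (hα1 : α ≠ 1) :
    ((ξ ^ q ^ (n + s) - ξ ^ q ^ n) / (ξ ^ q ^ n - ξ ^ q ^ s)) ^ (q ^ n + 1) = α ↔
      (1 - α) * (T + T ^ q ^ s) - α * S ^ (q ^ s + 1)
        + (1 + α) * (A * S - 2 * B * T) = 0 := by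
  have : Fact p.Prime := ⟨hp⟩
  have : CharP K p := by
    refine charP_of_card_eq_prime_pow (f := h * (2 * n)) ?_
    rw [hK, hq, ← pow_mul]
  have hadd : ∀ (k : ℕ) (a b : K), (a + b) ^ q ^ k = a ^ q ^ k + b ^ q ^ k := by
    intro k a b
    rw [hq, ← pow_mul]
    exact add_pow_char_pow a b p _
  have hsub : ∀ (k : ℕ) (a b : K), (a - b) ^ q ^ k = a ^ q ^ k - b ^ q ^ k := by
    intro k a b
    rw [hq, ← pow_mul]
    exact sub_pow_char_pow a b _
  have hq0 : q ≠ 0 := by rw [hq]; exact pow_ne_zero _ hp.ne_zero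
  have hneg : ∀ (k : ℕ) (a : K), (-a) ^ q ^ k = -a ^ q ^ k := by
    intro k a
    have := hsub k 0 a
    rwa [zero_pow (pow_ne_zero _ hq0), zero_sub, zero_sub] at this
  have hinv : ∀ a : K, (a ^ q ^ n) ^ q ^ n = a := by
    intro a
    rw [← pow_mul, ← pow_add, ← two_mul, ← hK, FiniteField.pow_card]
  have hv : ξ ^ q ^ (n + s) = (ξ ^ q ^ s) ^ q ^ n := by
    rw [← pow_mul, ← pow_add, add_comm]
  have hv' : ξ ^ q ^ (n + s) = (ξ ^ q ^ n) ^ q ^ s := by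
    rw [← pow_mul, ← pow_add]
  have hvAB : ξ ^ q ^ (n + s) = A + B * ξ ^ q ^ n := by
    rw [hv, hAB, hadd, mul_pow, hA, hB]
  have hvn : (ξ ^ q ^ (n + s)) ^ q ^ n = ξ ^ q ^ s := by rw [hv, hinv]
  have hTs : T ^ q ^ s = -(ξ ^ q ^ s * ξ ^ q ^ (n + s)) := by
    rw [hT, hneg, pow_succ, mul_pow, ← hv', mul_comm]
  have hSs : S ^ q ^ s = ξ ^ q ^ s + ξ ^ q ^ (n + s) := by
    rw [hS, hadd, ← hv']
  have hT' : T = -(ξ ^ q ^ n * ξ) := by rw [hT, pow_succ]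
  have hd1 : ξ ^ q ^ n - ξ ^ q ^ s ≠ 0 := sub_ne_zero.mpr hξ2
  have hd2 : ξ - ξ ^ q ^ (n + s) ≠ 0 := by
    intro h0
    apply hξ2
    rw [← hvn, ← sub_eq_zero.mp h0]
  rw [div_pow, pow_succ, pow_succ, hsub, hsub, hvn, hinv, ← hv,
    div_eq_iff (mul_ne_zero hd2 hd1), hTs, pow_succ S, hSs, hT', hS]
  generalize ξ ^ q ^ (n + s) = v at *
  generalize ξ ^ q ^ s = u at *
  generalize ξ ^ q ^ n = y at *
  subst hvAB hAB
  constructor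
  · intro e
    linear_combination -e
  · intro e
    linear_combination -e
end

section
/- Let q be an odd prime power, n, s positive integers, β ∈ F_{q^n} with β ∉ {1, −1}, and η a non-square element of F_{q^n}. Let G(Z) = η·Z² + η^{q^s}·Z^{2q^s} − 2β·η^{(q^s+1)/2}·Z^{q^s+1} ∈ F_{q^n}[Z]. Then, over an algebraic closure F̄ of F_{q^n}, the root Z = 0 of G has multiplicity exactly 2, the remaining 2q^s − 2 roots of G in F̄ are nonzero, pairwise distinct and simple, and consequently the polynomial U² − G(Z) is irreducible in F̄[U, Z]. -/
/-!
Write `Q = qˢ = m + 1`. Then `G = Z² H` with `H = a - 2c Z^m + b Z^(2m)`, where `a = η`, `b = η^Q`,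
`c = β η^((Q+1)/2)`. Since `H(0) = η ≠ 0`, the root `0` of `G` has multiplicity `2`. As `Q = 0` in
`F`, a common root of `H` and `H'` would force `c² = ab`, that is `(β² - 1) η^(Q+1) = 0`, which is
impossible; so `H` is separable and has exactly `2m` roots, all nonzero and simple. A square has no
root of multiplicity one, so `G` is not a square in `F̄[Z]`, and hence the monic quadratic `U² - G`
is irreducible.
-/

open Polynomial in
/-- The cofactor of `Z²` in `G`, a quadratic trinomial in `Z^m`, has only simple roots when its
discriminant and constant term are nonzero and `m = -1` in a field of characteristic other than `2`. -/
lemma trinomial_rootMultiplicity_le_one {K : Type*} [Field K] (m : ℕ) (hm : 0 < m)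
    (hmK : (m : K) + 1 = 0) (h2 : (2 : K) ≠ 0) (a b c : K) (ha : a ≠ 0) (hc : c ^ 2 ≠ a * b)
    (z : K) :
    rootMultiplicity z (C a + C b * X ^ (2 * m) - C (2 * c) * X ^ m) ≤ 1 := by
  by_contra! hlt
  have hne : C a + C b * X ^ (2 * m) - C (2 * c) * X ^ m ≠ 0 := by
    intro h0
    rw [h0] at hlt
    simp at hlt
  obtain ⟨hr, hr'⟩ := (one_lt_rootMultiplicity_iff_isRoot hne).1 hlt
  obtain ⟨k, rfl⟩ : ∃ k, m = k + 1 := ⟨m - 1, by omega⟩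
  have hk : 2 * (k + 1) - 1 = 2 * k + 1 := by omega
  simp only [IsRoot, derivative_sub, derivative_add, derivative_mul, derivative_C,
    derivative_X_pow, eval_sub, eval_add, eval_mul, eval_pow, eval_X, eval_C,
    hk, Nat.add_sub_cancel, zero_mul, zero_add] at hr hr'
  have hz : z ≠ 0 := by
    rintro rfl
    simp at hr
    exact ha hr
  push_cast at hmK hr'
  have hkK : (k : K) = -2 := by linear_combination hmK
  rw [hkK] at hr'
  generalize hW : z ^ (k + 1) = W at hr
  have e1 : z ^ (2 * (k + 1)) = W ^ 2 := by rw [← hW]; ring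
  have hW0 : W ≠ 0 := hW ▸ pow_ne_zero _ hz
  have hH : a + b * W ^ 2 - 2 * c * W = 0 := by
    rw [← e1]
    exact hr
  -- `z H'(z) = -2 W (b W - c)`, with `W = z ^ m`
  have hH' : 2 * W * (b * W - c) = 0 := by
    rw [← hW]
    linear_combination (-z) * hr'
  have hbc : b * W - c = 0 :=
    (mul_eq_zero.1 hH').resolve_left (mul_ne_zero h2 hW0)
  exact hc (by linear_combination (-b) * hH + (b * W - c) * hbc)

open Polynomial in
lemma trinomial_natDegree {K : Type*} [Field K] (m : ℕ) (hm : 0 < m)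
    (a b c : K) (hb : b ≠ 0) :
    (C a + C b * X ^ (2 * m) - C (2 * c) * X ^ m).natDegree = 2 * m := by
  refine natDegree_eq_of_le_of_coeff_ne_zero ?_ ?_
  · compute_degree
    omega
  · have h1 : 2 * m ≠ 0 := by omega
    have h2 : 2 * m ≠ m := by omega
    rw [coeff_sub, coeff_add, coeff_C_mul, coeff_C_mul, coeff_X_pow, coeff_X_pow, coeff_C]
    simpa [h1, h2, hm.ne'] using hb

open Polynomial in
/-- A square has no root of multiplicity one, so `U² - G` is irreducible when `G` has such a root. -/
lemma irreducible_sq_sub_C {K : Type*} [Field K] (G : K[X]) (z : K)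
    (hz : rootMultiplicity z G = 1) : Irreducible ((X : K[X][X]) ^ 2 - C G) := by
  have hmon : ((X : K[X][X]) ^ 2 - C G).Monic := monic_X_pow_sub_C G two_ne_zero
  have hdeg : ((X : K[X][X]) ^ 2 - C G).natDegree = 2 := natDegree_X_pow_sub_C
  rw [hmon.irreducible_iff_roots_eq_zero_of_degree_le_three hdeg.ge (by omega)]
  refine Multiset.eq_zero_of_forall_notMem fun k hk => ?_
  have hkG : G = k * k := by
    have := (mem_roots'.1 hk).2
    simp only [IsRoot, eval_sub, eval_pow, eval_X, eval_C] at this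
    linear_combination -this
  have hne : k * k ≠ 0 := by
    intro h0
    rw [hkG, h0] at hz
    simp at hz
  rw [hkG, rootMultiplicity_mul hne] at hz
  omega

open Polynomial in
/-- The conclusions for `G = Z² (a + b Z^(2m) - 2c Z^m)` over an algebraically closed field. -/
lemma sq_mul_trinomial {K : Type*} [Field K] [IsAlgClosed K] (m : ℕ) (hm : 0 < m)
    (hmK : (m : K) + 1 = 0) (h2 : (2 : K) ≠ 0) (a b c : K) (ha : a ≠ 0) (hb : b ≠ 0)
    (hc : c ^ 2 ≠ a * b) (G : K[X])
    (hG : G = X ^ 2 * (C a + C b * X ^ (2 * m) - C (2 * c) * X ^ m)) :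
    rootMultiplicity 0 G = 2 ∧
    {z : K | z ≠ 0 ∧ eval z G = 0}.ncard = 2 * m ∧
    (∀ z : K, z ≠ 0 → eval z G = 0 → rootMultiplicity z G = 1) ∧
    Irreducible ((X : K[X][X]) ^ 2 - C G) := by
  classical
  have hle := trinomial_rootMultiplicity_le_one m hm hmK h2 a b c ha hc
  have hdeg := trinomial_natDegree m hm a b c hb
  have h0 : eval 0 (C a + C b * X ^ (2 * m) - C (2 * c) * X ^ m) ≠ 0 := by
    simpa [hm.ne'] using ha
  generalize C a + C b * X ^ (2 * m) - C (2 * c) * X ^ m = H at *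
  have hH : H ≠ 0 := by rintro rfl; simp at h0
  have hX : (X : K[X]) ^ 2 ≠ 0 := pow_ne_zero _ X_ne_zero
  have hmult : ∀ z, rootMultiplicity z G = rootMultiplicity z (X ^ 2 : K[X]) +
      rootMultiplicity z H := by
    intro z
    rw [hG, rootMultiplicity_mul (mul_ne_zero hX hH)]
  have hset : {z : K | z ≠ 0 ∧ eval z G = 0} = (H.roots.toFinset : Set K) := by
    ext z
    simp only [Set.mem_ofPred_eq, Finset.mem_coe, Multiset.mem_toFinset, mem_roots hH, IsRoot, hG,
      eval_mul, eval_pow, eval_X]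
    constructor
    · rintro ⟨hz, h⟩
      exact (mul_eq_zero.1 h).resolve_left (pow_ne_zero _ hz)
    · intro h
      exact ⟨by rintro rfl; exact h0 h, by rw [h, mul_zero]⟩
  have hnodup : H.roots.Nodup := by
    rw [Multiset.nodup_iff_count_le_one]
    intro z
    rw [count_roots]
    exact hle z
  have hcard : {z : K | z ≠ 0 ∧ eval z G = 0}.ncard = 2 * m := by
    rw [hset, Set.ncard_coe_finset, Multiset.toFinset_card_of_nodup hnodup, ← hdeg]
    exact (IsAlgClosed.splits H).natDegree_eq_card_roots.symm
  have hsimple : ∀ z : K, z ≠ 0 → eval z G = 0 → rootMultiplicity z G = 1 := by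
    intro z hz hzG
    have hXz : rootMultiplicity z (X ^ 2 : K[X]) = 0 :=
      rootMultiplicity_eq_zero (by simpa [IsRoot] using hz)
    have hzH : z ∈ (H.roots.toFinset : Set K) := hset ▸ ⟨hz, hzG⟩
    have hpos : 0 < rootMultiplicity z H := by
      rw [rootMultiplicity_pos hH]
      simpa [hH] using hzH
    have := hle z
    rw [hmult, hXz]
    omega
  refine ⟨?_, hcard, hsimple, ?_⟩
  · have h1 : rootMultiplicity (0 : K) (X ^ 2) = 2 := by
      simpa using rootMultiplicity_X_sub_C_pow (0 : K) 2
    rw [hmult, h1, rootMultiplicity_eq_zero h0]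
  · obtain ⟨z, hz, hzG⟩ : {z : K | z ≠ 0 ∧ eval z G = 0}.Nonempty :=
      Set.nonempty_of_ncard_ne_zero (by omega)
    exact irreducible_sq_sub_C G z (hsimple z hz hzG)


/-- For `q` odd, `β ∉ {1,−1}` and `η` a non-square of `F_{qⁿ}`, the polynomial
`G(Z) = ηZ² + η^{qˢ}Z^{2qˢ} − 2βη^{(qˢ+1)/2}Z^{qˢ+1}` over the algebraic closure `F̄`
has `0` as a root of multiplicity exactly `2`, its remaining `2qˢ − 2` roots are
nonzero, pairwise distinct and simple, and `U² − G(Z)` is irreducible in `F̄[U,Z]`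
(realized as `F̄[Z][U]`). -/
theorem stmt_9 (p h q n s : ℕ) (hp : p.Prime) (hp2 : p ≠ 2) (hh : 0 < h)
    (hq : q = p ^ h) (hn : 0 < n) (hs : 0 < s)
    (F : Type*) [Field F] [Fintype F] (hF : Fintype.card F = q ^ n)
    (β η : F) (hβ1 : β ≠ 1) (hβ2 : β ≠ -1) (hη : ¬∃ c : F, c ^ 2 = η)
    (G : Polynomial (AlgebraicClosure F))
    (hG : G = Polynomial.C (algebraMap F (AlgebraicClosure F) η) * Polynomial.X ^ 2
        + Polynomial.C (algebraMap F (AlgebraicClosure F) (η ^ q ^ s))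
            * Polynomial.X ^ (2 * q ^ s)
        - Polynomial.C (algebraMap F (AlgebraicClosure F) (2 * β * η ^ ((q ^ s + 1) / 2)))
            * Polynomial.X ^ (q ^ s + 1)) :
    Polynomial.rootMultiplicity 0 G = 2 ∧
    {z : AlgebraicClosure F | z ≠ 0 ∧ Polynomial.eval z G = 0}.ncard = 2 * q ^ s - 2 ∧
    (∀ z : AlgebraicClosure F, z ≠ 0 → Polynomial.eval z G = 0 →
        Polynomial.rootMultiplicity z G = 1) ∧
    Irreducible ((Polynomial.X : Polynomial (Polynomial (AlgebraicClosure F))) ^ 2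
        - Polynomial.C G) := by
  have hη0 : η ≠ 0 := fun h0 => hη ⟨0, by simp [h0]⟩
  have hqodd : Odd q := hq ▸ (hp.odd_of_ne_two hp2).pow
  have hQodd : Odd (q ^ s) := hqodd.pow
  have hq1 : 1 < q := hq ▸ Nat.one_lt_pow hh.ne' hp.one_lt
  have hQ1 : 1 < q ^ s := Nat.one_lt_pow hs.ne' hq1
  have hqF : (q : F) = 0 := by
    have hcard : ((Fintype.card F : ℕ) : F) = 0 := Nat.cast_card_eq_zero F
    rw [hF] at hcard
    push_cast at hcard
    exact eq_zero_of_pow_eq_zero hcard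
  have h2F : (2 : F) ≠ 0 := by
    intro h2
    obtain ⟨k, hk⟩ := hqodd
    rw [hk] at hqF
    push_cast at hqF
    rw [h2] at hqF
    simp at hqF
  -- the discriminant condition `c² ≠ ab` is `β² ≠ 1`
  have hdisc : (β * η ^ ((q ^ s + 1) / 2)) ^ 2 ≠ η * η ^ q ^ s := by
    intro he
    have hhalf : (q ^ s + 1) / 2 * 2 = q ^ s + 1 := by
      obtain ⟨k, hk⟩ := hQodd
      omega
    rw [mul_pow, ← pow_mul, hhalf, pow_succ' η] at he
    have hβ : β ^ 2 = 1 :=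
      mul_right_cancel₀ (mul_ne_zero hη0 (pow_ne_zero (q ^ s) hη0)) (he.trans (one_mul _).symm)
    rcases eq_or_eq_neg_of_sq_eq_sq β 1 (by rw [hβ, one_pow]) with h1 | h1
    · exact hβ1 h1
    · exact hβ2 h1
  have hQF : ((q ^ s : ℕ) : F) = 0 := by
    push_cast
    rw [hqF, zero_pow hs.ne']
  obtain ⟨m, hm⟩ : ∃ m, q ^ s = m + 1 := ⟨q ^ s - 1, by omega⟩
  generalize q ^ s = Q at *
  subst hm
  have hinj : Function.Injective (algebraMap F (AlgebraicClosure F)) :=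
    (algebraMap F (AlgebraicClosure F)).injective
  have key := sq_mul_trinomial m (by omega)
    (by simpa using congrArg (algebraMap F (AlgebraicClosure F)) hQF)
    (by rw [← map_ofNat (algebraMap F (AlgebraicClosure F)) 2]; exact (map_ne_zero _).2 h2F)
    (algebraMap F (AlgebraicClosure F) η) (algebraMap F (AlgebraicClosure F) (η ^ (m + 1)))
    (algebraMap F (AlgebraicClosure F) (β * η ^ ((m + 1 + 1) / 2)))
    ((map_ne_zero _).2 hη0) ((map_ne_zero _).2 (pow_ne_zero _ hη0))
    (by rw [← map_pow, ← map_mul]; exact hinj.ne hdisc) G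
    (by
      rw [hG, mul_assoc (2 : F), map_mul _ (2 : F), map_ofNat]
      ring)
  rwa [show 2 * (m + 1) - 2 = 2 * m by omega]
end

section
/- Let q be an odd prime power, n, s positive integers, β ∈ F_{q^n} with β ∉ {1, −1}, and η a non-square element of F_{q^n}. Then the polynomial −(S^{q^s} − S)² + η·Z² + η^{q^s}·Z^{2q^s} − 2β·η^{(q^s+1)/2}·Z^{q^s+1} ∈ F_{q^n}[S, Z] is absolutely irreducible, i.e. irreducible as an element of F̄[S, Z]. -/
/-!
Write `Q = q ^ s`, `η = e ^ 2` with `e` in the algebraic closure `K`, and let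
`f = (S ^ Q - S) ^ 2 - G(Z)`, which is monic in `S` and invariant under `S ↦ S + a` for every
`a` in the field `𝔽_Q ⊆ K`. The proof shows that some irreducible factor `g` of `f` is
itself invariant under these translations, and that this forces `g` to be all of `f`.

*An invariant factor.* Put `S = T + e Z` and give `T` and `Z` the weights `1` and `Q`. The
top-weight part of `f` is `2 e^Q T^Q Z^Q + 2 (β - 1) e^(Q+1) Z^(Q+1)` (`shifted_f`). At `T = 1` it
has a nonzero root `Z = z`, because `β ≠ 1`, and this root is simple. Top-weight parts are
multiplicative, so exactly one irreducible factor `g` of `f` has a top part vanishing at `z`. The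
translation `T ↦ T + a` does not change top-weight parts (`weighted_top`, `shifted_top`), so each
translate of `g` is again that factor, hence equal to `g`.

*Invariance forces `g = f`.* By `exists_quot` applied twice, `g = A (A l + v) + u` with
`A = S ^ Q - S` and `u, v ∈ K[Z]`. If `l ≠ 0`, then `g` has the full degree `2Q` in `S`. Otherwise
`g = v A + u` divides `A ^ 2 - G`, and reducing modulo `g` gives `u ^ 2 = v ^ 2 G` with `v` a
unit, so `G` is a square in `K[Z]`. This is excluded by `not_square`, since `β ≠ ±1`: comparing
`G` with its derivative, the only multiple root of `G` is `0`, of multiplicity `2`.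
-/

open Polynomial in
/-- The ring homomorphism `K[Z] → K[z][u]` over `K`, `Z ↦ z * u ^ Q`. -/
noncomputable def scaleZ {K : Type*} [Field K] (Q : ℕ) : K[X] →+* K[X][X] :=
  eval₂RingHom (C.comp C) (C X * X ^ Q)

open Polynomial in
/-- The ring homomorphism `K[Z][T] → K[z][u]` over `K`, `Z ↦ z * u ^ Q`, `T ↦ u + a`. For `a = 0` its
`u`-degree is the weighted degree in which `T` has weight `1` and `Z` has weight `Q`. -/
noncomputable def weighted {K : Type*} [Field K] (Q : ℕ) (a : K) : K[X][X] →+* K[X][X] :=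
  eval₂RingHom (scaleZ Q) (X + C (C a))

open Polynomial in
/-- The map `weighted Q a` precomposed with the change of variable `S = T + e * Z`. -/
noncomputable def shifted {K : Type*} [Field K] (Q : ℕ) (e a : K) : K[X][X] →+* K[X][X] :=
  eval₂RingHom (scaleZ Q) (X + C (C a) + scaleZ Q (C e * X))

section
open Polynomial

variable {K : Type*} [Field K]

/-! ### Top weighted-homogeneous parts -/

lemma scaleZ_coeff_coeff (Q : ℕ) (c : K[X]) (m j : ℕ) :
    ((scaleZ Q c).coeff m).coeff j = if m = Q * j then c.coeff j else 0 := by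
  induction c using Polynomial.induction_on' with
  | add x y hx hy =>
    rw [map_add, coeff_add, coeff_add, hx, hy, coeff_add]
    split_ifs <;> simp
  | monomial n r =>
    have h1 : scaleZ Q (monomial n r) = C (C r * X ^ n) * X ^ (Q * n) := by
      simp only [scaleZ, coe_eval₂RingHom, eval₂_monomial, RingHom.comp_apply, map_mul, map_pow]
      ring
    rw [h1, coeff_C_mul, coeff_X_pow, coeff_monomial]
    by_cases hj : n = j
    · subst hj
      by_cases hm : m = Q * n <;> simp [hm]
    · by_cases hm : m = Q * n
      · simp [hm, hj, coeff_X_pow, Ne.symm hj]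
      · simp [hm, hj]

lemma scaleZ_natDegree_le (Q : ℕ) (c : K[X]) : (scaleZ Q c).natDegree ≤ Q * c.natDegree := by
  rw [natDegree_le_iff_coeff_eq_zero]
  intro m hm
  ext j
  rw [scaleZ_coeff_coeff, coeff_zero]
  split_ifs with h
  · apply coeff_eq_zero_of_natDegree_lt
    subst h
    exact lt_of_mul_lt_mul_left hm (Nat.zero_le _)
  · rfl

/-- The leading coefficient in `u` of `weighted Q a g` (the top weighted-homogeneous part of
`g`, dehomogenized) does not depend on the translation `a`. -/
lemma weighted_top (Q : ℕ) (g : K[X][X]) (hg : g ≠ 0) :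
    ∃ t : K[X], ∀ a : K, (weighted Q a g).leadingCoeff = t := by
  classical
  set N := g.support.sup (fun i => i + Q * (g.coeff i).natDegree) with hN
  have hle : ∀ i ∈ g.support, i + Q * (g.coeff i).natDegree ≤ N := fun i hi =>
    Finset.le_sup (f := fun i => i + Q * (g.coeff i).natDegree) hi
  set t := ∑ i ∈ g.support, (scaleZ Q (g.coeff i)).coeff (N - i) with ht
  have hform : ∀ a : K, weighted Q a g
      = ∑ i ∈ g.support, scaleZ Q (g.coeff i) * (X + C (C a)) ^ i := fun a => by
    simp [weighted, eval₂_eq_sum, Polynomial.sum_def]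
  have hX : ∀ (a : K) (i : ℕ), ((X + C (C a) : K[X][X]) ^ i).natDegree = i := fun a i => by
    rw [natDegree_pow, natDegree_X_add_C, mul_one]
  have hdeg : ∀ a : K, (weighted Q a g).natDegree ≤ N := fun a => by
    rw [hform]
    refine natDegree_sum_le_of_forall_le _ _ fun i hi => ?_
    refine natDegree_mul_le.trans ?_
    rw [hX]
    have := scaleZ_natDegree_le Q (g.coeff i)
    have := hle i hi
    omega
  have hcoeff : ∀ a : K, (weighted Q a g).coeff N = t := fun a => by
    rw [hform, finsetSum_coeff, ht]
    refine Finset.sum_congr rfl fun i hi => ?_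
    have h1 := hle i hi
    have h2 := scaleZ_natDegree_le Q (g.coeff i)
    have h3 : N = (N - i) + i := by omega
    conv_lhs => rw [h3]
    rw [coeff_mul_add_eq_of_natDegree_le (by omega) (hX a i).le]
    have h4 : ((X + C (C a) : K[X][X]) ^ i).coeff i = 1 := by
      have h5 : ((X + C (C a) : K[X][X]) ^ i).Monic := (monic_X_add_C _).pow i
      have := h5.coeff_natDegree
      rwa [hX] at this
    rw [h4, mul_one]
  -- monomials of equal weight have different exponents of `Z`, so nothing cancels in `t`
  have ht0 : t ≠ 0 := by
    obtain ⟨i, hi, hiN⟩ := Finset.exists_mem_eq_sup g.support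
      (support_nonempty.2 hg) (fun i => i + Q * (g.coeff i).natDegree)
    rw [← hN] at hiN
    intro h0
    have h1 : t.coeff (g.coeff i).natDegree = (g.coeff i).leadingCoeff := by
      rw [ht, finsetSum_coeff, Finset.sum_eq_single i]
      · rw [scaleZ_coeff_coeff, if_pos (by omega), leadingCoeff]
      · intro i' hi' hne
        have := hle i' hi'
        rw [scaleZ_coeff_coeff, if_neg (by omega)]
      · exact fun h => absurd hi h
    rw [h0, coeff_zero] at h1
    exact (mem_support_iff.1 hi) (leadingCoeff_eq_zero.1 h1.symm)
  refine ⟨t, fun a => ?_⟩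
  have h1 : (weighted Q a g).natDegree = N :=
    le_antisymm (hdeg a) (le_natDegree_of_ne_zero (by rw [hcoeff]; exact ht0))
  rw [leadingCoeff, h1, hcoeff]

/-- Translating `S` does not change the top weighted-homogeneous part. -/
lemma shifted_top (Q : ℕ) (e a : K) (g : K[X][X]) :
    (shifted Q e 0 (g.comp (X + C (C a)))).leadingCoeff = (shifted Q e 0 g).leadingCoeff := by
  have h1 : ∀ a : K, shifted Q e a g = weighted Q a (g.comp (X + C (C e * X))) := fun a => by
    simp [shifted, weighted, eval₂_comp]
  have h2 : shifted Q e 0 (g.comp (X + C (C a))) = shifted Q e a g := by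
    have h3 : scaleZ Q (C a) = C (C a) := by simp [scaleZ]
    simp only [shifted, coe_eval₂RingHom, eval₂_comp, eval₂_add, eval₂_X, eval₂_C, h3, map_zero]
    congr 1
    ring
  by_cases hg : g = 0
  · simp [hg]
  have hg' : g.comp (X + C (C e * X)) ≠ 0 := by
    intro h
    apply hg
    have := congrArg (fun r : K[X][X] => r.comp (X - C (C e * X))) h
    simpa [comp_assoc] using this
  obtain ⟨t, ht⟩ := weighted_top Q _ hg'
  rw [h2, h1, h1, ht, ht]

/-! ### Polynomials invariant under translation -/

/-- The subfield with `p ^ k` elements, as a finite set. -/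
lemma exists_fixed [IsAlgClosed K] (p k : ℕ) [Fact p.Prime] [CharP K p] (hk : 0 < k) :
    ∃ W : Finset K, W.card = p ^ k ∧ ∀ a ∈ W, a ^ p ^ k = a := by
  classical
  have hQ : 1 < p ^ k := Nat.one_lt_pow hk.ne' (Fact.out : p.Prime).one_lt
  have hne : (X ^ p ^ k - X : K[X]) ≠ 0 := FiniteField.X_pow_card_sub_X_ne_zero K hQ
  refine ⟨(X ^ p ^ k - X : K[X]).roots.toFinset, ?_, ?_⟩
  · rw [Multiset.toFinset_card_of_nodup
      (nodup_roots (galois_poly_separable p _ (dvd_pow_self p hk.ne'))),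
      ← (IsAlgClosed.splits (X ^ p ^ k - X : K[X])).natDegree_eq_card_roots,
      FiniteField.X_pow_card_sub_X_natDegree_eq K hQ]
  · intro a ha
    rw [Multiset.mem_toFinset, mem_roots hne] at ha
    simpa [IsRoot, sub_eq_zero] using ha

lemma monic_A {R : Type*} [CommRing R] [Nontrivial R] {Q : ℕ} (hQ : 1 < Q) :
    (X ^ Q - X : R[X]).Monic ∧ (X ^ Q - X : R[X]).natDegree = Q := by
  have h : (X : R[X]).degree < Q := by rw [degree_X]; exact_mod_cast hQ
  constructor
  · exact monic_X_pow_sub (by rw [degree_X]; exact_mod_cast hQ)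
  · rw [natDegree_sub_eq_left_of_natDegree_lt] <;> simp [hQ]

/-- A polynomial invariant under the translations `S ↦ S + a`, `a ^ Q = a`, takes the same value
at the `Q` points `a`, so `g - g(0)` is divisible by `S ^ Q - S`; the quotient is again
invariant. -/
lemma exists_quot {Q : ℕ} (hQ : 1 < Q) (W : Finset K) (hW : W.card = Q)
    (hfix : ∀ a ∈ W, a ^ Q = a)
    (hA : ∀ a ∈ W, (X ^ Q - X : K[X][X]).comp (X + C (C a)) = X ^ Q - X) (g : K[X][X])
    (hg : ∀ a ∈ W, g.comp (X + C (C a)) = g) :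
    ∃ k : K[X][X], g = (X ^ Q - X) * k + C (g.eval 0) ∧
      ∀ a ∈ W, k.comp (X + C (C a)) = k := by
  classical
  obtain ⟨hm, hd⟩ := monic_A (R := K[X]) hQ
  have hev : ∀ a ∈ W, g.eval (C a) = g.eval 0 := fun a ha => by
    conv_rhs => rw [← hg a ha]
    simp [eval_comp]
  generalize hAdef : (X ^ Q - X : K[X][X]) = A at *
  have hmod : (g - C (g.eval 0)) %ₘ A = 0 := by
    refine eq_zero_of_natDegree_lt_card_of_eval_eq_zero' _ (W.image C) ?_ ?_
    · intro x hx
      obtain ⟨a, ha, rfl⟩ := Finset.mem_image.1 hx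
      have h1 := congrArg (eval (C a)) (modByMonic_add_div (g - C (g.eval 0)) A)
      have h2 : A.eval (C a) = 0 := by
        simp [← hAdef, ← C_pow, hfix a ha]
      simpa [h2, hev a ha] using h1
    · rw [Finset.card_image_of_injective _ C_injective, hW, ← hd]
      refine natDegree_modByMonic_lt _ hm fun h => ?_
      rw [h, natDegree_one] at hd
      omega
  have hdvd : A ∣ g - C (g.eval 0) := (modByMonic_eq_zero_iff_dvd hm).1 hmod
  obtain ⟨k, hk⟩ := hdvd
  have hgk : g = A * k + C (g.eval 0) := by rw [← hk]; ring
  refine ⟨k, hgk, fun a ha => ?_⟩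
  have h1 := hg a ha
  rw [hgk, add_comp, mul_comp, hA a ha, C_comp] at h1
  exact mul_left_cancel₀ hm.ne_zero (add_right_cancel h1)

/-! ### The polynomial `G` is not a square -/

/-- `Z` has exponents `2` and `2Q` in `u ^ 2`, so `u` has a nonzero root; at such a root
both `u ^ 2` and its derivative vanish, which forces `b ^ 2 = 1`. -/
lemma not_square [IsAlgClosed K] (p k : ℕ) [Fact p.Prime] [CharP K p] (hp2 : p ≠ 2) (hk : 0 < k)
    (e b : K) (he : e ≠ 0) (hb1 : b ≠ 1) (hb2 : b ≠ -1) (u : K[X])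
    (hu : u ^ 2 = C (e ^ 2) * X ^ 2 + C (e ^ (2 * p ^ k)) * X ^ (2 * p ^ k)
      - C (2 * b * e ^ (p ^ k + 1)) * X ^ (p ^ k + 1)) : False := by
  have hQ : 1 < p ^ k := Nat.one_lt_pow hk.ne' (Fact.out : p.Prime).one_lt
  have hQ0 : ((p ^ k : ℕ) : K) = 0 := by
    rw [Nat.cast_pow, CharP.cast_eq_zero, zero_pow hk.ne']
  have h2 : (2 : K) ≠ 0 := Ring.two_ne_zero (by rwa [ringChar.eq K p])
  generalize p ^ k = Q at *
  have hc2 : (u ^ 2).coeff 2 = e ^ 2 := by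
    rw [hu]
    simp only [coeff_sub, coeff_add, coeff_C_mul, coeff_X_pow]
    rw [if_neg (by omega : ¬ 2 = 2 * Q), if_neg (by omega : ¬ 2 = Q + 1)]
    simp
  have hcQ : (u ^ 2).coeff (2 * Q) = e ^ (2 * Q) := by
    rw [hu]
    simp only [coeff_sub, coeff_add, coeff_C_mul, coeff_X_pow]
    rw [if_neg (by omega : ¬ 2 * Q = 2), if_neg (by omega : ¬ 2 * Q = Q + 1)]
    simp
  have hroot : ∀ z : K, u.eval z = 0 → z = 0 := by
    intro z hz
    have e1 : e ^ 2 * z ^ 2 + e ^ (2 * Q) * z ^ (2 * Q) - 2 * b * e ^ (Q + 1) * z ^ (Q + 1) = 0 := by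
      have := congrArg (eval z) hu
      simpa [hz] using this.symm
    have e2 : 2 * (e ^ 2 * z) - 2 * b * e ^ (Q + 1) * z ^ Q = 0 := by
      have := congrArg (fun r => eval z (derivative r)) hu
      simp [derivative_pow, hz, hQ0, -map_mul, -map_pow] at this
      linear_combination -this
    have e3 : e * z = b * (e * z) ^ Q := by
      apply mul_left_cancel₀ (mul_ne_zero h2 he)
      rw [mul_pow]
      linear_combination e2
    have e4 : (1 - b) * (1 + b) * ((e * z) ^ Q) ^ 2 = 0 := by
      have e5 : (e * z) ^ 2 + ((e * z) ^ Q) ^ 2 - 2 * b * (e * z) ^ Q * (e * z) = 0 := by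
        rw [← e1]; ring
      generalize (e * z) ^ Q = y at *
      rw [e3] at e5
      linear_combination e5
    have e6 : (1 - b) * (1 + b) ≠ 0 :=
      mul_ne_zero (sub_ne_zero.2 hb1.symm) fun h => hb2 (by linear_combination h)
    have e7 : (e * z) ^ Q = 0 := by simpa [e6] using e4
    exact (mul_eq_zero.1 (pow_eq_zero_iff (by omega) |>.1 e7)).resolve_left he
  have hX : ∀ v : K[X], (∀ z : K, v.eval z = 0 → z = 0) → v.natDegree ≠ 0 → X ∣ v := by
    intro v hv hd
    obtain ⟨z, hz⟩ := IsAlgClosed.exists_root v fun h => hd (natDegree_eq_of_degree_eq_some h)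
    obtain rfl := hv z hz
    exact X_dvd_iff.2 (by rwa [coeff_zero_eq_eval_zero])
  have hdeg : Q ≤ u.natDegree := by
    have h1 : 2 * Q ≤ (u ^ 2).natDegree :=
      le_natDegree_of_ne_zero (by rw [hcQ]; exact pow_ne_zero _ he)
    rw [natDegree_pow] at h1
    omega
  obtain ⟨v, rfl⟩ := hX u hroot (by omega)
  have hv0 : v ≠ 0 := by
    rintro rfl
    simp at hdeg
    omega
  rw [natDegree_X_mul hv0] at hdeg
  obtain ⟨w, rfl⟩ := hX v (fun z hz => hroot z (by simp [hz])) (by omega)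
  have h3 : (X * (X * w)) ^ 2 = X ^ 4 * w ^ 2 := by ring
  rw [h3, coeff_X_pow_mul', if_neg (by omega)] at hc2
  exact pow_ne_zero 2 he hc2.symm

/-! ### Irreducibility -/

/-- The top weighted-homogeneous part of `(S ^ Q - S) ^ 2 - G` in the variables `T = S - e * Z`
and `Z` is `2 * e ^ Q * T ^ Q * Z ^ Q + 2 * (b - 1) * e ^ (Q + 1) * Z ^ (Q + 1)`; here it appears
dehomogenized at `T = 1`. -/
lemma shifted_f (p k : ℕ) [Fact p.Prime] [CharP K p] (hp2 : p ≠ 2) (hk : 0 < k)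
    (e b : K) (he : e ≠ 0) (G : K[X])
    (hG : G = C (e ^ 2) * X ^ 2 + C (e ^ (2 * p ^ k)) * X ^ (2 * p ^ k)
      - C (2 * b * e ^ (p ^ k + 1)) * X ^ (p ^ k + 1)) :
    (shifted (p ^ k) e 0 ((X ^ p ^ k - X) ^ 2 - C G)).leadingCoeff
      = C (2 * e ^ p ^ k) * X ^ p ^ k + C (2 * (b - 1) * e ^ (p ^ k + 1)) * X ^ (p ^ k + 1) := by
  have hQ : 1 < p ^ k := Nat.one_lt_pow hk.ne' (Fact.out : p.Prime).one_lt
  have h2 : (2 : K) ≠ 0 := Ring.two_ne_zero (by rwa [ringChar.eq K p])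
  have hadd : ∀ x y : K[X][X], (x + y) ^ p ^ k = x ^ p ^ k + y ^ p ^ k := fun x y =>
    add_pow_char_pow x y p k
  generalize p ^ k = Q at *
  set t : K[X] := C (2 * e ^ Q) * X ^ Q + C (2 * (b - 1) * e ^ (Q + 1)) * X ^ (Q + 1) with ht
  have ht0 : t ≠ 0 := by
    intro h
    have h1 : t.coeff Q = 2 * e ^ Q := by
      rw [ht]
      simp [coeff_X_pow, -map_mul, -map_pow]
    rw [h, coeff_zero] at h1
    exact mul_ne_zero h2 (pow_ne_zero _ he) h1.symm
  have hform : shifted Q e 0 ((X ^ Q - X) ^ 2 - C G)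
      = C t * X ^ (Q * Q + Q) + ((X ^ Q - X) ^ 2 - C (C 2 * C (e ^ Q) * X ^ Q) * X ^ (Q * Q + 1)
        - (X ^ Q - X) * (C (C 2 * C e * X) * X ^ Q)) := by
    have h3 : ∀ c : K[X], shifted Q e 0 (C c) = scaleZ Q c := fun c => by simp [shifted]
    have h4 : shifted Q e 0 X = X + C (C e * X) * X ^ Q := by
      simp [shifted, scaleZ, mul_assoc]
    rw [map_sub, map_pow, map_sub, map_pow, h3, h4, hadd, hG, ht]
    simp only [scaleZ, coe_eval₂RingHom, eval₂_C, eval₂_X, RingHom.comp_apply, map_mul, map_pow,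
      map_add, map_sub, map_one, map_ofNat]
    ring
  rw [hform, leadingCoeff_add_of_degree_lt', leadingCoeff_C_mul_X_pow]
  rw [degree_C_mul_X_pow _ ht0]
  have hQQ : 2 * Q < Q * Q + Q := by nlinarith
  obtain ⟨hm, hd⟩ := monic_A (R := K[X]) hQ
  refine lt_of_le_of_lt (degree_le_natDegree.trans (Nat.cast_le.2
    (?_ : _ ≤ Q * Q + Q - 1))) (Nat.cast_lt.2 (by omega))
  refine (natDegree_sub_le _ _).trans (max_le ((natDegree_sub_le _ _).trans (max_le ?_ ?_)) ?_)
  · rw [natDegree_pow, hd]; omega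
  · exact (natDegree_C_mul_X_pow_le _ _).trans (by omega)
  · refine natDegree_mul_le.trans ?_
    rw [hd]
    have := natDegree_C_mul_X_pow_le (C 2 * C e * X : K[X]) Q
    omega

/-- The theorem after `η = e ^ 2` has been substituted, over an arbitrary algebraically closed
field of characteristic `p` and with the sign reversed so that the polynomial is monic in `S`. -/
theorem irreducible_aux [IsAlgClosed K] (p k : ℕ) [Fact p.Prime] [CharP K p] (hp2 : p ≠ 2)
    (hk : 0 < k) (e b : K) (he : e ≠ 0) (hb1 : b ≠ 1) (hb2 : b ≠ -1) (G : K[X])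
    (hG : G = C (e ^ 2) * X ^ 2 + C (e ^ (2 * p ^ k)) * X ^ (2 * p ^ k)
      - C (2 * b * e ^ (p ^ k + 1)) * X ^ (p ^ k + 1)) :
    Irreducible ((X ^ p ^ k - X) ^ 2 - C G : K[X][X]) := by
  have hQ : 1 < p ^ k := Nat.one_lt_pow hk.ne' (Fact.out : p.Prime).one_lt
  have hQ0 : ((p ^ k : ℕ) : K) = 0 := by
    rw [Nat.cast_pow, CharP.cast_eq_zero, zero_pow hk.ne']
  have h2 : (2 : K) ≠ 0 := Ring.two_ne_zero (by rwa [ringChar.eq K p])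
  obtain ⟨W, hW, hfix⟩ := exists_fixed (K := K) p k hk
  have htop := shifted_f p k hp2 hk e b he G hG
  have hsq := not_square p k hp2 hk e b he hb1 hb2
  rw [← hG] at hsq
  have hA : ∀ a ∈ W, (X ^ p ^ k - X : K[X][X]).comp (X + C (C a)) = X ^ p ^ k - X := by
    intro a ha
    rw [sub_comp, pow_comp, X_comp, add_pow_char_pow, ← C_pow, ← C_pow, hfix a ha]
    ring
  generalize p ^ k = Q at *
  obtain ⟨hm, hd⟩ := monic_A (R := K[X]) hQ
  set f : K[X][X] := (X ^ Q - X) ^ 2 - C G with hf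
  have hfa : ∀ a ∈ W, f.comp (X + C (C a)) = f := by
    intro a ha
    rw [hf, sub_comp, pow_comp, hA a ha, C_comp]
  have hfdeg : f.natDegree = 2 * Q := by
    rw [hf, natDegree_sub_C, natDegree_pow, hd]
  have hfm : f.Monic := by
    have h1 : ((X ^ Q - X : K[X][X]) ^ 2).natDegree = 2 * Q := by rw [natDegree_pow, hd]
    refine (hm.pow 2).sub_of_left (degree_C_le.trans_lt ?_)
    rw [degree_eq_natDegree (hm.pow 2).ne_zero, h1]
    exact_mod_cast (by omega : 0 < 2 * Q)
  -- `z` is the nonzero root of the top part `t` of `f`; it is simple, so `lam` vanishes on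
  -- exactly one irreducible factor of `f`
  set z : K := (e * (1 - b))⁻¹ with hz
  have hb : 1 - b ≠ 0 := sub_ne_zero.2 hb1.symm
  have hz0 : z ≠ 0 := inv_ne_zero (mul_ne_zero he hb)
  have hez : e * (1 - b) * z = 1 := mul_inv_cancel₀ (mul_ne_zero he hb)
  set lam : K[X][X] → K := fun g => (shifted Q e 0 g).leadingCoeff.eval z with hlam
  have lam_mul : ∀ x y, lam (x * y) = lam x * lam y := fun x y => by simp [hlam]
  have lam_f : lam f = 0 := by
    simp only [hlam, htop]
    simp only [eval_add, eval_mul, eval_C, eval_pow, eval_X]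
    linear_combination (-2 * e ^ Q * z ^ Q) * hez
  have lam_simple : ∀ x y, f = x * y → lam x = 0 → lam y ≠ 0 := by
    intro x y hxy hx hy
    have h1 := htop
    rw [hxy, map_mul, leadingCoeff_mul] at h1
    have h3 := congrArg (fun r => eval z (derivative r)) h1
    simp only [hlam] at hx hy
    simp only [derivative_mul (f := leadingCoeff _), eval_add, eval_mul, hx, hy,
      derivative_add, derivative_C_mul_X_pow, eval_C, eval_pow, eval_X, Nat.cast_add, hQ0,
      Nat.cast_one, Nat.add_sub_cancel] at h3
    refine mul_ne_zero (mul_ne_zero (mul_ne_zero h2 (sub_ne_zero.2 hb1))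
      (pow_ne_zero (Q + 1) he)) (pow_ne_zero Q hz0) ?_
    linear_combination -h3
  have hfactor : ∀ x : K[X][X], x ≠ 0 → lam x = 0 → ∃ g, Irreducible g ∧ g ∣ x ∧ lam g = 0 := by
    intro x
    induction x using UniqueFactorizationMonoid.induction_on_prime with
    | h₁ => exact fun h => absurd rfl h
    | h₂ x hx =>
      intro _ h0
      obtain ⟨y, hy⟩ := hx.exists_right_inv
      have h1 := lam_mul x y
      rw [hy, h0, zero_mul] at h1
      simp [hlam] at h1
    | h₃ x r hx hr ih =>
      intro _ h0
      rw [lam_mul] at h0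
      rcases mul_eq_zero.1 h0 with h | h
      · exact ⟨r, hr.irreducible, dvd_mul_right _ _, h⟩
      · obtain ⟨g, hg, hgx, hl⟩ := ih hx h
        exact ⟨g, hg, hgx.mul_left _, hl⟩
  obtain ⟨g, hgirr, ⟨h, hgh⟩, hlg⟩ := hfactor f hfm.ne_zero lam_f
  have hg0 : g ≠ 0 := hgirr.ne_zero
  have hlh : lam h ≠ 0 := lam_simple g h hgh hlg
  have hlc : g.leadingCoeff * h.leadingCoeff = 1 := by
    rw [← leadingCoeff_mul, ← hgh, hfm.leadingCoeff]
  have hh0 : h ≠ 0 := by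
    rintro rfl
    simp at hlc
  have hdegs : g.natDegree + h.natDegree = 2 * Q := by
    rw [← natDegree_mul hg0 hh0, ← hgh, hfdeg]
  have hgd : g.natDegree ≠ 0 := by
    intro h0
    apply hgirr.not_isUnit
    rw [eq_C_of_natDegree_eq_zero h0, isUnit_C]
    refine IsUnit.of_mul_eq_one h.leadingCoeff ?_
    rwa [leadingCoeff, h0] at hlc
  -- a translate of `g` divides `f` and `lam` vanishes on it, so it is `g` itself
  have hinv : ∀ a ∈ W, g.comp (X + C (C a)) = g := by
    intro a ha
    have h1 : g ∣ g.comp (X + C (C a)) * h.comp (X + C (C a)) := by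
      rw [← mul_comp, ← hgh, hfa a ha]
      exact ⟨h, hgh⟩
    have h3 : g ∣ g.comp (X + C (C a)) := by
      refine (hgirr.prime.dvd_or_dvd h1).resolve_right ?_
      rintro ⟨r, hr⟩
      have h4 := lam_mul g r
      rw [← hr, hlg, zero_mul] at h4
      simp only [hlam, shifted_top] at h4
      exact hlh h4
    obtain ⟨r, hr⟩ := h3
    have hlc' : (g.comp (X + C (C a))).leadingCoeff = g.leadingCoeff := by
      rw [leadingCoeff_comp (by simp)]
      simp
    have hnd : (g.comp (X + C (C a))).natDegree = g.natDegree := by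
      rw [natDegree_comp]; simp
    have hr0 : r ≠ 0 := by
      rintro rfl
      rw [hr, mul_zero, leadingCoeff_zero] at hlc'
      exact hg0 (leadingCoeff_eq_zero.1 hlc'.symm)
    rw [hr, natDegree_mul hg0 hr0] at hnd
    rw [hr, leadingCoeff_mul] at hlc'
    have h5 : r.leadingCoeff = 1 :=
      mul_left_cancel₀ (leadingCoeff_ne_zero.2 hg0) (by rw [hlc', mul_one])
    have h6 : r = 1 := by
      rw [eq_C_of_natDegree_eq_zero (p := r) (by omega)]
      rw [leadingCoeff, (by omega : r.natDegree = 0)] at h5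
      rw [h5, C_1]
    rw [hr, h6, mul_one]
  obtain ⟨r, hgr, hrinv⟩ := exists_quot hQ W hW hfix hA g hinv
  obtain ⟨l, hrl, -⟩ := exists_quot hQ W hW hfix hA r hrinv
  generalize g.eval 0 = u at hgr
  generalize r.eval 0 = v at hrl
  by_cases hl : l = 0
  · -- here `g = v * (S ^ Q - S) + u`
    exfalso
    rw [hl, mul_zero, zero_add] at hrl
    have hv0 : v ≠ 0 := by
      rintro rfl
      rw [hgr, hrl] at hgd
      simp at hgd
    have hgd' : g.natDegree = Q := by
      rw [hgr, hrl, natDegree_add_C, natDegree_mul_C hv0, hd]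
    have hvlc : v = g.leadingCoeff := by
      have h1 : (X ^ Q - X : K[X][X]).coeff Q = 1 := by
        have := hm.coeff_natDegree
        rwa [hd] at this
      rw [leadingCoeff, hgd', hgr, hrl, coeff_add, coeff_mul_C, coeff_C_of_ne_zero (by omega), h1,
        one_mul, add_zero]
    have h1 : g ∣ C (u ^ 2 - v ^ 2 * G) := by
      have h3 : C (u ^ 2 - v ^ 2 * G) = C v ^ 2 * f - g * (g - 2 * C u) := by
        rw [hf, hgr, hrl]
        simp only [map_sub, map_mul, map_pow]
        ring
      rw [h3]
      exact dvd_sub (Dvd.dvd.mul_left ⟨h, hgh⟩ _) (dvd_mul_right _ _)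
    have h3 : u ^ 2 - v ^ 2 * G = 0 := by
      by_contra hne
      have := natDegree_le_of_dvd h1 (C_ne_zero.2 hne)
      rw [natDegree_C] at this
      omega
    refine hsq (u * h.leadingCoeff) ?_
    rw [← hvlc] at hlc
    linear_combination h.leadingCoeff ^ 2 * h3 + G * (v * h.leadingCoeff + 1) * hlc
  · have hgd' : 2 * Q ≤ g.natDegree := by
      have h1 : r.natDegree = Q + l.natDegree := by
        rw [hrl, natDegree_add_C, natDegree_mul hm.ne_zero hl, hd]
      have h3 : r ≠ 0 := by
        rintro rfl
        simp at h1
        omega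
      rw [hgr, natDegree_add_C, natDegree_mul hm.ne_zero h3, hd]
      omega
    have hhu : IsUnit h := by
      rw [eq_C_of_natDegree_eq_zero (p := h) (by omega), isUnit_C]
      refine IsUnit.of_mul_eq_one g.leadingCoeff ?_
      rw [← hlc, mul_comm]
      congr 1
      rw [leadingCoeff, (by omega : h.natDegree = 0)]
    rw [hgh]
    exact (irreducible_mul_isUnit hhu).2 hgirr

end


/-- For `q` odd, `β ∉ {1,−1}` and `η` a non-square of `F_{qⁿ}`, the bivariate polynomial
`−(S^{qˢ} − S)² + ηZ² + η^{qˢ}Z^{2qˢ} − 2βη^{(qˢ+1)/2}Z^{qˢ+1}` is absolutely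
irreducible, i.e. irreducible in `F̄[S,Z]`, realized as `F̄[Z][S]` (inner variable `Z`,
outer variable `S`). -/
theorem stmt_10 (p h q n s : ℕ) (hp : p.Prime) (hp2 : p ≠ 2) (hh : 0 < h)
    (hq : q = p ^ h) (hn : 0 < n) (hs : 0 < s)
    (F : Type*) [Field F] [Fintype F] (hF : Fintype.card F = q ^ n)
    (β η : F) (hβ1 : β ≠ 1) (hβ2 : β ≠ -1) (hη : ¬∃ c : F, c ^ 2 = η)
    (G : Polynomial (AlgebraicClosure F))
    (hG : G = Polynomial.C (algebraMap F (AlgebraicClosure F) η) * Polynomial.X ^ 2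
        + Polynomial.C (algebraMap F (AlgebraicClosure F) (η ^ q ^ s))
            * Polynomial.X ^ (2 * q ^ s)
        - Polynomial.C (algebraMap F (AlgebraicClosure F) (2 * β * η ^ ((q ^ s + 1) / 2)))
            * Polynomial.X ^ (q ^ s + 1)) :
    Irreducible
      (-((Polynomial.X : Polynomial (Polynomial (AlgebraicClosure F))) ^ q ^ s
          - Polynomial.X) ^ 2 + Polynomial.C G) := by
  have : Fact p.Prime := ⟨hp⟩
  have : CharP F p := by
    refine charP_of_card_eq_prime_pow (f := h * n) ?_
    rw [hF, hq, pow_mul]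
  have : CharP (AlgebraicClosure F) p := charP_of_injective_algebraMap' F p
  obtain ⟨e, he⟩ := IsAlgClosed.exists_pow_nat_eq (algebraMap F (AlgebraicClosure F) η) two_pos
  have hinj := (algebraMap F (AlgebraicClosure F)).injective
  have he0 : e ≠ 0 := by
    rintro rfl
    refine hη ⟨0, hinj ?_⟩
    rw [← he, map_pow, map_zero]
  have hQ : q ^ s = p ^ (h * s) := by rw [hq, pow_mul]
  have hodd : Even (q ^ s + 1) := by
    rw [hQ]
    exact ((hp.odd_of_ne_two hp2).pow).add_one
  rw [hQ] at hG hodd ⊢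
  have h1 := irreducible_aux p (h * s) hp2 (Nat.mul_pos hh hs) e
    (algebraMap F (AlgebraicClosure F) β) he0
    (fun h => hβ1 (hinj (by rw [h, map_one])))
    (fun h => hβ2 (hinj (by rw [h, map_neg, map_one]))) G (by
      rw [hG]
      simp only [map_mul (algebraMap F _), map_pow (algebraMap F _), ← he, ← pow_mul,
        Nat.two_mul_div_two_of_even hodd, map_ofNat (algebraMap F _)])
  have h2 : -(((Polynomial.X : Polynomial (Polynomial (AlgebraicClosure F))) ^ p ^ (h * s)
        - Polynomial.X) ^ 2 - Polynomial.C G)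
      = -(Polynomial.X ^ p ^ (h * s) - Polynomial.X) ^ 2 + Polynomial.C G := by ring
  rw [← h2]
  exact (Associated.neg_left (Associated.refl _)).symm.irreducible h1
end

section
/- Let q = 2^h be a power of 2, s a positive integer, and K any field of characteristic 2 with β ∈ K. In the polynomial ring K[S, Y], define H(S,Y) = Y² + S^{4(q^s−1)}·Y^{2q^s} + β²·S^{2(q^s−1)} + S^{q^s−1}·Y + S^{3(q^s−1)}·Y^{q^s} + β·S^{2(q^s−1)} + S^{2(q^s−1)}·Y + S^{2(q^s−1)}·Y^{q^s}, G(S,Y) = S^{2(q^s−1)}·Y^{q^s} + S^{q^s−1}·(1 + β + Tr_{q^s/2}(Y)) + Y, and G′(S,Y) = S^{2(q^s−1)}·Y^{q^s} + S^{q^s−1}·(β + Tr_{q^s/2}(Y)) + Y. Then H(S,Y) = G(S,Y)·G′(S,Y). -/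
/-! With `a = S ^ (q ^ s - 1)`, `Q = Y ^ q ^ s` and `T` the trace expression, one has
`G = G' + a`, so `G * G' = G' ^ 2 + a * G'`. In characteristic `2` the sum telescopes to
`T ^ 2 + T = Y + Q` (`trace_sq_add_self`), and expanding the square termwise gives `H`. -/

/-- The sum `T = ∑ Y ^ 2 ^ i` satisfies the Artin–Schreier relation: squaring shifts the
exponents by one, so `T ^ 2 + T` keeps only the two extreme terms. -/
theorem trace_sq_add_self {R : Type*} [CommRing R] (h2 : (2 : R) = 0) (y : R) (n : ℕ) :
    (∑ i ∈ Finset.range n, y ^ 2 ^ i) ^ 2 + ∑ i ∈ Finset.range n, y ^ 2 ^ i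
      = y + y ^ 2 ^ n := by
  induction n with
  | zero => simp only [Finset.sum_range_zero, pow_zero, pow_one]; linear_combination -y * h2
  | succ n ih =>
    rw [Finset.sum_range_succ, pow_succ 2 n, pow_mul]
    linear_combination ih + ((∑ i ∈ Finset.range n, y ^ 2 ^ i) * y ^ 2 ^ n + y ^ 2 ^ n) * h2


/-- For `q = 2ʰ` and any field `K` of characteristic `2` with `β ∈ K`, in `K[S,Y]`
(modelled as `MvPolynomial (Fin 2) K` with `S = X 0`, `Y = X 1`) the polynomial `H`
splits as `H = G ⬝ G′`, where `Tr_{qˢ/2}(Y) = ∑_{i<sh} Y^{2ⁱ}`. -/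
theorem stmt_12 (h q s : ℕ) (hh : 0 < h) (hq : q = 2 ^ h) (hs : 0 < s)
    (K : Type*) [Field K] [CharP K 2] (β : K)
    (S Y H G G' : MvPolynomial (Fin 2) K)
    (hS : S = MvPolynomial.X 0) (hY : Y = MvPolynomial.X 1)
    (hH : H = Y ^ 2 + S ^ (4 * (q ^ s - 1)) * Y ^ (2 * q ^ s)
        + MvPolynomial.C (β ^ 2) * S ^ (2 * (q ^ s - 1)) + S ^ (q ^ s - 1) * Y
        + S ^ (3 * (q ^ s - 1)) * Y ^ q ^ s + MvPolynomial.C β * S ^ (2 * (q ^ s - 1))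
        + S ^ (2 * (q ^ s - 1)) * Y + S ^ (2 * (q ^ s - 1)) * Y ^ q ^ s)
    (hG : G = S ^ (2 * (q ^ s - 1)) * Y ^ q ^ s
        + S ^ (q ^ s - 1) * (1 + MvPolynomial.C β + ∑ i ∈ Finset.range (s * h), Y ^ 2 ^ i)
        + Y)
    (hG' : G' = S ^ (2 * (q ^ s - 1)) * Y ^ q ^ s
        + S ^ (q ^ s - 1) * (MvPolynomial.C β + ∑ i ∈ Finset.range (s * h), Y ^ 2 ^ i)
        + Y) :
    H = G * G' := by
  have h2 : (2 : MvPolynomial (Fin 2) K) = 0 := CharTwo.two_eq_zero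
  have hT := trace_sq_add_self h2 Y (s * h)
  have hQ : q ^ s = 2 ^ (s * h) := by rw [hq, ← pow_mul, mul_comm]
  rw [← hQ] at hT
  rw [hH, hG, hG', mul_comm 4, mul_comm 3, mul_comm 2 (q ^ s - 1), mul_comm 2 (q ^ s),
    pow_mul, pow_mul, pow_mul, pow_mul, map_pow]
  generalize S ^ (q ^ s - 1) = a
  generalize Y ^ q ^ s = Q at *
  generalize ∑ i ∈ Finset.range (s * h), Y ^ 2 ^ i = T at *
  generalize MvPolynomial.C β = b
  -- The coefficient of `h2` collects the cross terms of `G' ^ 2`.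
  linear_combination -a ^ 2 * hT
    - (a ^ 2 * b * T + a ^ 2 * Q * a * (b + T) + a ^ 2 * Q * Y + a * (b + T) * Y) * h2
end

section
/- Let q = 2^h be a power of 2, n, s positive integers, β ∈ F_{q^n} with β ∉ {0, 1}, and ε ∈ F_{q^n} with Tr_{q^n/2}(ε) = 1, where Tr_{q^n/2}(ε) = Σ_{i=0}^{nh−1} ε^{2^i}. Then the polynomial F₂(X, Z) = X²·(Z² + Z + ε)^{q^s} + X·(β + Tr_{q^s/2}(Z² + Z + ε)) + (Z² + Z + ε) ∈ F_{q^n}[X, Z] is absolutely irreducible, i.e. irreducible as an element of F̄[X, Z]. -/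
/-!
Over the algebraic closure write `W = u (u + 1)` with `u = Z + z₀` linear. Put `Q = qˢ`. The trace
telescopes in characteristic two to `u ^ Q + u`, so the polynomial becomes
`u ^ Q (u + 1) ^ Q X² + (β + u + u ^ Q) X + u (u + 1)`. It is primitive because `β ≠ 0`, hence
only a factorization `(a X + b) (c X + d)` has to be excluded (`irreducible_quadratic`).

The middle coefficient equals `β ≠ 0` at the zeros of `u` and of `u + 1`, so neither of these primes
divides both `a d` and `b c`. If `u` divides `b`, then it divides neither `a` nor `d`, and the whole
of `u ^ Q` goes into `c`; likewise for `u + 1` and for the roles of the two factors exchanged.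
Two cases remain (`no_linear_factors_aux`):
* both primes divide `b`: then `a d` is constant and `b c` is divisible by `u ^ 2`, so the linear
  term `u` of the middle coefficient is not accounted for;
* `u` divides `b` and `u + 1` divides `d`: evaluating the middle coefficient at the two zeros
  gives `β = t⁻¹` and `β = t` for one constant `t`, so `β ^ 2 = 1` and `β = 1`.
-/

open Polynomial

/-- A quadratic over a domain is irreducible as soon as its coefficients have only unit common
divisors and it is not a product of two linear polynomials. -/
lemma irreducible_quadratic {R : Type*} [CommRing R] [IsDomain R] (A B D : R) (hA : A ≠ 0)
    (hprim : ∀ r, r ∣ A → r ∣ B → r ∣ D → IsUnit r)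
    (hlin : ∀ a b c d : R, a * c = A → b * d = D → a * d + b * c = B → False) :
    Irreducible (C A * X ^ 2 + C B * X + C D : R[X]) := by
  have hdeg : (C A * X ^ 2 + C B * X + C D : R[X]).natDegree = 2 := natDegree_quadratic hA
  have hne : (C A * X ^ 2 + C B * X + C D : R[X]) ≠ 0 := by
    intro h
    rw [h] at hdeg
    simp at hdeg
  have coeffs : ∀ r t w : R, (C r * X ^ 2 + C t * X + C w : R[X]).coeff 0 = w ∧
      (C r * X ^ 2 + C t * X + C w : R[X]).coeff 1 = t ∧
      (C r * X ^ 2 + C t * X + C w : R[X]).coeff 2 = r := by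
    intro r t w
    refine ⟨by simp, by simp [coeff_C], by simp⟩
  obtain ⟨hc0, hc1, hc2⟩ := coeffs A B D
  have hconst : ∀ f g : R[X], C A * X ^ 2 + C B * X + C D = f * g → f.natDegree = 0 →
      IsUnit f := by
    intro f g hfg hf
    rw [eq_C_of_natDegree_eq_zero hf] at hfg ⊢
    rw [hfg] at hc0 hc1 hc2
    rw [coeff_C_mul] at hc0 hc1 hc2
    exact isUnit_C.2 (hprim _ ⟨_, hc2.symm⟩ ⟨_, hc1.symm⟩ ⟨_, hc0.symm⟩)
  refine ⟨fun hu => ?_, fun f g hfg => ?_⟩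
  · have := natDegree_eq_zero_of_isUnit hu
    omega
  · have hf0 : f ≠ 0 := by
      rintro rfl
      exact hne (by rw [hfg, zero_mul])
    have hg0 : g ≠ 0 := by
      rintro rfl
      exact hne (by rw [hfg, mul_zero])
    have hsum : f.natDegree + g.natDegree = 2 := by
      rw [← natDegree_mul hf0 hg0, ← hfg, hdeg]
    by_cases hf : f.natDegree = 0
    · exact Or.inl (hconst f g hfg hf)
    by_cases hg : g.natDegree = 0
    · exact Or.inr (hconst g f (by rw [hfg, mul_comm]) hg)
    exfalso
    obtain ⟨a, b, rfl⟩ := exists_eq_X_add_C_of_natDegree_le_one (show f.natDegree ≤ 1 by omega)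
    obtain ⟨c, d, rfl⟩ := exists_eq_X_add_C_of_natDegree_le_one (show g.natDegree ≤ 1 by omega)
    have hexp : (C a * X + C b) * (C c * X + C d) =
        C (a * c) * X ^ 2 + C (a * d + b * c) * X + C (b * d) := by
      simp only [C_mul, C_add]
      ring
    rw [hfg, hexp] at hc0 hc1 hc2
    obtain ⟨h0, h1, h2⟩ := coeffs (a * c) (a * d + b * c) (b * d)
    exact hlin a b c d (h2.symm.trans hc2) (h0.symm.trans hc0) (h1.symm.trans hc1)

/-- In the quadratic `u ^ Q (u + 1) ^ Q X² + (β + u + u ^ Q) X + u (u + 1)`, no factorization into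
linear factors `(a X + b) (c X + d)` has `u ∣ b`. -/
lemma no_linear_factors_aux {K : Type*} [Field K] [CharP K 2] (z β : K) (hβ0 : β ≠ 0)
    (hβ1 : β ≠ 1) (Q : ℕ) (hQ : 2 ≤ Q) (u : K[X]) (hu : u = X + C z) (a b c d : K[X])
    (hac : a * c = u ^ Q * (u + 1) ^ Q) (hbd : b * d = u * (u + 1))
    (hmid : a * d + b * c = C β + u + u ^ Q) (hub : u ∣ b) : False := by
  have h2 : (2 : K) = 0 := CharTwo.two_eq_zero
  have hzz : z + z = 0 := CharTwo.add_self_eq_zero z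
  have hQ0 : Q ≠ 0 := by omega
  have hpu : Prime u := by
    have := prime_X_sub_C (-z)
    rwa [C_neg, sub_neg_eq_add, ← hu] at this
  have hpv : Prime (u + 1) := by
    have := prime_X_sub_C (-(z + 1))
    rwa [C_neg, sub_neg_eq_add, C_add, C_1, ← add_assoc, ← hu] at this
  have eu0 : u.eval z = 0 := by simp [hu, hzz]
  have eu1 : u.eval (z + 1) = 1 := by
    simp only [hu, eval_add, eval_X, eval_C]
    linear_combination hzz
  have e11 : (1 : K) + 1 = 0 := CharTwo.add_self_eq_zero 1
  have m0 : (a * d + b * c).eval z = β := by simp [hmid, eu0, hQ0]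
  have m1 : (a * d + b * c).eval (z + 1) = β := by
    simp only [hmid, eval_add, eval_C, eval_pow, eu1, one_pow]
    linear_combination e11
  have dvd0 : ∀ f : K[X], u ∣ f → f.eval z = 0 := by
    rintro f ⟨g, rfl⟩
    simp [eu0]
  have dvd1 : ∀ f : K[X], u + 1 ∣ f → f.eval (z + 1) = 0 := by
    rintro f ⟨g, rfl⟩
    simp [eu1, e11]
  have hua : ¬ u ∣ a := by
    intro h
    rw [eval_add, eval_mul, eval_mul, dvd0 a h, dvd0 b hub] at m0
    exact hβ0 (by rw [← m0]; ring)
  obtain ⟨c₁, rfl⟩ : u ^ Q ∣ c := hpu.pow_dvd_of_dvd_mul_left Q hua ⟨_, hac⟩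
  obtain ⟨b₁, rfl⟩ := hub
  have hac1 : a * c₁ = (u + 1) ^ Q :=
    mul_left_cancel₀ (pow_ne_zero Q hpu.ne_zero) (by linear_combination hac)
  have hbd1 : b₁ * d = u + 1 := mul_left_cancel₀ hpu.ne_zero (by linear_combination hbd)
  rcases hpv.dvd_or_dvd (Dvd.intro_left 1 (by rw [hbd1, one_mul]) : u + 1 ∣ b₁ * d) with hv | hv
  · have hva : ¬ u + 1 ∣ a := by
      intro h
      rw [eval_add, eval_mul, eval_mul, dvd1 a h, dvd1 _ (hv.mul_left u)] at m1
      exact hβ0 (by rw [← m1]; ring)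
    obtain ⟨c₂, rfl⟩ : (u + 1) ^ Q ∣ c₁ :=
      hpv.pow_dvd_of_dvd_mul_left Q hva ⟨1, by rw [hac1, mul_one]⟩
    obtain ⟨b₂, rfl⟩ := hv
    have hac2 : a * c₂ = 1 :=
      mul_left_cancel₀ (pow_ne_zero Q hpv.ne_zero) (by linear_combination hac1)
    have hbd2 : b₂ * d = 1 := mul_left_cancel₀ hpv.ne_zero (by linear_combination hbd1)
    have had : IsUnit (a * d) := IsUnit.of_mul_eq_one (c₂ * b₂) (by
      linear_combination b₂ * d * hac2 + hbd2)
    obtain ⟨t, -, ht⟩ := Polynomial.isUnit_iff.1 had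
    -- Both `b c` and `u ^ Q` vanish to order two at `z`, so only `u` has a derivative there.
    obtain ⟨k, rfl⟩ : ∃ k, Q = k + 2 := ⟨Q - 2, by omega⟩
    have key : C t + u ^ 2 * (u ^ (k + 1) * (u + 1) ^ (k + 3) * b₂ * c₂) =
        C β + u + u ^ 2 * u ^ k := by
      rw [ht]
      linear_combination hmid
    have hder := congrArg (fun f => (derivative f).eval z) key
    have hu' : derivative u = 1 := by simp [hu]
    simp only [derivative_add, derivative_mul (f := u ^ 2), derivative_C, derivative_pow, hu',
      eval_add, eval_mul, eval_pow, eu0] at hder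
    simp at hder
  · obtain ⟨d₁, rfl⟩ := hv
    have hvc : ¬ u + 1 ∣ c₁ := by
      intro h
      rw [eval_add, eval_mul, eval_mul, eval_mul, eval_mul, eval_mul, dvd1 c₁ h,
        dvd1 _ (dvd_refl _)] at m1
      exact hβ0 (by rw [← m1]; ring)
    obtain ⟨a₁, rfl⟩ : (u + 1) ^ Q ∣ a :=
      hpv.pow_dvd_of_dvd_mul_right Q hvc ⟨1, by rw [hac1, mul_one]⟩
    have hac2 : a₁ * c₁ = 1 :=
      mul_left_cancel₀ (pow_ne_zero Q hpv.ne_zero) (by linear_combination hac1)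
    have hbd2 : b₁ * d₁ = 1 := mul_left_cancel₀ hpv.ne_zero (by linear_combination hbd1)
    have hprod : (b₁ * c₁) * (a₁ * d₁) = 1 := by
      linear_combination b₁ * d₁ * hac2 + hbd2
    obtain ⟨t, -, ht⟩ := Polynomial.isUnit_iff.1 (IsUnit.of_mul_eq_one _ hprod)
    have e0 : (a₁ * d₁).eval z = β := by
      rw [← m0]
      simp [eu0, hQ0]
    have e1 : (b₁ * c₁).eval (z + 1) = β := by
      rw [← m1]
      simp [eu1, e11]
    rw [← ht, eval_C] at e1
    have e2 := congrArg (eval z) hprod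
    rw [eval_mul, e0, ← ht, eval_C, e1, eval_one] at e2
    -- `β * β = 1` forces `β = 1` in characteristic two.
    have : (β - 1) ^ 2 = 0 := by linear_combination e2 + (1 - β) * h2
    exact hβ1 (sub_eq_zero.1 (pow_eq_zero_iff (two_ne_zero)|>.1 this))

/-- The additive polynomial `∑ Y ^ 2 ^ i` telescopes on `Y = u * (u + 1)`. -/
lemma trace_telescope {R : Type*} [CommRing R] [CharP R 2] (u : R) (m : ℕ) :
    ∑ i ∈ Finset.range m, (u * (u + 1)) ^ 2 ^ i = u ^ 2 ^ m + u := by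
  have : Fact (Nat.Prime 2) := ⟨Nat.prime_two⟩
  induction m with
  | zero => simp [CharTwo.add_self_eq_zero]
  | succ m ih =>
    rw [Finset.sum_range_succ, ih, mul_add, mul_one, add_pow_char_pow (p := 2)]
    linear_combination u ^ 2 ^ m * (CharTwo.two_eq_zero : (2 : R) = 0)


/-- For `q = 2ʰ`, `β ∈ F_{qⁿ} \ {0,1}` and `ε ∈ F_{qⁿ}` with absolute trace `1`, the
polynomial `F₂(X,Z) = X²(Z²+Z+ε)^{qˢ} + X(β + Tr_{qˢ/2}(Z²+Z+ε)) + (Z²+Z+ε)` is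
absolutely irreducible, i.e. irreducible in `F̄[X,Z]`, realized as `F̄[Z][X]`
(inner variable `Z`, outer variable `X`). -/
theorem stmt_13 (h q n s : ℕ) (hh : 0 < h) (hq : q = 2 ^ h) (hn : 0 < n) (hs : 0 < s)
    (F : Type*) [Field F] [Fintype F] (hF : Fintype.card F = q ^ n)
    (β ε : F) (hβ0 : β ≠ 0) (hβ1 : β ≠ 1)
    (hε : ∑ i ∈ Finset.range (n * h), ε ^ 2 ^ i = 1)
    (W : Polynomial (AlgebraicClosure F))
    (hW : W = Polynomial.X ^ 2 + Polynomial.X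
        + Polynomial.C (algebraMap F (AlgebraicClosure F) ε)) :
    Irreducible
      ((Polynomial.C (W ^ q ^ s) * Polynomial.X ^ 2
        + Polynomial.C (Polynomial.C (algebraMap F (AlgebraicClosure F) β)
            + ∑ i ∈ Finset.range (s * h), W ^ 2 ^ i) * Polynomial.X
        + Polynomial.C W : Polynomial (Polynomial (AlgebraicClosure F)))) := by
  set K := AlgebraicClosure F with hK
  have : Fact (Nat.Prime 2) := ⟨Nat.prime_two⟩
  have hcF : CharP F 2 := charP_of_card_eq_prime_pow (f := h * n) (by rw [hF, hq, ← pow_mul])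
  have hcK : CharP K 2 := charP_of_injective_algebraMap (algebraMap F K).injective 2
  have hQ : q ^ s = 2 ^ (s * h) := by rw [hq, ← pow_mul, mul_comm]
  have hQ2 : 2 ≤ q ^ s := by
    rw [hQ]
    exact Nat.le_self_pow (Nat.mul_pos hs hh).ne' 2
  obtain ⟨z, hz⟩ : ∃ z : K, z ^ 2 + z = algebraMap F K ε := by
    have hd : (X ^ 2 + X - C (algebraMap F K ε) : K[X]).degree ≠ 0 := by
      have : (X ^ 2 + X - C (algebraMap F K ε) : K[X]).degree = 2 := by compute_degree!
      rw [this]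
      decide
    obtain ⟨z, hz⟩ := IsAlgClosed.exists_root _ hd
    refine ⟨z, ?_⟩
    simpa [sub_eq_zero] using hz
  set u : K[X] := X + C z with hu
  have hWu : W = u * (u + 1) := by
    rw [hW, ← hz, hu, C_add, C_pow]
    linear_combination -(X * C z) * (CharTwo.two_eq_zero : (2 : K[X]) = 0)
  have hβ0' : algebraMap F K β ≠ 0 := by simpa using hβ0
  have hβ1' : algebraMap F K β ≠ 1 := by simpa using hβ1
  have hu0 : u ≠ 0 := X_add_C_ne_zero z
  have hv0 : u + 1 ≠ 0 := by
    have := X_add_C_ne_zero (z + 1)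
    rwa [C_add, C_1, ← add_assoc] at this
  rw [hWu, trace_telescope, ← hQ]
  apply irreducible_quadratic
  · exact pow_ne_zero _ (mul_ne_zero hu0 hv0)
  · -- A common divisor divides `u (u + 1)`, hence the trace, hence the nonzero constant `β`.
    intro r _ hB hD
    have hT : r ∣ u ^ q ^ s + u := by
      rw [hQ, ← trace_telescope]
      exact Finset.dvd_sum fun i _ => dvd_pow hD (pow_ne_zero i two_ne_zero)
    exact isUnit_of_dvd_unit ((dvd_add_left hT).1 hB) (isUnit_C.2 hβ0'.isUnit)
  · intro a b c d hac hbd hmid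
    have hac' : a * c = u ^ q ^ s * (u + 1) ^ q ^ s := by rw [hac, mul_pow]
    have hpu : Prime u := by
      have := prime_X_sub_C (-z)
      rwa [C_neg, sub_neg_eq_add, ← hu] at this
    rcases hpu.dvd_or_dvd (Dvd.intro _ hbd.symm : u ∣ b * d) with h1 | h1
    · exact no_linear_factors_aux z _ hβ0' hβ1' _ hQ2 u hu a b c d hac' hbd
        (by linear_combination hmid) h1
    · exact no_linear_factors_aux z _ hβ0' hβ1' _ hQ2 u hu c d a b
        (by linear_combination hac') (by linear_combination hbd) (by linear_combination hmid) h1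
end
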